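/- Dichotomy in the weak comparison principle: Let Ω be a bounded domain in ℝ^N with N ≥ 2 and let H : Ω → ℝ be locally Lipschitz continuous. Let u : cl(Ω) → ℝ be lower semicontinuous on cl(Ω) and a viscosity supersolution of M(u) = NH in Ω, and let v : cl(Ω) → ℝ be upper semicontinuous on cl(Ω) and a viscosity subsolution of M(v) = NH in Ω. If u ≥ v on ∂Ω, then either u ≡ v in Ω or u > v everywhere in Ω. -/

import Mathlib

open Metric Set Filter Topology MeasureTheory

/-- The mean curvature operator `M(w) = div (Dw / sqrt (1 + |Dw|²))`,
computed as the sum of the partial derivatives of the components of the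
normalized gradient field. -/
noncomputable def mcOp {N : ℕ} (w : EuclideanSpace ℝ (Fin N) → ℝ)
    (x : EuclideanSpace ℝ (Fin N)) : ℝ :=
  ∑ i : Fin N,
    fderiv ℝ (fun y => (Real.sqrt (1 + ‖gradient w y‖ ^ 2))⁻¹ * gradient w y i) x
      (EuclideanSpace.single i 1)

/-- `f` is locally Lipschitz continuous on the set `s`. -/
def LocLipschitzOn {N : ℕ} (s : Set (EuclideanSpace ℝ (Fin N)))
    (f : EuclideanSpace ℝ (Fin N) → ℝ) : Prop :=
  ∀ x ∈ s, ∃ K : NNReal, ∃ t ∈ 𝓝[s] x, LipschitzOnWith K f t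

/-- `u` is a viscosity supersolution of `M(u) = N H` on the open set `U`. -/
def IsViscositySupersol {N : ℕ} (U : Set (EuclideanSpace ℝ (Fin N)))
    (H u : EuclideanSpace ℝ (Fin N) → ℝ) : Prop :=
  ∀ φ : EuclideanSpace ℝ (Fin N) → ℝ, ContDiffOn ℝ 2 φ U →
    ∀ x ∈ U, IsLocalMinOn (fun y => u y - φ y) U x → mcOp φ x ≤ N * H x

/-- `v` is a viscosity subsolution of `M(v) = N H` on the open set `U`. -/
def IsViscositySubsol {N : ℕ} (U : Set (EuclideanSpace ℝ (Fin N)))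
    (H v : EuclideanSpace ℝ (Fin N) → ℝ) : Prop :=
  ∀ φ : EuclideanSpace ℝ (Fin N) → ℝ, ContDiffOn ℝ 2 φ U →
    ∀ x ∈ U, IsLocalMaxOn (fun y => v y - φ y) U x → mcOp φ x ≥ N * H x

section LemmaA
variable {Z : Type*} [NormedAddCommGroup Z] [InnerProductSpace ℝ Z]

theorem lA_norm_bound (a : Z) (r α C : ℝ) (hr : 0 < r)
    (h : ∀ y : Z, ‖y‖ ≤ r → inner ℝ a y ≤ α + C * ‖y‖ ^ 2) (hα : 0 ≤ α + C * r ^ 2) :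
    ‖a‖ * r ≤ α + C * r ^ 2 := by
  by_cases ha : a = 0
  · simpa [ha] using hα
  have ha' : 0 < ‖a‖ := norm_pos_iff.mpr ha
  have hn : ‖(r / ‖a‖) • a‖ = r := by
    rw [norm_smul, Real.norm_of_nonneg (by positivity)]; field_simp
  have := h ((r / ‖a‖) • a) hn.le
  rw [hn, inner_smul_right, real_inner_self_eq_norm_sq] at this
  have e : r / ‖a‖ * ‖a‖ ^ 2 = ‖a‖ * r := by field_simp
  rw [e] at this; exact this

theorem lA_zero (a : Z) (r C : ℝ) (hr : 0 < r) (hC : 0 ≤ C)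
    (h : ∀ y : Z, ‖y‖ ≤ r → inner ℝ a y ≤ C * ‖y‖ ^ 2) : a = 0 := by
  by_contra ha
  have ha' : 0 < ‖a‖ := norm_pos_iff.mpr ha
  have key : ∀ s, 0 < s → s ≤ r → ‖a‖ ≤ C * s := by
    intro s hs hsr
    have := lA_norm_bound a s 0 C hs (fun y hy => by simpa using h y (hy.trans hsr)) (by positivity)
    have h2 : ‖a‖ * s ≤ (C * s) * s := by nlinarith
    exact le_of_mul_le_mul_right h2 hs
  have h1 := key (min r (‖a‖ / (2 * (C + 1)))) (lt_min hr (by positivity)) (min_le_left _ _)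
  have h2 : C * min r (‖a‖ / (2 * (C + 1))) ≤ C * (‖a‖ / (2 * (C + 1))) :=
    mul_le_mul_of_nonneg_left (min_le_right _ _) hC
  have h3 : C * (‖a‖ / (2 * (C + 1))) ≤ ‖a‖ / 2 := by
    rw [mul_div_assoc', div_le_div_iff₀ (by positivity) (by norm_num)]; nlinarith
  linarith

/-- telescoping -/
theorem lA_tel (f : ℝ → ℝ) (a b : ℝ)
    (h : ∀ t ∈ Icc (0:ℝ) 1, ∀ s ∈ Icc (0:ℝ) 1, f s - f t ≤ a * |s - t| + b * (s - t) ^ 2) :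
    |f 1 - f 0| ≤ a := by
  have key : ∀ n : ℕ, |f 1 - f 0| ≤ a + b / (n + 1 : ℝ) := by
    intro n
    have hn : (0:ℝ) < n + 1 := by positivity
    have st : ∀ i ∈ Finset.range (n + 1),
        |f ((i + 1 : ℕ) / (n + 1 : ℝ)) - f ((i : ℕ) / (n + 1 : ℝ))|
          ≤ a / (n + 1 : ℝ) + b / (n + 1 : ℝ) ^ 2 := by
      intro i hi
      have hi' : (i : ℝ) + 1 ≤ n + 1 := by
        have := Finset.mem_range.mp hi
        exact_mod_cast this
      have m1 : ((i : ℕ) / (n + 1 : ℝ)) ∈ Icc (0:ℝ) 1 :=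
        ⟨by positivity, by rw [div_le_one hn]; linarith⟩
      have m2 : ((i + 1 : ℕ) / (n + 1 : ℝ)) ∈ Icc (0:ℝ) 1 :=
        ⟨by positivity, by rw [div_le_one hn]; push_cast; linarith⟩
      have d : ((i + 1 : ℕ) / (n + 1 : ℝ)) - ((i : ℕ) / (n + 1 : ℝ)) = 1 / (n + 1) := by
        push_cast; field_simp; ring
      have d' : ((i : ℕ) / (n + 1 : ℝ)) - ((i + 1 : ℕ) / (n + 1 : ℝ)) = - (1 / (n + 1)) := by
        linarith
      have e1 := h _ m1 _ m2
      have e2 := h _ m2 _ m1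
      rw [d] at e1; rw [d'] at e2
      rw [abs_of_pos (by positivity)] at e1
      rw [abs_neg, abs_of_pos (by positivity)] at e2
      have r1 : a * (1 / (n + 1 : ℝ)) + b * (1 / (n + 1 : ℝ)) ^ 2
        = a / (n + 1 : ℝ) + b / (n + 1 : ℝ) ^ 2 := by field_simp
      rw [abs_le]
      constructor
      · rw [neg_sq, r1] at e2; linarith
      · rw [r1] at e1; linarith
    have tel := Finset.sum_range_sub (fun i : ℕ => f (i / (n + 1 : ℝ))) (n + 1)
    have e1 : (((n + 1 : ℕ) : ℝ) / (n + 1 : ℝ)) = 1 := by push_cast; field_simp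
    simp only [e1, Nat.cast_zero, zero_div] at tel
    rw [← tel]
    refine (Finset.abs_sum_le_sum_abs _ _).trans ((Finset.sum_le_sum st).trans ?_)
    rw [Finset.sum_const, Finset.card_range, nsmul_eq_mul]
    push_cast
    apply le_of_eq
    field_simp
  have lim : Tendsto (fun n : ℕ => a + b / (n + 1 : ℝ)) atTop (𝓝 (a + 0)) := by
    apply Tendsto.const_add
    have := (tendsto_one_div_add_atTop_nhds_zero_nat (𝕜 := ℝ)).const_mul b
    simpa [div_eq_mul_inv] using this
  have := ge_of_tendsto' lim key
  simpa using this

theorem lA_key {G : Z → ℝ} {C ρ : ℝ} {zh : Z} {k p z pz : Z} {r : ℝ} (hC : 0 < C) (hr : 0 < r)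
    (hsub : ∀ y ∈ closedBall zh ρ, G k + inner ℝ p (y - k) ≤ G y)
    (hsup : ∀ h, G (k + h) ≤ G k + inner ℝ p h + C * ‖h‖ ^ 2)
    (hz : ∀ h, G (z + h) ≤ G z + inner ℝ pz h + C * ‖h‖ ^ 2)
    (hb : ‖z - zh‖ + r ≤ ρ) : ‖p - pz‖ * r ≤ C * ‖z - k‖ ^ 2 + C * r ^ 2 := by
  apply lA_norm_bound _ _ _ _ hr _ (by positivity)
  intro y hy
  have h1 := hsub (z + y) (by
    rw [mem_closedBall, dist_eq_norm]
    calc ‖z + y - zh‖ = ‖(z - zh) + y‖ := by congr 1; abel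
      _ ≤ ‖z - zh‖ + ‖y‖ := norm_add_le _ _
      _ ≤ ρ := by linarith)
  have h2 := hz y
  have h3 := hsup (z - k)
  rw [add_sub_cancel] at h3
  have e1 : z + y - k = (z - k) + y := by abel
  rw [e1, inner_add_right] at h1
  rw [inner_sub_left]
  linarith

theorem lA_taylor {G : Z → ℝ} {C : ℝ} {z0 p0 : Z} {A : Z →L[ℝ] Z}
    (hsc : ∀ z, ∃ p, ∀ h, G (z + h) ≤ G z + inner ℝ p h + C * ‖h‖ ^ 2)
    (hp : ∀ ω > 0, ∃ δ > 0, ∀ z, ‖z - z0‖ < δ → ∀ p,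
      (∀ h, G (z + h) ≤ G z + inner ℝ p h + C * ‖h‖ ^ 2) →
      ‖p - p0 - A (z - z0)‖ ≤ ω * ‖z - z0‖) :
    ∀ ω > 0, ∀ᶠ h in 𝓝 (0 : Z),
      |G (z0 + h) - G z0 - inner ℝ p0 h - 1 / 2 * inner ℝ (A h) h| ≤ ω * ‖h‖ ^ 2 := by
  intro ω hω
  obtain ⟨δ, hδ, H⟩ := hp ω hω
  filter_upwards [Metric.ball_mem_nhds (0:Z) hδ] with h hh
  rw [mem_ball_zero_iff] at hh
  have := lA_tel (fun t => G (z0 + t • h) - t * inner ℝ p0 h - 1 / 2 * t ^ 2 * inner ℝ (A h) h)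
    (ω * ‖h‖ ^ 2) (C * ‖h‖ ^ 2 - 1 / 2 * inner ℝ (A h) h) (by
      intro t ht s hs
      obtain ⟨p, hpp⟩ := hsc (z0 + t • h)
      have e := hpp ((s - t) • h)
      have e0 : z0 + t • h + (s - t) • h = z0 + s • h := by rw [sub_smul]; abel
      rw [e0, inner_smul_right, norm_smul, mul_pow, Real.norm_eq_abs, sq_abs] at e
      have ht1 : ‖t • h‖ ≤ ‖h‖ := by
        rw [norm_smul, Real.norm_of_nonneg ht.1]
        nlinarith [norm_nonneg h, ht.2]
      have b := H (z0 + t • h) (by rw [add_sub_cancel_left]; exact ht1.trans_lt hh) p hpp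
      rw [add_sub_cancel_left] at b
      have c : (s - t) * inner ℝ (p - p0 - A (t • h)) h ≤ ω * ‖h‖ ^ 2 * |s - t| := by
        calc (s - t) * inner ℝ (p - p0 - A (t • h)) h
            ≤ |(s - t) * inner ℝ (p - p0 - A (t • h)) h| := le_abs_self _
          _ = |s - t| * |inner ℝ (p - p0 - A (t • h)) h| := abs_mul _ _
          _ ≤ |s - t| * (‖p - p0 - A (t • h)‖ * ‖h‖) := by
              gcongr; exact abs_real_inner_le_norm _ _
          _ ≤ |s - t| * ((ω * ‖h‖) * ‖h‖) := by
              gcongr; exact b.trans (by gcongr)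
          _ = _ := by ring
      rw [inner_sub_left, inner_sub_left, map_smul, inner_smul_left] at c
      simp only [conj_trivial] at c
      nlinarith)
  simp only [one_smul, zero_smul, add_zero] at this
  convert this using 2
  ring

theorem lemmaA [FiniteDimensional ℝ Z] {G : Z → ℝ} {C ρ m0 δ : ℝ} {zh : Z}
    (hG : Continuous G) (hC : 0 < C)
    (hsc : ∀ z, ∃ p, ∀ h, G (z + h) ≤ G z + inner ℝ p h + C * ‖h‖ ^ 2)
    (hρ : 0 < ρ) (hm0 : 0 < m0) (hδ : 0 < δ)
    (hmin : ∀ z, ρ / 2 ≤ ‖z - zh‖ → ‖z - zh‖ ≤ ρ → G zh + m0 ≤ G z) :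
    ∃ z p : Z, ∃ A : Z →L[ℝ] Z, ‖z - zh‖ < ρ ∧ ‖p‖ < δ ∧
      (∀ᶠ h in 𝓝 (0:Z), G z + inner ℝ p h ≤ G (z + h)) ∧
      (∀ ω > 0, ∀ᶠ h in 𝓝 (0 : Z),
        |G (z + h) - G z - inner ℝ p h - 1 / 2 * inner ℝ (A h) h| ≤ ω * ‖h‖ ^ 2) := by
  classical
  borelize Z
  set δ' := min δ (m0 / (2 * ρ)) with hδ'
  have hδ'0 : 0 < δ' := lt_min hδ (by positivity)
  have hδ'ρ : δ' * ρ < m0 := by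
    have : δ' * ρ ≤ m0 / (2 * ρ) * ρ := by gcongr; exact min_le_right _ _
    have e : m0 / (2 * ρ) * ρ = m0 / 2 := by field_simp
    linarith
  set K : Set Z := {z | ‖z - zh‖ < ρ / 2 ∧ ∃ p, ‖p‖ < δ' ∧
    ∀ y ∈ closedBall zh ρ, G z + inner ℝ p (y - z) ≤ G y} with hK
  have hKp : ∀ z : Z, ∃ p, z ∈ K → ‖p‖ < δ' ∧
    ∀ y ∈ closedBall zh ρ, G z + inner ℝ p (y - z) ≤ G y := by
    intro z
    by_cases hz : z ∈ K
    · obtain ⟨p, hp⟩ := hz.2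
      exact ⟨p, fun _ => hp⟩
    · exact ⟨0, fun h => absurd h hz⟩
  choose g hg using hKp
  -- uniqueness
  have hsame : ∀ z ∈ K, ∀ p, (∀ y ∈ closedBall zh ρ, G z + inner ℝ p (y - z) ≤ G y) →
      ∀ q, (∀ h, G (z + h) ≤ G z + inner ℝ q h + C * ‖h‖ ^ 2) → p = q := by
    intro z hz p hp q hq
    have : p - q = 0 := by
      apply lA_zero _ (ρ / 2) C (by positivity) hC.le
      intro y hy
      have h1 := hp (z + y) (by
        rw [mem_closedBall, dist_eq_norm]
        calc ‖z + y - zh‖ = ‖(z - zh) + y‖ := by congr 1; abel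
          _ ≤ ‖z - zh‖ + ‖y‖ := norm_add_le _ _
          _ ≤ ρ := by linarith [hz.1])
      have h2 := hq y
      rw [add_sub_cancel_left] at h1
      rw [inner_sub_left]; linarith
    exact sub_eq_zero.mp this
  have hsup : ∀ z ∈ K, ∀ h, G (z + h) ≤ G z + inner ℝ (g z) h + C * ‖h‖ ^ 2 := by
    intro z hz
    obtain ⟨q, hq⟩ := hsc z
    rw [hsame z hz (g z) (hg z hz).2 q hq]
    exact hq
  -- surjectivity
  have hsurj : ball (0:Z) δ' ⊆ g '' K := by
    intro p hp
    rw [mem_ball_zero_iff] at hp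
    have hc : IsCompact (closedBall zh ρ) := isCompact_closedBall _ _
    obtain ⟨z, hz, hzm⟩ := hc.exists_isMinOn ⟨zh, mem_closedBall_self hρ.le⟩
      (f := fun y => G y - inner ℝ p y) (by fun_prop)
    have hzρ : ‖z - zh‖ ≤ ρ := by rwa [mem_closedBall, dist_eq_norm] at hz
    have hlt : ‖z - zh‖ < ρ / 2 := by
      by_contra hcon
      push Not at hcon
      have h1 := hmin z hcon hzρ
      have h2 : G z - inner ℝ p z ≤ G zh - inner ℝ p zh := hzm (mem_closedBall_self hρ.le)
      have h3 : inner ℝ p (z - zh) ≤ δ' * ρ := by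
        refine (real_inner_le_norm _ _).trans ?_
        gcongr
      rw [inner_sub_right] at h3
      linarith
    have hsubz : ∀ y ∈ closedBall zh ρ, G z + inner ℝ p (y - z) ≤ G y := by
      intro y hy
      have : G z - inner ℝ p z ≤ G y - inner ℝ p y := hzm hy
      rw [inner_sub_right]; linarith
    have hzK : z ∈ K := ⟨hlt, p, hp, hsubz⟩
    refine ⟨z, hzK, ?_⟩
    obtain ⟨q, hq⟩ := hsc z
    rw [hsame z hzK _ (hg z hzK).2 q hq, hsame z hzK p hsubz q hq]
  -- Lipschitz
  have hlip : LipschitzOnWith (Real.toNNReal (5 / 2 * C)) g K := by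
    apply LipschitzOnWith.of_dist_le_mul
    intro k1 h1 k2 h2
    rw [Real.coe_toNNReal _ (by positivity), dist_eq_norm, dist_eq_norm]
    by_cases hd : k1 = k2
    · simp [hd]
    have hd' : 0 < ‖k1 - k2‖ := norm_pos_iff.mpr (sub_ne_zero.mpr hd)
    have hdl : ‖k1 - k2‖ < ρ := by
      calc ‖k1 - k2‖ = ‖(k1 - zh) - (k2 - zh)‖ := by congr 1; abel
        _ ≤ ‖k1 - zh‖ + ‖k2 - zh‖ := norm_sub_le _ _
        _ < ρ := by linarith [h1.1, h2.1]
    have := lA_key (r := ‖k1 - k2‖ / 2) hC (by positivity) (hg k1 h1).2 (hsup k1 h1) (hsup k2 h2)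
      (by linarith [h2.1])
    rw [norm_sub_rev k2 k1] at this
    nlinarith
  set d : ℝ := ((Module.finrank ℝ Z : ℕ) : ℝ) with hd
  set μ : Measure Z := Measure.hausdorffMeasure d with hμ
  have : μ.IsAddHaarMeasure := MeasureTheory.isAddHaarMeasure_hausdorffMeasure
  have hμK : μ K ≠ 0 := by
    intro h0
    have h1 := hlip.hausdorffMeasure_image_le (d := d) (by positivity)
    rw [← hμ, h0, mul_zero] at h1
    have h2 : μ (ball (0:Z) δ') ≤ 0 := (measure_mono hsurj).trans h1
    exact absurd h2 (not_le.mpr (measure_ball_pos μ _ hδ'0))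
  have hrad := ae_restrict_of_ae (s := K) (hlip.ae_differentiableWithinAt_of_mem (μ := μ))
  have hden : ∀ᵐ x ∂μ.restrict K, ∀ n : ℕ, ∀ᶠ w in 𝓝[≠] x,
      (K ∩ closedBall w (1 / (n + 1 : ℝ) * ‖w - x‖)).Nonempty := by
    rw [ae_all_iff]
    intro n
    filter_upwards [IsUnifLocDoublingMeasure.ae_tendsto_measure_inter_div μ K (n + 1)] with x hx
    have := hx (l := 𝓝[≠] x) (fun w => w) (fun w => 1 / (n + 1 : ℝ) * ‖w - x‖) (by
        rw [tendsto_nhdsWithin_iff]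
        constructor
        · have : Continuous (fun w : Z => 1 / (n + 1 : ℝ) * ‖w - x‖) := by fun_prop
          have := this.tendsto x
          simp only [sub_self, norm_zero, mul_zero] at this
          exact this.mono_left nhdsWithin_le_nhds
        · filter_upwards [self_mem_nhdsWithin] with w hw
          have : 0 < ‖w - x‖ := norm_pos_iff.mpr (sub_ne_zero.mpr hw)
          exact mem_Ioi.mpr (by positivity)) (by
        filter_upwards with w
        rw [mem_closedBall, dist_eq_norm, norm_sub_rev]
        apply le_of_eq
        field_simp)
    filter_upwards [this.eventually_ne one_ne_zero] with w hw
    by_contra hne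
    rw [Set.not_nonempty_iff_eq_empty] at hne
    rw [hne] at hw; simp at hw
  obtain ⟨z0, hz0K, hdiff, hdens⟩ := Measure.exists_mem_of_measure_ne_zero_of_ae hμK (hrad.and hden)
  obtain ⟨A, hA⟩ := hdiff hz0K
  refine ⟨z0, g z0, A, by linarith [hz0K.1], (hg z0 hz0K).1.trans_le (min_le_left _ _), ?_, ?_⟩
  · have : ∀ᶠ h in 𝓝 (0:Z), ‖h‖ < ρ / 2 := by
      filter_upwards [ball_mem_nhds (0:Z) (show 0 < ρ / 2 by positivity)] with h hh
      rwa [mem_ball_zero_iff] at hh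
    filter_upwards [this] with h hh
    have := (hg z0 hz0K).2 (z0 + h) (by
        rw [mem_closedBall, dist_eq_norm]
        calc ‖z0 + h - zh‖ = ‖(z0 - zh) + h‖ := by congr 1; abel
          _ ≤ ‖z0 - zh‖ + ‖h‖ := norm_add_le _ _
          _ ≤ ρ := by linarith [hz0K.1])
    rwa [add_sub_cancel_left] at this
  · apply lA_taylor hsc
    intro ω hω
    -- choose θ
    obtain ⟨n, hn⟩ := exists_nat_gt ((2 * C + 1 + ‖A‖) / (ω / 2))
    set θ : ℝ := 1 / (n + 1 : ℝ) with hθ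
    have hθ0 : 0 < θ := by positivity
    have hθ1 : θ ≤ 1 := by
      rw [hθ, div_le_one (by positivity)]; linarith [(Nat.cast_nonneg n : (0:ℝ) ≤ n)]
    have hθω : (2 * C + 1 + ‖A‖) * θ ≤ ω / 2 := by
      rw [div_lt_iff₀ (by positivity)] at hn
      rw [hθ, mul_one_div, div_le_iff₀ (by positivity)]
      nlinarith
    have hA' := hA.isLittleO
    rw [Asymptotics.isLittleO_iff] at hA'
    have hA2 := hA' (c := ω / 4) (by positivity)
    rw [eventually_nhdsWithin_iff] at hA2
    obtain ⟨r1, hr1, H1⟩ := Metric.eventually_nhds_iff.mp hA2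
    have hd2 := hdens n
    rw [eventually_nhdsWithin_iff] at hd2
    obtain ⟨r2, hr2, H2⟩ := Metric.eventually_nhds_iff.mp hd2
    refine ⟨min (min (r1 / 2) r2) (ρ / 4), by positivity, ?_⟩
    intro z hz p hp
    have hzr1 : ‖z - z0‖ < r1 / 2 := hz.trans_le ((min_le_left _ _).trans (min_le_left _ _))
    have hzr2 : ‖z - z0‖ < r2 := hz.trans_le ((min_le_left _ _).trans (min_le_right _ _))
    have hzρ : ‖z - z0‖ < ρ / 4 := hz.trans_le (min_le_right _ _)
    by_cases hzz : z = z0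
    · subst hzz
      have := hsame z hz0K (g z) (hg z hz0K).2 p hp
      simp [this]
    have hpos : 0 < ‖z - z0‖ := norm_pos_iff.mpr (sub_ne_zero.mpr hzz)
    obtain ⟨k, hkK, hk⟩ := H2 (by rwa [dist_eq_norm]) hzz
    rw [mem_closedBall, dist_eq_norm, ← hθ] at hk
    have b1 := lA_key (r := θ * ‖z - z0‖) hC (by positivity) (hg k hkK).2 (hsup k hkK) hp (by
      have : ‖z - zh‖ ≤ ‖z - z0‖ + ‖z0 - zh‖ := by
        calc ‖z - zh‖ = ‖(z - z0) + (z0 - zh)‖ := by congr 1; abel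
          _ ≤ _ := norm_add_le _ _
      have : θ * ‖z - z0‖ ≤ 1 * ‖z - z0‖ := by gcongr
      linarith [hz0K.1])
    have b1' : ‖g k - p‖ ≤ 2 * C * θ * ‖z - z0‖ := by
      rw [norm_sub_rev] at hk
      have : ‖z - k‖ ^ 2 ≤ (θ * ‖z - z0‖) ^ 2 := by gcongr
      have h5 : ‖g k - p‖ * (θ * ‖z - z0‖) ≤ (2 * C * θ * ‖z - z0‖) * (θ * ‖z - z0‖) := by
        nlinarith
      exact le_of_mul_le_mul_right h5 (by positivity)
    have hkz0 : ‖k - z0‖ ≤ 2 * ‖z - z0‖ := by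
      calc ‖k - z0‖ = ‖(k - z) + (z - z0)‖ := by congr 1; abel
        _ ≤ ‖k - z‖ + ‖z - z0‖ := norm_add_le _ _
        _ ≤ θ * ‖z - z0‖ + ‖z - z0‖ := by gcongr
        _ ≤ _ := by nlinarith
    have b2 := H1 (y := k) (by rw [dist_eq_norm]; linarith) hkK
    have b3 : ‖A (k - z)‖ ≤ ‖A‖ * (θ * ‖z - z0‖) :=
      (A.le_opNorm _).trans (by gcongr)
    have e : p - g z0 - A (z - z0) = -(g k - p) + (g k - g z0 - A (k - z0)) + A (k - z) := by
      simp only [map_sub]; abel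
    rw [e]
    calc ‖-(g k - p) + (g k - g z0 - A (k - z0)) + A (k - z)‖
        ≤ ‖g k - p‖ + ‖g k - g z0 - A (k - z0)‖ + ‖A (k - z)‖ := by
          refine (norm_add_le _ _).trans ?_
          gcongr
          refine (norm_add_le _ _).trans ?_
          rw [norm_neg]
      _ ≤ 2 * C * θ * ‖z - z0‖ + ω / 4 * (2 * ‖z - z0‖) + ‖A‖ * (θ * ‖z - z0‖) := by
          gcongr
          exact b2.trans (by gcongr)
      _ ≤ ω * ‖z - z0‖ := by nlinarith [mul_le_mul_of_nonneg_right hθω hpos.le]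

end LemmaA

section TS
variable {W : Type*} [NormedAddCommGroup W] [InnerProductSpace ℝ W]

/-- pair -/
noncomputable def mkZ (X Y : W) : WithLp 2 (W × W) := WithLp.toLp 2 (X, Y)

theorem mkZ_inner (X Y X' Y' : W) :
    inner ℝ (mkZ X Y) (mkZ X' Y') = inner ℝ X X' + inner ℝ Y Y' := by
  simp [mkZ, WithLp.prod_inner_apply]

theorem mkZ_norm_sq (X Y : W) : ‖mkZ X Y‖ ^ 2 = ‖X‖ ^ 2 + ‖Y‖ ^ 2 := by
  simp [mkZ, WithLp.prod_norm_sq_eq_of_L2]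

theorem mkZ_eta (z : WithLp 2 (W × W)) : mkZ z.fst z.snd = z := rfl

theorem mkZ_add (X Y X' Y' : W) : mkZ X Y + mkZ X' Y' = mkZ (X + X') (Y + Y') := rfl
theorem mkZ_sub (X Y X' Y' : W) : mkZ X Y - mkZ X' Y' = mkZ (X - X') (Y - Y') := rfl
theorem mkZ_smul (t : ℝ) (X Y : W) : t • mkZ X Y = mkZ (t • X) (t • Y) := rfl

noncomputable def i1 : W →L[ℝ] WithLp 2 (W × W) :=
  (WithLp.prodContinuousLinearEquiv 2 ℝ W W).symm.toContinuousLinearMap.comp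
    (ContinuousLinearMap.inl ℝ W W)
noncomputable def i2 : W →L[ℝ] WithLp 2 (W × W) :=
  (WithLp.prodContinuousLinearEquiv 2 ℝ W W).symm.toContinuousLinearMap.comp
    (ContinuousLinearMap.inr ℝ W W)
noncomputable def p1 : WithLp 2 (W × W) →L[ℝ] W :=
  (ContinuousLinearMap.fst ℝ W W).comp
    (WithLp.prodContinuousLinearEquiv 2 ℝ W W).toContinuousLinearMap
noncomputable def p2 : WithLp 2 (W × W) →L[ℝ] W :=
  (ContinuousLinearMap.snd ℝ W W).comp
    (WithLp.prodContinuousLinearEquiv 2 ℝ W W).toContinuousLinearMap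

theorem i1_apply (X : W) : i1 X = mkZ X 0 := rfl
theorem i2_apply (X : W) : i2 X = mkZ 0 X := rfl
theorem p1_apply (z : WithLp 2 (W × W)) : p1 z = z.fst := rfl
theorem p2_apply (z : WithLp 2 (W × W)) : p2 z = z.snd := rfl
theorem p1_mkZ (X Y : W) : p1 (mkZ X Y) = X := rfl
theorem p2_mkZ (X Y : W) : p2 (mkZ X Y) = Y := rfl

theorem norm_p1_le (z : WithLp 2 (W × W)) : ‖p1 z‖ ≤ ‖z‖ := by
  have := mkZ_norm_sq (p1 z) (p2 z)
  rw [p1_apply, p2_apply, mkZ_eta] at this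
  rw [p1_apply]
  nlinarith [norm_nonneg z, norm_nonneg z.fst, sq_nonneg ‖z.snd‖]
theorem norm_p2_le (z : WithLp 2 (W × W)) : ‖p2 z‖ ≤ ‖z‖ := by
  have := mkZ_norm_sq (p1 z) (p2 z)
  rw [p1_apply, p2_apply, mkZ_eta] at this
  rw [p2_apply]
  nlinarith [norm_nonneg z, norm_nonneg z.snd, sq_nonneg ‖z.fst‖]

/-- set superjet -/
def SetJet (F : Set W) (X P : W) (S : W →L[ℝ] W) : Prop :=
  ∀ η > 0, ∀ᶠ Y in 𝓝 X, Y ∈ F → inner ℝ P (Y - X) + inner ℝ (S (Y - X)) (Y - X) ≤ η * ‖Y - X‖ ^ 2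

theorem eventually_smul_nhds {Z : Type*} [NormedAddCommGroup Z] [NormedSpace ℝ Z] (h : Z)
    {Q : Z → Prop} (hQ : ∀ᶠ k in 𝓝 (0:Z), Q k) : ∃ t : ℝ, 0 < t ∧ Q (t • h) := by
  have c : Tendsto (fun t : ℝ => t • h) (𝓝[>] 0) (𝓝 0) := by
    have : Continuous (fun t : ℝ => t • h) := by fun_prop
    have := this.tendsto 0
    rw [zero_smul] at this
    exact this.mono_left nhdsWithin_le_nhds
  obtain ⟨t, ht, h2⟩ := ((c.eventually hQ).and self_mem_nhdsWithin).exists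
  exact ⟨t, h2, ht⟩

variable [FiniteDimensional ℝ W]

theorem ts_scalar {e ρ M lam D n Bw Bz : ℝ} (he : 0 < e) (hρ : 0 < ρ) (hlam0 : 0 < lam)
    (hlam1 : lam * (2 * e) ≤ 1) (hlam2 : lam * M ^ 2 ≤ e * ρ ^ 2 / 64) (hD0 : 0 ≤ D)
    (htri : ρ / 2 - D ≤ n) (hwB : e / 2 * n ^ 2 ≤ Bw) (hBz : Bw - M * D ≤ Bz) :
    e * ρ ^ 2 / 64 ≤ D ^ 2 / (2 * lam) + Bz := by
  by_cases hcase : D ≤ ρ / 4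
  · have h1 : ρ / 4 ≤ n := by linarith
    have h2 : (ρ / 4) ^ 2 ≤ n ^ 2 := by gcongr
    have h3 : M * D - lam * M ^ 2 / 2 ≤ D ^ 2 / (2 * lam) := by
      rw [le_div_iff₀ (by positivity)]
      nlinarith [sq_nonneg (D - lam * M)]
    have h4 : e / 2 * (ρ / 4) ^ 2 ≤ e / 2 * n ^ 2 := by gcongr
    nlinarith
  · push Not at hcase
    have h3 : M * D - lam * M ^ 2 ≤ D ^ 2 / (4 * lam) := by
      rw [le_div_iff₀ (by positivity)]
      nlinarith [sq_nonneg (D - 2 * lam * M)]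
    have h4 : 2 * (e * ρ ^ 2 / 64) ≤ D ^ 2 / (4 * lam) := by
      rw [le_div_iff₀ (by positivity)]
      have h5 : (ρ / 4) ^ 2 ≤ D ^ 2 := by gcongr
      have h6 : lam * (2 * e) * ρ ^ 2 ≤ 1 * ρ ^ 2 := by gcongr
      nlinarith
    have h7 : D ^ 2 / (2 * lam) = D ^ 2 / (4 * lam) + D ^ 2 / (4 * lam) := by field_simp; ring
    have h8 : 0 ≤ e / 2 * n ^ 2 := by positivity
    rw [h7]; linarith

set_option maxHeartbeats 2000000 in
theorem TS {F E : Set W} (hF : IsClosed F) (hE : IsClosed E) {Xh Yh lX lY : W}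
    (hXh : Xh ∈ F) (hYh : Yh ∈ E)
    (T : WithLp 2 (W × W) →L[ℝ] WithLp 2 (W × W))
    (hyp : ∀ ε > 0, ∃ ρ > 0, ∀ X ∈ F, ∀ Y ∈ E, ‖X - Xh‖ ≤ ρ → ‖Y - Yh‖ ≤ ρ →
      -ε * (‖X - Xh‖ ^ 2 + ‖Y - Yh‖ ^ 2) ≤ inner ℝ lX (X - Xh) + inner ℝ lY (Y - Yh) +
        inner ℝ (T (mkZ (X - Xh) (Y - Yh))) (mkZ (X - Xh) (Y - Yh)))
    {ε : ℝ} (hε : 0 < ε) :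
    ∃ Xs ∈ F, ∃ Ys ∈ E, ∃ P Q : W, ∃ SX SY : W →L[ℝ] W,
      ‖Xs - Xh‖ < ε ∧ ‖Ys - Yh‖ < ε ∧ ‖P + lX‖ < ε ∧ ‖Q + lY‖ < ε ∧
      SetJet F Xs P SX ∧ SetJet E Ys Q SY ∧
      ∀ h k, -ε * (‖h‖ ^ 2 + ‖k‖ ^ 2) ≤ inner ℝ (SX h) h + inner ℝ (SY k) k +
        inner ℝ (T (mkZ h k)) (mkZ h k) := by
  obtain ⟨e, rfl⟩ : ∃ e, ε = 2 * e := ⟨ε / 2, by ring⟩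
  have he : 0 < e := by linarith
  obtain ⟨ρ0, hρ0, hyp'⟩ := hyp (e / 2) (by positivity)
  set zh := mkZ Xh Yh with hzh
  set l := mkZ lX lY with hl
  set F' := F ∩ closedBall Xh ρ0 with hF'
  set E' := E ∩ closedBall Yh ρ0 with hE'
  have cF : IsCompact F' := (isCompact_closedBall _ _).inter_left hF
  have cE : IsCompact E' := (isCompact_closedBall _ _).inter_left hE
  have nF : Xh ∈ F' := ⟨hXh, mem_closedBall_self hρ0.le⟩
  have nE : Yh ∈ E' := ⟨hYh, mem_closedBall_self hρ0.le⟩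
  have ft : ∀ X, ∃ x ∈ F', infDist X F' = ‖X - x‖ := fun X => by
    obtain ⟨x, hx, h⟩ := cF.exists_infDist_eq_dist ⟨_, nF⟩ X
    exact ⟨x, hx, by rw [h, dist_eq_norm]⟩
  have fe : ∀ X, ∃ x ∈ E', infDist X E' = ‖X - x‖ := fun X => by
    obtain ⟨x, hx, h⟩ := cE.exists_infDist_eq_dist ⟨_, nE⟩ X
    exact ⟨x, hx, by rw [h, dist_eq_norm]⟩
  have dle : ∀ X, ∀ x ∈ F', infDist X F' ≤ ‖X - x‖ := fun X x hx => by
    rw [← dist_eq_norm]; exact infDist_le_dist_of_mem hx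
  have ele : ∀ X, ∀ x ∈ E', infDist X E' ≤ ‖X - x‖ := fun X x hx => by
    rw [← dist_eq_norm]; exact infDist_le_dist_of_mem hx
  -- B
  set B : WithLp 2 (W × W) → ℝ := fun z => inner ℝ l z + inner ℝ (T z) z + e * ‖z‖ ^ 2 with hB
  set gB : WithLp 2 (W × W) → WithLp 2 (W × W) := fun z =>
    l + T z + ContinuousLinearMap.adjoint T z + (2 * e) • z with hgB
  have Badd : ∀ z h, B (z + h) = B z + inner ℝ (gB z) h + inner ℝ (T h) h + e * ‖h‖ ^ 2 := by
    intro z h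
    simp only [hB, hgB, map_add, inner_add_left, inner_add_right, norm_add_sq_real,
      inner_smul_left, ContinuousLinearMap.adjoint_inner_left, conj_trivial,
      real_inner_comm z (T h)]
    ring
  have hTq : ∀ h, inner ℝ (T h) h ≤ ‖T‖ * ‖h‖ ^ 2 := fun h => by
    calc inner ℝ (T h) h ≤ ‖T h‖ * ‖h‖ := real_inner_le_norm _ _
      _ ≤ (‖T‖ * ‖h‖) * ‖h‖ := by gcongr; exact T.le_opNorm h
      _ = _ := by ring
  have hTq' : ∀ h, -(‖T‖ * ‖h‖ ^ 2) ≤ inner ℝ (T h) h := fun h => by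
    have : |inner ℝ (T h) h| ≤ ‖T‖ * ‖h‖ ^ 2 := by
      calc |inner ℝ (T h) h| ≤ ‖T h‖ * ‖h‖ := abs_real_inner_le_norm _ _
        _ ≤ (‖T‖ * ‖h‖) * ‖h‖ := by gcongr; exact T.le_opNorm h
        _ = _ := by ring
    exact (abs_le.mp this).1
  have hgBn : ∀ z, ‖gB z - l‖ ≤ (2 * ‖T‖ + 2 * e) * ‖z‖ := fun z => by
    have : gB z - l = T z + ContinuousLinearMap.adjoint T z + (2 * e) • z := by
      simp only [hgB]; abel
    rw [this]
    refine (norm_add_le _ _).trans ?_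
    rw [norm_smul, Real.norm_of_nonneg (by positivity)]
    have h1 := norm_add_le (T z) (ContinuousLinearMap.adjoint T z)
    have h2 := T.le_opNorm z
    have h3 := (ContinuousLinearMap.adjoint T).le_opNorm z
    rw [LinearIsometryEquiv.norm_map] at h3
    linarith
  -- choose ρ
  set ρ := min (ρ0 / 2) (min (e / 2) (e / (2 * ‖T‖ + 2 * e + 1) / 2)) with hρdef
  have hT0 := norm_nonneg T
  have hρ : 0 < ρ := by positivity
  have hρ1 : 2 * ρ ≤ ρ0 := by have := min_le_left (ρ0 / 2) (min (e / 2) (e / (2 * ‖T‖ + 2 * e + 1) / 2)); linarith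
  have hρ2 : 2 * ρ ≤ e := by
    have := (min_le_right (ρ0 / 2) (min (e / 2) (e / (2 * ‖T‖ + 2 * e + 1) / 2))).trans (min_le_left _ _)
    linarith
  have hρ3 : (2 * ‖T‖ + 2 * e) * ρ ≤ e := by
    have := (min_le_right (ρ0 / 2) (min (e / 2) (e / (2 * ‖T‖ + 2 * e + 1) / 2))).trans (min_le_right _ _)
    have h1 : ρ ≤ e / (2 * ‖T‖ + 2 * e + 1) := by
      have : 0 < e / (2 * ‖T‖ + 2 * e + 1) := by positivity
      linarith
    rw [le_div_iff₀ (by positivity)] at h1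
    linarith
  set M := ‖l‖ + (2 * ‖T‖ + 2 * e) * ρ + (‖T‖ + e) * ρ with hM
  have hM0 : 0 ≤ M := by positivity
  set lam := min (1 / (2 * e)) (e * ρ ^ 2 / (64 * (M ^ 2 + 1))) with hlam
  have hlam0 : 0 < lam := by positivity
  have hlam1 : lam * (2 * e) ≤ 1 := by
    have := min_le_left (1 / (2 * e)) (e * ρ ^ 2 / (64 * (M ^ 2 + 1)))
    rw [← hlam, le_div_iff₀ (by positivity)] at this; exact this
  have hlam2 : lam * M ^ 2 ≤ e * ρ ^ 2 / 64 := by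
    have := min_le_right (1 / (2 * e)) (e * ρ ^ 2 / (64 * (M ^ 2 + 1)))
    rw [← hlam, le_div_iff₀ (by positivity)] at this
    linarith
  set f : W → ℝ := fun X => infDist X F' ^ 2 / (2 * lam) with hf
  set g : W → ℝ := fun X => infDist X E' ^ 2 / (2 * lam) with hg
  set G : WithLp 2 (W × W) → ℝ := fun z => f (p1 z) + g (p2 z) + B (z - zh) with hG
  have hGc : Continuous G := by
    have := continuous_infDist_pt F'
    have := continuous_infDist_pt E'
    simp only [hG, hf, hg, hB]
    fun_prop
  have fsc : ∀ X, ∃ p, ∀ h, f (X + h) ≤ f X + inner ℝ p h + 1 / (2 * lam) * ‖h‖ ^ 2 := by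
    intro X
    obtain ⟨x, hx, hxd⟩ := ft X
    refine ⟨(1 / lam) • (X - x), fun h => ?_⟩
    have h1 := dle (X + h) x hx
    have h2 : infDist (X + h) F' ^ 2 ≤ ‖X + h - x‖ ^ 2 := by
      gcongr
      exact infDist_nonneg
    have h3 : X + h - x = (X - x) + h := by abel
    rw [h3, norm_add_sq_real] at h2
    simp only [hf, hxd, inner_smul_left, conj_trivial]
    calc infDist (X + h) F' ^ 2 / (2 * lam)
        ≤ (‖X - x‖ ^ 2 + 2 * inner ℝ (X - x) h + ‖h‖ ^ 2) / (2 * lam) := by gcongr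
      _ = _ := by field_simp
  have gsc : ∀ X, ∃ p, ∀ h, g (X + h) ≤ g X + inner ℝ p h + 1 / (2 * lam) * ‖h‖ ^ 2 := by
    intro X
    obtain ⟨x, hx, hxd⟩ := fe X
    refine ⟨(1 / lam) • (X - x), fun h => ?_⟩
    have h1 := ele (X + h) x hx
    have h2 : infDist (X + h) E' ^ 2 ≤ ‖X + h - x‖ ^ 2 := by
      gcongr
      exact infDist_nonneg
    have h3 : X + h - x = (X - x) + h := by abel
    rw [h3, norm_add_sq_real] at h2
    simp only [hg, hxd, inner_smul_left, conj_trivial]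
    calc infDist (X + h) E' ^ 2 / (2 * lam)
        ≤ (‖X - x‖ ^ 2 + 2 * inner ℝ (X - x) h + ‖h‖ ^ 2) / (2 * lam) := by gcongr
      _ = _ := by field_simp
  have hsc : ∀ z, ∃ p, ∀ h, G (z + h) ≤ G z + inner ℝ p h + (1 / (2 * lam) + ‖T‖ + e) * ‖h‖ ^ 2 := by
    intro z
    obtain ⟨a, ha⟩ := fsc (p1 z)
    obtain ⟨b, hb⟩ := gsc (p2 z)
    refine ⟨mkZ a b + gB (z - zh), fun h => ?_⟩
    have h1 := ha (p1 h)
    have h2 := hb (p2 h)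
    have h3 := Badd (z - zh) h
    have h4 : z + h - zh = z - zh + h := by abel
    have h5 : inner ℝ (mkZ a b) h = inner ℝ a (p1 h) + inner ℝ b (p2 h) := by
      rw [← mkZ_inner]; rfl
    have h6 : ‖h‖ ^ 2 = ‖p1 h‖ ^ 2 + ‖p2 h‖ ^ 2 := by
      rw [← mkZ_norm_sq]; rfl
    have h7 := hTq h
    simp only [hG, h4, map_add, inner_add_left, h5]
    rw [h3]
    have : (1 / (2 * lam) + ‖T‖ + e) * ‖h‖ ^ 2 = 1 / (2 * lam) * (‖p1 h‖ ^ 2 + ‖p2 h‖ ^ 2) + ‖T‖ * ‖h‖ ^ 2 + e * ‖h‖ ^ 2 := by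
      rw [← h6]; ring
    rw [this]
    linarith
  have hmin : ∀ z, ρ / 2 ≤ ‖z - zh‖ → ‖z - zh‖ ≤ ρ → G zh + e * ρ ^ 2 / 64 ≤ G z := by
    intro z hz1 hz2
    have hG0 : G zh = 0 := by
      simp only [hG, hf, hg, hB, sub_self, hzh, p1_mkZ, p2_mkZ]
      simp [infDist_zero_of_mem nF, infDist_zero_of_mem nE]
    rw [hG0, zero_add]
    obtain ⟨x, hx, hxd⟩ := ft (p1 z)
    obtain ⟨y, hy, hyd⟩ := fe (p2 z)
    set w := mkZ x y with hw
    have hD : ‖z - w‖ ^ 2 = infDist (p1 z) F' ^ 2 + infDist (p2 z) E' ^ 2 := by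
      rw [hxd, hyd, ← mkZ_norm_sq]; rfl
    have hDle : ‖z - w‖ ≤ ‖z - zh‖ := by
      have a1 := dle (p1 z) Xh nF
      have a2 := ele (p2 z) Yh nE
      have a3 : ‖z - zh‖ ^ 2 = ‖p1 z - Xh‖ ^ 2 + ‖p2 z - Yh‖ ^ 2 := by rw [← mkZ_norm_sq]; rfl
      have a4 : ‖z - w‖ ^ 2 ≤ ‖z - zh‖ ^ 2 := by
        rw [hD, a3]; gcongr <;> exact infDist_nonneg
      exact le_of_sq_le_sq a4 (norm_nonneg _)
    have hwB : e / 2 * ‖w - zh‖ ^ 2 ≤ B (w - zh) := by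
      have := hyp' x hx.1 y hy.1 (by rw [← dist_eq_norm]; exact hx.2) (by rw [← dist_eq_norm]; exact hy.2)
      rw [← mkZ_norm_sq, ← mkZ_inner, ← mkZ_sub] at this
      simp only [hB]
      linarith
    have hBz : B (w - zh) - M * ‖z - w‖ ≤ B (z - zh) := by
      have h1 := Badd (z - zh) (w - z)
      have h2 : z - zh + (w - z) = w - zh := by abel
      rw [h2] at h1
      have h3 : inner ℝ (gB (z - zh)) (w - z) ≤ (‖l‖ + (2 * ‖T‖ + 2 * e) * ρ) * ‖z - w‖ := by
        refine (real_inner_le_norm _ _).trans ?_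
        rw [norm_sub_rev w z]
        gcongr
        calc ‖gB (z - zh)‖ = ‖l + (gB (z - zh) - l)‖ := by congr 1; abel
          _ ≤ ‖l‖ + ‖gB (z - zh) - l‖ := norm_add_le _ _
          _ ≤ _ := by gcongr; exact (hgBn _).trans (by gcongr)
      have h4 := hTq (w - z)
      rw [norm_sub_rev w z] at h4 h1
      have h5 : (‖T‖ + e) * ‖z - w‖ ^ 2 ≤ (‖T‖ + e) * ρ * ‖z - w‖ := by
        rw [sq, ← mul_assoc]
        gcongr; exact hDle.trans hz2
      rw [hM]; linarith
    have hGz : G z = ‖z - w‖ ^ 2 / (2 * lam) + B (z - zh) := by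
      simp only [hG, hf, hg]; rw [hD]; ring
    have htri : ρ / 2 - ‖z - w‖ ≤ ‖w - zh‖ := by
      have : ‖z - zh‖ ≤ ‖z - w‖ + ‖w - zh‖ := by
        calc ‖z - zh‖ = ‖(z - w) + (w - zh)‖ := by congr 1; abel
          _ ≤ _ := norm_add_le _ _
      linarith
    rw [hGz]
    exact ts_scalar he hρ hlam0 hlam1 hlam2 (norm_nonneg _) htri hwB hBz
  obtain ⟨z, p, A, hz, hp, hsub, hA⟩ := lemmaA hGc (by positivity) hsc hρ
    (show 0 < e * ρ ^ 2 / 64 by positivity) he hmin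
  obtain ⟨Xs, hXs, hXd⟩ := ft (p1 z)
  obtain ⟨Ys, hYs, hYd⟩ := fe (p2 z)
  set Pf := p - gB (z - zh) with hPf
  set A' : WithLp 2 (W × W) →L[ℝ] WithLp 2 (W × W) :=
    (1 / 2 : ℝ) • A - T - e • ContinuousLinearMap.id ℝ _ with hA'
  have hA'q : ∀ h, inner ℝ (A' h) h = 1 / 2 * inner ℝ (A h) h - inner ℝ (T h) h - e * ‖h‖ ^ 2 := by
    intro h
    simp [hA', inner_sub_left, inner_smul_left]
  have hexp : ∀ ω > 0, ∀ᶠ h in 𝓝 (0 : WithLp 2 (W × W)),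
      |f (p1 z + p1 h) + g (p2 z + p2 h) - f (p1 z) - g (p2 z) - inner ℝ Pf h - inner ℝ (A' h) h|
        ≤ ω * ‖h‖ ^ 2 := by
    intro ω hω
    filter_upwards [hA ω hω] with h hh
    have h4 : z + h - zh = z - zh + h := by abel
    have e1 : f (p1 z + p1 h) + g (p2 z + p2 h) - f (p1 z) - g (p2 z) - inner ℝ Pf h - inner ℝ (A' h) h
      = G (z + h) - G z - inner ℝ p h - 1 / 2 * inner ℝ (A h) h := by
      rw [hA'q, hPf, inner_sub_left]
      simp only [hG, map_add, h4]
      rw [Badd]; ring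
    rw [e1]; exact hh
  have i1t : Tendsto (fun h : W => i1 h) (𝓝 0) (𝓝 0) := by
    have := (i1 (W := W)).continuous.tendsto 0
    rwa [map_zero] at this
  have i2t : Tendsto (fun h : W => i2 h) (𝓝 0) (𝓝 0) := by
    have := (i2 (W := W)).continuous.tendsto 0
    rwa [map_zero] at this
  set SX : W →L[ℝ] W := p1.comp (A'.comp i1) with hSX
  set SY : W →L[ℝ] W := p2.comp (A'.comp i2) with hSY
  have hSXq : ∀ h, inner ℝ (SX h) h = inner ℝ (A' (i1 h)) (i1 h) := by
    intro h
    have : inner ℝ (A' (i1 h)) (i1 h) = inner ℝ (p1 (A' (i1 h))) h + inner ℝ (p2 (A' (i1 h))) (0:W) := by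
      rw [← mkZ_inner]; rfl
    rw [this, inner_zero_right, add_zero]; rfl
  have hSYq : ∀ h, inner ℝ (SY h) h = inner ℝ (A' (i2 h)) (i2 h) := by
    intro h
    have : inner ℝ (A' (i2 h)) (i2 h) = inner ℝ (p1 (A' (i2 h))) (0:W) + inner ℝ (p2 (A' (i2 h))) h := by
      rw [← mkZ_inner]; rfl
    rw [this, inner_zero_right, zero_add]; rfl
  have hPfi1 : ∀ h, inner ℝ Pf (i1 h) = inner ℝ (p1 Pf) h := by
    intro h
    have : inner ℝ Pf (i1 h) = inner ℝ (p1 Pf) h + inner ℝ (p2 Pf) (0:W) := by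
      rw [← mkZ_inner]; rfl
    rw [this, inner_zero_right, add_zero]
  have hPfi2 : ∀ h, inner ℝ Pf (i2 h) = inner ℝ (p2 Pf) h := by
    intro h
    have : inner ℝ Pf (i2 h) = inner ℝ (p1 Pf) (0:W) + inner ℝ (p2 Pf) h := by
      rw [← mkZ_inner]; rfl
    rw [this, inner_zero_right, zero_add]
  have ni1 : ∀ h : W, ‖i1 h‖ ^ 2 = ‖h‖ ^ 2 := fun h => by rw [i1_apply, mkZ_norm_sq]; simp
  have ni2 : ∀ h : W, ‖i2 h‖ ^ 2 = ‖h‖ ^ 2 := fun h => by rw [i2_apply, mkZ_norm_sq]; simp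
  have pi11 : ∀ h : W, p1 (i1 h) = h := fun h => rfl
  have pi12 : ∀ h : W, p1 (i2 h) = 0 := fun h => rfl
  have pi21 : ∀ h : W, p2 (i1 h) = 0 := fun h => rfl
  have pi22 : ∀ h : W, p2 (i2 h) = h := fun h => rfl
  have hexpX : ∀ ω > 0, ∀ᶠ h in 𝓝 (0 : W),
      |f (p1 z + h) - f (p1 z) - inner ℝ (p1 Pf) h - inner ℝ (SX h) h| ≤ ω * ‖h‖ ^ 2 := by
    intro ω hω
    filter_upwards [i1t.eventually (hexp ω hω)] with h hh
    rw [pi11, pi21, hPfi1, ← hSXq, ni1, add_zero] at hh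
    convert hh using 2; ring
  have hexpY : ∀ ω > 0, ∀ᶠ h in 𝓝 (0 : W),
      |g (p2 z + h) - g (p2 z) - inner ℝ (p2 Pf) h - inner ℝ (SY h) h| ≤ ω * ‖h‖ ^ 2 := by
    intro ω hω
    filter_upwards [i2t.eventually (hexp ω hω)] with h hh
    rw [pi12, pi22, hPfi2, ← hSYq, ni2, add_zero] at hh
    convert hh using 2; ring
  have hz1 : ‖p1 z - Xh‖ < ρ := (norm_p1_le (z - zh)).trans_lt hz
  have hz2 : ‖p2 z - Yh‖ < ρ := (norm_p2_le (z - zh)).trans_lt hz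
  have hXsn : ‖Xs - Xh‖ < 2 * ρ := by
    have h1 := dle (p1 z) Xh nF
    rw [hXd] at h1
    calc ‖Xs - Xh‖ = ‖-(p1 z - Xs) + (p1 z - Xh)‖ := by congr 1; abel
      _ ≤ ‖p1 z - Xs‖ + ‖p1 z - Xh‖ := (norm_add_le _ _).trans (by rw [norm_neg])
      _ < _ := by linarith
  have hYsn : ‖Ys - Yh‖ < 2 * ρ := by
    have h1 := ele (p2 z) Yh nE
    rw [hYd] at h1
    calc ‖Ys - Yh‖ = ‖-(p2 z - Ys) + (p2 z - Yh)‖ := by congr 1; abel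
      _ ≤ ‖p2 z - Ys‖ + ‖p2 z - Yh‖ := (norm_add_le _ _).trans (by rw [norm_neg])
      _ < _ := by linarith
  have hPfl : ‖Pf + l‖ < 2 * e := by
    have h1 := hgBn (z - zh)
    calc ‖Pf + l‖ = ‖p - (gB (z - zh) - l)‖ := by congr 1; rw [hPf]; abel
      _ ≤ ‖p‖ + ‖gB (z - zh) - l‖ := norm_sub_le _ _
      _ < e + (2 * ‖T‖ + 2 * e) * ρ := by
        have : (2 * ‖T‖ + 2 * e) * ‖z - zh‖ ≤ (2 * ‖T‖ + 2 * e) * ρ := by gcongr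
        linarith
      _ ≤ _ := by linarith
  refine ⟨Xs, hXs.1, Ys, hYs.1, p1 Pf, p2 Pf, SX, SY, by linarith, by linarith,
    (norm_p1_le (Pf + l)).trans_lt hPfl, (norm_p2_le (Pf + l)).trans_lt hPfl, ?_, ?_, ?_⟩
  · intro η hη
    have t1 : Tendsto (fun Y : W => Y - Xs) (𝓝 Xs) (𝓝 0) := by
      have : Continuous (fun Y : W => Y - Xs) := by fun_prop
      have := this.tendsto Xs
      rwa [sub_self] at this
    filter_upwards [t1.eventually (hexpX η hη), ball_mem_nhds Xs (show 0 < ρ0 - ‖Xs - Xh‖ by linarith)]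
      with Y hY hYb hYF
    have hYF' : Y ∈ F' := by
      refine ⟨hYF, ?_⟩
      rw [mem_ball, dist_eq_norm] at hYb
      rw [mem_closedBall, dist_eq_norm]
      calc ‖Y - Xh‖ = ‖(Y - Xs) + (Xs - Xh)‖ := by congr 1; abel
        _ ≤ _ := norm_add_le _ _
        _ ≤ _ := by linarith
    have h1 : f (p1 z + (Y - Xs)) ≤ f (p1 z) := by
      have := dle (p1 z + (Y - Xs)) Y hYF'
      rw [show p1 z + (Y - Xs) - Y = p1 z - Xs by abel] at this
      simp only [hf, hXd]
      gcongr
      exact infDist_nonneg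
    have := (abs_le.mp hY).1
    linarith
  · intro η hη
    have t1 : Tendsto (fun Y : W => Y - Ys) (𝓝 Ys) (𝓝 0) := by
      have : Continuous (fun Y : W => Y - Ys) := by fun_prop
      have := this.tendsto Ys
      rwa [sub_self] at this
    filter_upwards [t1.eventually (hexpY η hη), ball_mem_nhds Ys (show 0 < ρ0 - ‖Ys - Yh‖ by linarith)]
      with Y hY hYb hYF
    have hYF' : Y ∈ E' := by
      refine ⟨hYF, ?_⟩
      rw [mem_ball, dist_eq_norm] at hYb
      rw [mem_closedBall, dist_eq_norm]
      calc ‖Y - Yh‖ = ‖(Y - Ys) + (Ys - Yh)‖ := by congr 1; abel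
        _ ≤ _ := norm_add_le _ _
        _ ≤ _ := by linarith
    have h1 : g (p2 z + (Y - Ys)) ≤ g (p2 z) := by
      have := ele (p2 z + (Y - Ys)) Y hYF'
      rw [show p2 z + (Y - Ys) - Y = p2 z - Ys by abel] at this
      simp only [hg, hYd]
      gcongr
      exact infDist_nonneg
    have := (abs_le.mp hY).1
    linarith
  · intro h k
    have pt1 : Tendsto (fun w : WithLp 2 (W × W) => p1 w) (𝓝 0) (𝓝 0) := by
      have := (p1 (W := W)).continuous.tendsto 0
      rwa [map_zero] at this
    have pt2 : Tendsto (fun w : WithLp 2 (W × W) => p2 w) (𝓝 0) (𝓝 0) := by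
      have := (p2 (W := W)).continuous.tendsto 0
      rwa [map_zero] at this
    obtain ⟨t, ht, ⟨h1, h2⟩, h3⟩ := eventually_smul_nhds (mkZ h k)
      (((pt1.eventually (hexpX e he)).and (pt2.eventually (hexpY e he))).and hsub)
    rw [map_smul, p1_mkZ] at h1
    rw [map_smul, p2_mkZ] at h2
    have e1 := (abs_le.mp h1).2
    have e2 := (abs_le.mp h2).2
    have h4 : z + t • mkZ h k - zh = z - zh + t • mkZ h k := by abel
    simp only [hG, map_add, h4, map_smul, p1_mkZ, p2_mkZ] at h3
    rw [Badd] at h3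
    have e3 : inner ℝ p (t • mkZ h k) = inner ℝ Pf (t • mkZ h k) + inner ℝ (gB (z - zh)) (t • mkZ h k) := by
      rw [hPf, inner_sub_left]; ring
    have e4 : inner ℝ Pf (t • mkZ h k) = inner ℝ (p1 Pf) (t • h) + inner ℝ (p2 Pf) (t • k) := by
      rw [← mkZ_inner]; rfl
    rw [e3, e4] at h3
    simp only [map_smul, inner_smul_left, inner_smul_right, conj_trivial, norm_smul, mul_pow,
      Real.norm_eq_abs, sq_abs, mkZ_norm_sq] at h3 e1 e2
    have e5 : 0 ≤ t ^ 2 * (inner ℝ (SX h) h + inner ℝ (SY k) k +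
        inner ℝ (T (mkZ h k)) (mkZ h k) + 2 * e * (‖h‖ ^ 2 + ‖k‖ ^ 2)) := by
      linarith
    have e6 := nonneg_of_mul_nonneg_right e5 (by positivity)
    linarith

end TS

section MC
variable {N : ℕ}

theorem trace_eq {W ι κ : Type*} [NormedAddCommGroup W] [InnerProductSpace ℝ W]
    [FiniteDimensional ℝ W] [Fintype ι] [Fintype κ] (S : W →L[ℝ] W)
    (w : ι → ℝ) (g : ι → W) (w' : κ → ℝ) (g' : κ → W)
    (h : ∀ a, ∑ j, w j * inner ℝ (g j) a ^ 2 = ∑ j, w' j * inner ℝ (g' j) a ^ 2) :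
    ∑ j, w j * inner ℝ (S (g j)) (g j) = ∑ j, w' j * inner ℝ (S (g' j)) (g' j) := by
  have pol : ∀ a b, ∑ j, w j * (inner ℝ (g j) a * inner ℝ (g j) b)
      = ∑ j, w' j * (inner ℝ (g' j) a * inner ℝ (g' j) b) := by
    intro a b
    have h1 := h (a + b)
    have h2 := h a
    have h3 := h b
    have e1 : ∀ j, w j * inner ℝ (g j) (a + b) ^ 2 = w j * inner ℝ (g j) a ^ 2
      + w j * inner ℝ (g j) b ^ 2 + 2 * (w j * (inner ℝ (g j) a * inner ℝ (g j) b)) := by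
      intro j; rw [inner_add_right]; ring
    have e2 : ∀ j, w' j * inner ℝ (g' j) (a + b) ^ 2 = w' j * inner ℝ (g' j) a ^ 2
      + w' j * inner ℝ (g' j) b ^ 2 + 2 * (w' j * (inner ℝ (g' j) a * inner ℝ (g' j) b)) := by
      intro j; rw [inner_add_right]; ring
    simp only [e1, e2, Finset.sum_add_distrib, ← Finset.mul_sum] at h1
    linarith
  set b := stdOrthonormalBasis ℝ W
  have ex : ∀ x : W, inner ℝ (S x) x = ∑ k, inner ℝ x (b k) * inner ℝ x (S (b k)) := by
    intro x
    conv_lhs => rw [← b.sum_repr x]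
    rw [map_sum, sum_inner]
    refine Finset.sum_congr rfl fun k _ => ?_
    rw [map_smul, inner_smul_left, b.sum_repr, b.repr_apply_apply]
    simp only [conj_trivial]
    rw [real_inner_comm x (b k), real_inner_comm x (S (b k))]
  simp only [ex, Finset.mul_sum]
  rw [Finset.sum_comm]
  conv_rhs => rw [Finset.sum_comm]
  exact Finset.sum_congr rfl fun k _ => pol _ _

/-- the quadratic -/
noncomputable def quadT (x p : EuclideanSpace ℝ (Fin N)) (a : ℝ)
    (Q : EuclideanSpace ℝ (Fin N) →L[ℝ] EuclideanSpace ℝ (Fin N))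
    (y : EuclideanSpace ℝ (Fin N)) : ℝ :=
  a + inner ℝ p (y - x) + inner ℝ (Q (y - x)) (y - x)

theorem quadT_contDiff (x p : EuclideanSpace ℝ (Fin N)) (a : ℝ)
    (Q : EuclideanSpace ℝ (Fin N) →L[ℝ] EuclideanSpace ℝ (Fin N)) :
    ContDiff ℝ 2 (quadT x p a Q) := by
  unfold quadT
  have : ContDiff ℝ 2 (fun y => Q (y - x)) := Q.contDiff.comp (contDiff_id.sub contDiff_const)
  exact (contDiff_const.add (contDiff_const.inner ℝ (contDiff_id.sub contDiff_const))).add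
    (this.inner ℝ (contDiff_id.sub contDiff_const))

theorem quadT_grad (x p : EuclideanSpace ℝ (Fin N)) (a : ℝ)
    (Q : EuclideanSpace ℝ (Fin N) →L[ℝ] EuclideanSpace ℝ (Fin N)) (y) :
    gradient (quadT x p a Q) y = p + (Q + ContinuousLinearMap.adjoint Q) (y - x) := by
  apply HasGradientAt.gradient
  rw [hasGradientAt_iff_hasFDerivAt]
  have h1 : HasFDerivAt (fun y : EuclideanSpace ℝ (Fin N) => y - x)
    (ContinuousLinearMap.id ℝ _) y := (hasFDerivAt_id y).sub_const x
  have h2 := (Q.hasFDerivAt (x := y - x)).comp y h1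
  have h3 := ((hasFDerivAt_const p y).inner ℝ h1)
  have h4 := (h2.inner ℝ h1)
  have h5 := (h3.const_add a).add h4
  refine (h5.congr_fderiv ?_)
  ext h
  simp [fderivInnerCLM_apply, inner_add_left, ContinuousLinearMap.adjoint_inner_left,
    real_inner_comm (y - x) (Q h), inner_sub_left]

theorem mcOp_quadT (x p : EuclideanSpace ℝ (Fin N)) (a : ℝ)
    (Q : EuclideanSpace ℝ (Fin N) →L[ℝ] EuclideanSpace ℝ (Fin N)) :
    mcOp (quadT x p a Q) x = 2 / Real.sqrt (1 + ‖p‖ ^ 2) *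
      (∑ i, inner ℝ (Q (EuclideanSpace.single i 1)) (EuclideanSpace.single i 1)
        - inner ℝ (Q p) p / (1 + ‖p‖ ^ 2)) := by
  unfold mcOp
  simp only [quadT_grad]
  set S := Q + ContinuousLinearMap.adjoint Q with hS
  have hs0 : 0 < 1 + ‖p‖ ^ 2 := by positivity
  set s := Real.sqrt (1 + ‖p‖ ^ 2) with hs
  have hspos : 0 < s := Real.sqrt_pos.mpr hs0
  have hss : s ^ 2 = 1 + ‖p‖ ^ 2 := Real.sq_sqrt hs0.le
  have key : ∀ i : Fin N, fderiv ℝ (fun y => (Real.sqrt (1 + ‖p + S (y - x)‖ ^ 2))⁻¹ *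
      (p + S (y - x)) i) x (EuclideanSpace.single i 1)
      = s⁻¹ * (S (EuclideanSpace.single i 1)) i
        - (s ^ 3)⁻¹ * (p i * inner ℝ p (S (EuclideanSpace.single i 1))) := by
    intro i
    set ei : EuclideanSpace ℝ (Fin N) := EuclideanSpace.single i 1
    have h1 : HasFDerivAt (fun y : EuclideanSpace ℝ (Fin N) => y - x)
      (ContinuousLinearMap.id ℝ _) x := (hasFDerivAt_id x).sub_const x
    have h2 : HasFDerivAt (fun y => p + S (y - x)) S x := by
      have := (HasFDerivAt.comp (g := S) (f := fun y => y - x) x S.hasFDerivAt h1).const_add p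
      exact this.congr_fderiv (by ext; simp)
    have h3a := ((h2.norm_sq.const_add 1).sqrt (by simp [hs0.ne']))
    have h3 := HasDerivAt.comp_hasFDerivAt x (hasDerivAt_inv (x := Real.sqrt (1 + ‖p + S (x - x)‖ ^ 2)) (by
      simp only [sub_self, map_zero, add_zero]; exact hspos.ne')) h3a
    have h4 : HasFDerivAt (fun y => (p + S (y - x)) i) ((EuclideanSpace.proj i).comp S) x :=
      HasFDerivAt.comp (g := EuclideanSpace.proj (𝕜 := ℝ) i) (f := fun y => p + S (y - x)) x (ContinuousLinearMap.hasFDerivAt _) h2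
    have h5 := h3.mul h4
    have h6 := h5.fderiv
    refine (congrArg (fun L => L ei) h6).trans ?_
    simp [← hs]
    field_simp
    ring
  rw [Finset.sum_congr rfl (fun i _ => key i), Finset.sum_sub_distrib, ← Finset.mul_sum,
    ← Finset.mul_sum]
  have e1 : ∀ i, (S (EuclideanSpace.single i 1)) i
      = 2 * inner ℝ (Q (EuclideanSpace.single i 1)) (EuclideanSpace.single i (1:ℝ)) := by
    intro i
    have : (S (EuclideanSpace.single i 1)) i = inner ℝ (S (EuclideanSpace.single i 1)) (EuclideanSpace.single i (1:ℝ)) := by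
      simp [EuclideanSpace.inner_single_right]
    rw [this, hS, add_apply, inner_add_left, ContinuousLinearMap.adjoint_inner_left,
      real_inner_comm (EuclideanSpace.single i 1) (Q _)]
    ring
  have e2 : ∑ i, p i * inner ℝ p (S (EuclideanSpace.single i 1)) = 2 * inner ℝ (Q p) p := by
    have : ∑ i, p i * inner ℝ p (S (EuclideanSpace.single i 1)) = inner ℝ p (S p) := by
      have hp : p = ∑ i, p i • EuclideanSpace.single i (1:ℝ) := by
        ext j; simp [Finset.sum_apply, Pi.single_apply]
      conv_rhs => rw [show S p = S (∑ i, p i • EuclideanSpace.single i (1:ℝ)) by rw [← hp]]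
      rw [map_sum, inner_sum]
      simp [inner_smul_right]
    rw [this, hS, add_apply, inner_add_right, ContinuousLinearMap.adjoint_inner_right,
      real_inner_comm p (Q p)]
    ring
  rw [e2, Finset.sum_congr rfl (fun i _ => e1 i), ← Finset.mul_sum, ← hss]
  field_simp

end MC

section Visc
variable {N : ℕ}

abbrev EN (N : ℕ) := EuclideanSpace ℝ (Fin N)
abbrev WN (N : ℕ) := WithLp 2 (EuclideanSpace ℝ (Fin N) × ℝ)

noncomputable def mkW (x : EN N) (t : ℝ) : WN N := WithLp.toLp 2 (x, t)
noncomputable def fstL : WN N →L[ℝ] EN N :=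
  (ContinuousLinearMap.fst ℝ (EN N) ℝ).comp
    (WithLp.prodContinuousLinearEquiv 2 ℝ (EN N) ℝ).toContinuousLinearMap
noncomputable def sndL : WN N →L[ℝ] ℝ :=
  (ContinuousLinearMap.snd ℝ (EN N) ℝ).comp
    (WithLp.prodContinuousLinearEquiv 2 ℝ (EN N) ℝ).toContinuousLinearMap

theorem fstL_apply (w : WN N) : fstL w = w.fst := rfl
theorem sndL_apply (w : WN N) : sndL w = w.snd := rfl
theorem mkW_fst (x : EN N) (t : ℝ) : (mkW x t).fst = x := rfl
theorem mkW_snd (x : EN N) (t : ℝ) : (mkW x t).snd = t := rfl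
theorem mkW_eta (w : WN N) : mkW w.fst w.snd = w := rfl
theorem mkW_sub (x y : EN N) (s t : ℝ) : mkW x s - mkW y t = mkW (x - y) (s - t) := rfl
theorem mkW_add (x y : EN N) (s t : ℝ) : mkW x s + mkW y t = mkW (x + y) (s + t) := rfl
theorem W_sub_fst (a b : WN N) : (a - b).fst = a.fst - b.fst := rfl
theorem W_sub_snd (a b : WN N) : (a - b).snd = a.snd - b.snd := rfl
theorem W_add_fst (a b : WN N) : (a + b).fst = a.fst + b.fst := rfl
theorem W_add_snd (a b : WN N) : (a + b).snd = a.snd + b.snd := rfl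
theorem W_smul_fst (c : ℝ) (b : WN N) : (c • b).fst = c • b.fst := rfl
theorem W_smul_snd (c : ℝ) (b : WN N) : (c • b).snd = c * b.snd := rfl
theorem W_neg_fst (b : WN N) : (-b).fst = - b.fst := rfl
theorem W_neg_snd (b : WN N) : (-b).snd = - b.snd := rfl

theorem innerW (a b : WN N) : inner ℝ a b = inner ℝ a.fst b.fst + a.snd * b.snd := by
  rw [WithLp.prod_inner_apply]; simp [mul_comm]

theorem normW_sq (a : WN N) : ‖a‖ ^ 2 = ‖a.fst‖ ^ 2 + a.snd ^ 2 := by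
  rw [← real_inner_self_eq_norm_sq, innerW, real_inner_self_eq_norm_sq]; ring

theorem normW_fst_le (a : WN N) : ‖a.fst‖ ≤ ‖a‖ := by
  apply le_of_sq_le_sq _ (norm_nonneg _)
  rw [normW_sq]; nlinarith [sq_nonneg a.snd]
theorem normW_snd_le (a : WN N) : |a.snd| ≤ ‖a‖ := by
  apply le_of_sq_le_sq _ (norm_nonneg _)
  rw [normW_sq, sq_abs]; nlinarith [sq_nonneg ‖a.fst‖]
theorem normW_le (a : WN N) : ‖a‖ ≤ ‖a.fst‖ + |a.snd| := by
  apply le_of_sq_le_sq _ (by positivity)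
  rw [normW_sq, add_sq, sq_abs]; nlinarith [mul_nonneg (norm_nonneg a.fst) (abs_nonneg a.snd)]

theorem continuous_mkW {α : Type*} [TopologicalSpace α] {f : α → EN N} {g : α → ℝ}
    (hf : Continuous f) (hg : Continuous g) : Continuous (fun a => mkW (f a) (g a)) :=
  (WithLp.prodContinuousLinearEquiv 2 ℝ (EN N) ℝ).symm.continuous.comp (hf.prodMk hg)

noncomputable def liftL (p : EN N) : EN N →L[ℝ] WN N :=
  (WithLp.prodContinuousLinearEquiv 2 ℝ (EN N) ℝ).symm.toContinuousLinearMap.comp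
    ((ContinuousLinearMap.id ℝ (EN N)).prod (innerSL ℝ p))

theorem liftL_apply (p h : EN N) : liftL p h = mkW h (inner ℝ p h) := rfl

def epi (B : Set (EN N)) (u : EN N → ℝ) : Set (WN N) := {w | w.fst ∈ B ∧ u w.fst ≤ w.snd}
def hypo (B : Set (EN N)) (u : EN N → ℝ) : Set (WN N) := {w | w.fst ∈ B ∧ w.snd ≤ u w.fst}

theorem visc_touch {B : Set (EN N)} {u : EN N → ℝ} {X P : WN N} {S : WN N →L[ℝ] WN N}
    (hX : X ∈ epi B u) (hP : P.snd < 0) (hj : SetJet (epi B u) X P S) : X.snd = u X.fst := by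
  by_contra hne
  have hlt : u X.fst < X.snd := lt_of_le_of_ne hX.2 (Ne.symm hne)
  set ev : WN N := mkW 0 (-1) with hev
  have c : Tendsto (fun t : ℝ => X + t • ev) (𝓝[>] 0) (𝓝 X) := by
    have : Continuous (fun t : ℝ => X + t • ev) := by fun_prop
    have := this.tendsto 0
    rw [zero_smul, add_zero] at this
    exact this.mono_left nhdsWithin_le_nhds
  have h1 := c.eventually (hj 1 one_pos)
  have h2 : ∀ᶠ t in 𝓝[>] (0:ℝ), t < X.snd - u X.fst := by
    filter_upwards [Ioo_mem_nhdsGT (sub_pos.mpr hlt)] with t ht using ht.2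
  have hc0 : 0 < ‖S‖ + 2 := by positivity
  have h3 : ∀ᶠ t in 𝓝[>] (0:ℝ), t < -P.snd / (‖S‖ + 2) := by
    filter_upwards [Ioo_mem_nhdsGT (show 0 < -P.snd / (‖S‖ + 2) from div_pos (by linarith) hc0)] with t ht using ht.2
  obtain ⟨t, ⟨⟨h1, h2⟩, h3⟩, ht⟩ := (((h1.and h2).and h3).and self_mem_nhdsWithin).exists
  have ht : 0 < t := ht
  have hevn : ‖ev‖ ^ 2 = 1 := by rw [normW_sq, hev, mkW_fst, mkW_snd]; simp
  have hevn' : ‖ev‖ = 1 := by nlinarith [norm_nonneg ev]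
  have := h1 (by
    constructor
    · have : (X + t • ev).fst = X.fst := by rw [W_add_fst, W_smul_fst, hev, mkW_fst]; simp
      rw [this]; exact hX.1
    · have e1 : (X + t • ev).fst = X.fst := by rw [W_add_fst, W_smul_fst, hev, mkW_fst]; simp
      have e2 : (X + t • ev).snd = X.snd - t := by rw [W_add_snd, W_smul_snd, hev, mkW_snd]; ring
      rw [e1, e2]; linarith)
  rw [add_sub_cancel_left, inner_smul_right, map_smul, inner_smul_left, inner_smul_right,
    norm_smul, mul_pow, hevn, Real.norm_eq_abs, sq_abs] at this
  simp only [conj_trivial] at this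
  have e1 : inner ℝ P ev = -P.snd := by rw [innerW, hev, mkW_fst, mkW_snd]; simp
  have e2 : -‖S‖ ≤ inner ℝ (S ev) ev := by
    have : |inner ℝ (S ev) ev| ≤ ‖S‖ := by
      calc |inner ℝ (S ev) ev| ≤ ‖S ev‖ * ‖ev‖ := abs_real_inner_le_norm _ _
        _ ≤ (‖S‖ * ‖ev‖) * ‖ev‖ := by gcongr; exact S.le_opNorm _
        _ = ‖S‖ := by rw [hevn']; ring
    exact (abs_le.mp this).1
  rw [e1] at this
  rw [lt_div_iff₀ hc0] at h3
  have h5 : t * (-P.snd) + t * (t * inner ℝ (S ev) ev) ≤ t * t := by nlinarith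
  have h6 : -P.snd + t * inner ℝ (S ev) ev ≤ t := by
    have : t * (-P.snd + t * inner ℝ (S ev) ev) ≤ t * t := by linarith
    exact le_of_mul_le_mul_left this ht
  have h7 : t * (-‖S‖) ≤ t * inner ℝ (S ev) ev := by gcongr
  linarith

set_option maxHeartbeats 1000000 in
theorem visc_V0 {Ω B : Set (EN N)} {u H : EN N → ℝ} {X P : WN N} {S : WN N →L[ℝ] WN N}
    (hu : IsViscositySupersol Ω H u) (hBΩ : B ⊆ Ω)
    (hX : X ∈ epi B u) (hXi : X.fst ∈ interior B) (hP : P.snd < 0)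
    (hj : SetJet (epi B u) X P S) {η : ℝ} (hη : 0 < η) :
    mcOp (quadT X.fst ((-P.snd)⁻¹ • P.fst) (u X.fst)
      ((-P.snd)⁻¹ • (ContinuousLinearMap.adjoint (liftL ((-P.snd)⁻¹ • P.fst))).comp
        (S.comp (liftL ((-P.snd)⁻¹ • P.fst))) - η • ContinuousLinearMap.id ℝ (EN N))) X.fst
      ≤ N * H X.fst := by
  set σ := -P.snd with hσ
  have hσ0 : 0 < σ := by rw [hσ]; linarith
  set p : EN N := σ⁻¹ • P.fst with hp
  set L := liftL p with hL
  set Q : EN N →L[ℝ] EN N := σ⁻¹ • (ContinuousLinearMap.adjoint L).comp (S.comp L) -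
    η • ContinuousLinearMap.id ℝ (EN N) with hQ
  apply hu _ (quadT_contDiff _ _ _ _).contDiffOn _ (hBΩ hX.1)
  have htouch := visc_touch hX hP hj
  have hQq : ∀ h, inner ℝ (Q h) h = σ⁻¹ * inner ℝ (S (L h)) (L h) - η * ‖h‖ ^ 2 := by
    intro h
    simp [hQ, inner_sub_left, inner_smul_left, ContinuousLinearMap.adjoint_inner_left]
  set x := X.fst with hx
  set C1 := ‖L‖ + ‖Q‖ with hC1
  set C2 := ‖S‖ * (2 * ‖L‖ * ‖Q‖ + ‖Q‖ ^ 2) with hC2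
  have hC1' : 0 ≤ C1 := by positivity
  have hC2' : 0 ≤ C2 := by positivity
  set η' := σ * η / (4 * (C1 ^ 2 + 1)) with hη'
  have hη'0 : 0 < η' := by positivity
  have hη'1 : η' * C1 ^ 2 ≤ σ * η / 4 := by
    have : η' * (C1 ^ 2 + 1) = σ * η / 4 := by rw [hη']; field_simp
    nlinarith
  set φ := quadT x p (u x) Q with hφ
  have hφc : Continuous φ := (quadT_contDiff _ _ _ _).continuous
  have hYc : Tendsto (fun y => mkW y (φ y)) (𝓝 x) (𝓝 X) := by
    have := (continuous_mkW continuous_id hφc).tendsto x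
    have e : mkW (id x) (φ x) = X := by
      rw [hφ]; simp only [quadT, sub_self, inner_zero_right, add_zero, id]
      rw [← htouch, hx, mkW_eta]
    rwa [e] at this
  have hφx : φ x = u x := by rw [hφ]; simp [quadT]
  have hev := hYc.eventually (hj η' hη'0)
  have hsm : 0 < σ * η / (4 * (C2 + 1)) := by positivity
  have : ∀ᶠ y in 𝓝 x, φ y ≤ u y := by
    filter_upwards [hev, mem_interior_iff_mem_nhds.mp hXi, ball_mem_nhds x one_pos,
      ball_mem_nhds x hsm] with y hy hyB hy1 hy2
    by_contra hlt
    push Not at hlt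
    rw [mem_ball, dist_eq_norm] at hy1 hy2
    have hj1 := hy ⟨hyB, hlt.le⟩
    set h := y - x with hh
    have hh0 : h ≠ 0 := by
      intro h0
      have : y = x := sub_eq_zero.mp h0
      rw [this, hφx] at hlt
      exact lt_irrefl _ hlt
    have hhp : 0 < ‖h‖ := norm_pos_iff.mpr hh0
    set R := inner ℝ (Q h) h with hR
    set r : WN N := mkW 0 R with hr
    have hYX : mkW y (φ y) - X = L h + r := by
      rw [← mkW_eta X, mkW_sub, htouch, hL, liftL_apply, hr, mkW_add, add_zero, hφ]
      simp only [quadT]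
      rw [← hx, ← hh, ← hR]; congr 1; ring
    have hRb : |R| ≤ ‖Q‖ * ‖h‖ ^ 2 := by
      calc |R| ≤ ‖Q h‖ * ‖h‖ := abs_real_inner_le_norm _ _
        _ ≤ (‖Q‖ * ‖h‖) * ‖h‖ := by gcongr; exact Q.le_opNorm _
        _ = _ := by ring
    have hrn : ‖r‖ ≤ ‖Q‖ * ‖h‖ ^ 2 := by
      refine (normW_le r).trans ?_
      rw [hr, mkW_fst, mkW_snd, norm_zero, zero_add]; exact hRb
    have hLn : ‖L h‖ ≤ ‖L‖ * ‖h‖ := L.le_opNorm _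
    have hh2 : ‖h‖ ^ 2 ≤ ‖h‖ := by nlinarith
    have hn : ‖L h + r‖ ≤ C1 * ‖h‖ := by
      calc ‖L h + r‖ ≤ ‖L h‖ + ‖r‖ := norm_add_le _ _
        _ ≤ ‖L‖ * ‖h‖ + ‖Q‖ * ‖h‖ := by
          gcongr; exact hrn.trans (by gcongr)
        _ = _ := by rw [hC1]; ring
    rw [hYX] at hj1
    have eP : inner ℝ P (L h + r) = -σ * R := by
      rw [innerW, W_add_fst, W_add_snd, hL, liftL_apply, hr, mkW_fst, mkW_snd, mkW_fst, mkW_snd,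
        add_zero, hp, inner_smul_left]
      simp only [conj_trivial]
      have : P.snd = -σ := by rw [hσ]; ring
      rw [this]; field_simp; ring
    have eS : inner ℝ (S (L h)) (L h) - C2 * ‖h‖ ^ 3 ≤ inner ℝ (S (L h + r)) (L h + r) := by
      rw [map_add, inner_add_left, inner_add_right, inner_add_right]
      have b1 : |inner ℝ (S (L h)) r| ≤ ‖S‖ * (‖L‖ * ‖h‖) * (‖Q‖ * ‖h‖ ^ 2) := by
        refine (abs_real_inner_le_norm _ _).trans ?_
        gcongr
        exact (S.le_opNorm _).trans (by gcongr)
      have b2 : |inner ℝ (S r) (L h)| ≤ ‖S‖ * (‖Q‖ * ‖h‖ ^ 2) * (‖L‖ * ‖h‖) := by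
        refine (abs_real_inner_le_norm _ _).trans ?_
        gcongr
        exact (S.le_opNorm _).trans (by gcongr)
      have b3 : |inner ℝ (S r) r| ≤ ‖S‖ * (‖Q‖ * ‖h‖) * (‖Q‖ * ‖h‖ ^ 2) := by
        refine (abs_real_inner_le_norm _ _).trans ?_
        gcongr
        exact (S.le_opNorm _).trans (by gcongr; exact hrn.trans (by gcongr))
      have := (abs_le.mp b1).1
      have := (abs_le.mp b2).1
      have := (abs_le.mp b3).1
      rw [hC2]; linarith
    have hsq : ‖L h + r‖ ^ 2 ≤ C1 ^ 2 * ‖h‖ ^ 2 := by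
      rw [← mul_pow]; gcongr
    have e1 : σ * R = inner ℝ (S (L h)) (L h) - σ * η * ‖h‖ ^ 2 := by
      rw [hR, hQq]; field_simp
    have h2 : η' * ‖L h + r‖ ^ 2 ≤ σ * η / 4 * ‖h‖ ^ 2 := by
      calc η' * ‖L h + r‖ ^ 2 ≤ η' * (C1 ^ 2 * ‖h‖ ^ 2) := by gcongr
        _ = η' * C1 ^ 2 * ‖h‖ ^ 2 := by ring
        _ ≤ _ := by gcongr
    have h3 : C2 * ‖h‖ ^ 3 ≤ σ * η / 4 * ‖h‖ ^ 2 := by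
      have : (C2 + 1) * ‖h‖ ≤ σ * η / 4 := by
        rw [lt_div_iff₀ (by positivity)] at hy2; linarith
      calc C2 * ‖h‖ ^ 3 ≤ ((C2 + 1) * ‖h‖) * ‖h‖ ^ 2 := by
            have := pow_pos hhp 3
            linear_combination this
        _ ≤ _ := by gcongr
    have h4 : 0 < σ * η * ‖h‖ ^ 2 := by positivity
    rw [eP] at hj1
    linarith
  have h2 : ∀ᶠ y in 𝓝[Ω] x, u x - φ x ≤ u y - φ y := by
    filter_upwards [this.filter_mono nhdsWithin_le_nhds] with y hy
    rw [hφx]; linarith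
  exact h2

theorem visc_V {Ω B : Set (EN N)} {u H : EN N → ℝ} {X P : WN N} {S : WN N →L[ℝ] WN N}
    (hu : IsViscositySupersol Ω H u) (hBΩ : B ⊆ Ω)
    (hX : X ∈ epi B u) (hXi : X.fst ∈ interior B) (hP : P.snd < 0)
    (hj : SetJet (epi B u) X P S) {ι : Type*} [Fintype ι] (g : ι → WN N)
    (hg : ∀ a, ∑ j, inner ℝ (g j) a ^ 2 = ‖a‖ ^ 2 - inner ℝ (‖P‖⁻¹ • P) a ^ 2) :
    ∑ j, inner ℝ (S (g j)) (g j) ≤ 1 / 2 * ‖P‖ * (N * H X.fst) := by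
  set σ := -P.snd with hσ
  have hσ0 : 0 < σ := by rw [hσ]; linarith
  set p : EN N := σ⁻¹ • P.fst with hp
  set L := liftL p with hL
  set s0 := 1 + ‖p‖ ^ 2 with hs0
  have hs0p : 0 < s0 := by positivity
  set s := Real.sqrt s0 with hs
  have hsp : 0 < s := Real.sqrt_pos.mpr hs0p
  have hss : s ^ 2 = s0 := Real.sq_sqrt hs0p.le
  have hPf : P.fst = σ • p := by rw [hp, smul_smul, mul_inv_cancel₀ hσ0.ne', one_smul]
  have hPs : P.snd = -σ := by rw [hσ]; ring
  have hPn2 : ‖P‖ ^ 2 = σ ^ 2 * s0 := by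
    rw [normW_sq, hPf, hPs, norm_smul, mul_pow, Real.norm_eq_abs, sq_abs]; ring
  have hPn : ‖P‖ = σ * s := by
    have : ‖P‖ ^ 2 = (σ * s) ^ 2 := by rw [hPn2, mul_pow, hss]
    exact (pow_left_inj₀ (norm_nonneg _) (by positivity) two_ne_zero).mp this
  have hPn0 : 0 < ‖P‖ := by rw [hPn]; positivity
  have htr := trace_eq S (fun _ : ι => (1:ℝ)) g
    (fun o : Option (Fin N) => o.elim (-s0⁻¹) (fun _ => 1))
    (fun o : Option (Fin N) => L (o.elim p (fun i => EuclideanSpace.single i 1))) (by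
      intro a
      rw [Fintype.sum_option]
      simp only [one_mul, Option.elim]
      rw [hg]
      have e1 : ∀ i, inner ℝ (L (EuclideanSpace.single i 1)) a = a.fst i + p i * a.snd := by
        intro i
        rw [innerW, hL, liftL_apply, mkW_fst, mkW_snd]
        simp [EuclideanSpace.inner_single_left, EuclideanSpace.inner_single_right]
      have e2 : inner ℝ (L p) a = inner ℝ p a.fst + ‖p‖ ^ 2 * a.snd := by
        rw [innerW, hL, liftL_apply, mkW_fst, mkW_snd, real_inner_self_eq_norm_sq]
      have e3 : inner ℝ (‖P‖⁻¹ • P) a = s⁻¹ * (inner ℝ p a.fst - a.snd) := by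
        rw [inner_smul_left, innerW, hPf, hPs, inner_smul_left, hPn]
        simp only [conj_trivial]
        field_simp
        ring
      have e4 : ∑ i, (a.fst i + p i * a.snd) ^ 2 = ‖a.fst‖ ^ 2 + 2 * a.snd * inner ℝ p a.fst
          + a.snd ^ 2 * ‖p‖ ^ 2 := by
        have n1 : ‖a.fst‖ ^ 2 = ∑ i, a.fst i ^ 2 := by
          rw [EuclideanSpace.norm_sq_eq]; simp
        have n2 : ‖p‖ ^ 2 = ∑ i, p i ^ 2 := by
          rw [EuclideanSpace.norm_sq_eq]; simp
        have n3 : inner ℝ p a.fst = ∑ i, p i * a.fst i := by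
          rw [PiLp.inner_apply]; simp [mul_comm]
        rw [n1, n2, n3, Finset.mul_sum, Finset.mul_sum, ← Finset.sum_add_distrib,
          ← Finset.sum_add_distrib]
        exact Finset.sum_congr rfl fun i _ => by ring
      simp only [e1, e2, e3, e4, normW_sq]
      rw [mul_pow, inv_pow, hss]
      have : ‖p‖ ^ 2 = s0 - 1 := by rw [hs0]; ring
      rw [this]
      field_simp
      ring)
  rw [Fintype.sum_option] at htr
  simp only [one_mul, Option.elim] at htr
  rw [htr]
  set D := -s0⁻¹ * inner ℝ (S (L p)) (L p) +
    ∑ i, inner ℝ (S (L (EuclideanSpace.single i 1))) (L (EuclideanSpace.single i 1)) with hD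
  have key : ∀ η > 0, 2 / s * (σ⁻¹ * D - η * (N - ‖p‖ ^ 2 / s0)) ≤ N * H X.fst := by
    intro η hη
    have h := visc_V0 hu hBΩ hX hXi hP hj hη
    rw [mcOp_quadT] at h
    rw [← hσ, ← hp, ← hs0, ← hs, ← hL] at h
    have hQq : ∀ h, inner ℝ ((σ⁻¹ • (ContinuousLinearMap.adjoint L).comp (S.comp L) -
    η • ContinuousLinearMap.id ℝ (EN N)) h) h = σ⁻¹ * inner ℝ (S (L h)) (L h) - η * ‖h‖ ^ 2 := by
      intro h
      simp [inner_sub_left, inner_smul_left, ContinuousLinearMap.adjoint_inner_left]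
    simp only [hQq, Finset.sum_sub_distrib, ← Finset.mul_sum] at h
    have e : ∑ i : Fin N, ‖EuclideanSpace.single i (1:ℝ)‖ ^ 2 = N := by simp
    rw [e] at h
    refine le_trans (le_of_eq ?_) h
    rw [hD]; congr 1; field_simp; ring
  have lim : Tendsto (fun η : ℝ => 2 / s * (σ⁻¹ * D - η * (N - ‖p‖ ^ 2 / s0))) (𝓝[>] 0)
      (𝓝 (2 / s * (σ⁻¹ * D - 0 * (N - ‖p‖ ^ 2 / s0)))) := by
    have : Continuous (fun η : ℝ => 2 / s * (σ⁻¹ * D - η * (N - ‖p‖ ^ 2 / s0))) := by fun_prop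
    exact (this.tendsto 0).mono_left nhdsWithin_le_nhds
  have fin := le_of_tendsto lim (by filter_upwards [self_mem_nhdsWithin] with η hη using key η hη)
  have e : 2 / s * (σ⁻¹ * D - 0 * (N - ‖p‖ ^ 2 / s0)) = D * (2 / ‖P‖) := by
    rw [hPn]; field_simp; ring
  rw [e] at fin
  calc D = (D * (2 / ‖P‖)) * (1 / 2 * ‖P‖) := by field_simp
    _ ≤ (N * H X.fst) * (1 / 2 * ‖P‖) := by gcongr
    _ = _ := by ring

end Visc

section GTSsec
variable {N : ℕ}

theorem gradient_neg' (φ : EN N → ℝ) (y : EN N) :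
    gradient (fun y => - φ y) y = - gradient φ y := by
  simp only [gradient]
  rw [fderiv_fun_neg, map_neg]

theorem mcOp_neg (φ : EN N → ℝ) (x : EN N) : mcOp (fun y => - φ y) x = - mcOp φ x := by
  simp only [mcOp, gradient_neg', norm_neg]
  rw [← Finset.sum_neg_distrib]
  refine Finset.sum_congr rfl fun i _ => ?_
  have : (fun y => (Real.sqrt (1 + ‖gradient φ y‖ ^ 2))⁻¹ * (-gradient φ y) i)
    = fun y => -((Real.sqrt (1 + ‖gradient φ y‖ ^ 2))⁻¹ * gradient φ y i) := by
    funext y; simp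
  rw [this, fderiv_fun_neg]; rfl

theorem mcOp_add_const (φ : EN N → ℝ) (c : ℝ) (x : EN N) :
    mcOp (fun y => φ y + c) x = mcOp φ x := by
  have : gradient (fun y => φ y + c) = gradient φ := by
    funext y; simp only [gradient]; rw [fderiv_add_const]
  simp only [mcOp, this]

theorem visc_neg {Ω : Set (EN N)} {H v : EN N → ℝ} (hv : IsViscositySubsol Ω H v) :
    IsViscositySupersol Ω (fun x => - H x) (fun x => - v x) := by
  intro φ hφ x hx hmin
  have h := hv (fun y => - φ y) hφ.neg x hx (by
    have h1 : ∀ᶠ y in 𝓝[Ω] x, - v x - φ x ≤ - v y - φ y := hmin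
    have h2 : ∀ᶠ y in 𝓝[Ω] x, v y - - φ y ≤ v x - - φ x := by
      filter_upwards [h1] with y hy; linarith
    exact h2)
  rw [mcOp_neg] at h
  linarith

theorem visc_shift {Ω : Set (EN N)} {H u : EN N → ℝ} (hu : IsViscositySupersol Ω H u) (c : ℝ) :
    IsViscositySupersol Ω H (fun x => u x - c) := by
  intro φ hφ x hx hmin
  have h := hu (fun y => φ y + c) (hφ.add contDiffOn_const) x hx (by
    have h1 : ∀ᶠ y in 𝓝[Ω] x, u x - c - φ x ≤ u y - c - φ y := hmin
    have h2 : ∀ᶠ y in 𝓝[Ω] x, u x - (φ x + c) ≤ u y - (φ y + c) := by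
      filter_upwards [h1] with y hy; linarith
    exact h2)
  rwa [mcOp_add_const] at h

theorem visc_shift' {Ω : Set (EN N)} {H v : EN N → ℝ} (hv : IsViscositySubsol Ω H v) (c : ℝ) :
    IsViscositySubsol Ω H (fun x => v x - c) := by
  intro φ hφ x hx hmin
  have h := hv (fun y => φ y + c) (hφ.add contDiffOn_const) x hx (by
    have h1 : ∀ᶠ y in 𝓝[Ω] x, v y - c - φ y ≤ v x - c - φ x := hmin
    have h2 : ∀ᶠ y in 𝓝[Ω] x, v y - (φ y + c) ≤ v x - (φ x + c) := by
      filter_upwards [h1] with y hy; linarith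
    exact h2)
  rwa [mcOp_add_const] at h

noncomputable def rfx : WN N →L[ℝ] WN N :=
  (WithLp.prodContinuousLinearEquiv 2 ℝ (EN N) ℝ).symm.toContinuousLinearMap.comp
    (fstL.prod (-sndL))

theorem rfx_apply (w : WN N) : rfx w = mkW w.fst (-w.snd) := rfl

theorem rfx_rfx (w : WN N) : rfx (rfx w) = w := by
  rw [rfx_apply, rfx_apply, mkW_fst, mkW_snd, neg_neg, mkW_eta]

theorem inner_rfx (a b : WN N) : inner ℝ (rfx a) b = inner ℝ a (rfx b) := by
  rw [innerW, innerW, rfx_apply, rfx_apply, mkW_fst, mkW_snd, mkW_fst, mkW_snd]; ring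

theorem norm_rfx (a : WN N) : ‖rfx a‖ = ‖a‖ := by
  have : ‖rfx a‖ ^ 2 = ‖a‖ ^ 2 := by
    rw [normW_sq, normW_sq, rfx_apply, mkW_fst, mkW_snd]; ring
  exact (pow_left_inj₀ (norm_nonneg _) (norm_nonneg _) two_ne_zero).mp this

theorem visc_V_sub {Ω B : Set (EN N)} {v H : EN N → ℝ} {Y Q : WN N} {S : WN N →L[ℝ] WN N}
    (hv : IsViscositySubsol Ω H v) (hBΩ : B ⊆ Ω)
    (hY : Y ∈ hypo B v) (hYi : Y.fst ∈ interior B) (hQ : 0 < Q.snd)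
    (hj : SetJet (hypo B v) Y Q S) {ι : Type*} [Fintype ι] (g : ι → WN N)
    (hg : ∀ a, ∑ j, inner ℝ (g j) a ^ 2 = ‖a‖ ^ 2 - inner ℝ (‖Q‖⁻¹ • Q) a ^ 2) :
    ∑ j, inner ℝ (S (g j)) (g j) ≤ - (1 / 2 * ‖Q‖ * (N * H Y.fst)) := by
  have h := visc_V (X := rfx Y) (P := rfx Q) (S := rfx.comp (S.comp rfx)) (visc_neg hv) hBΩ
    (by
      rw [rfx_apply]
      exact ⟨hY.1, neg_le_neg hY.2⟩)
    (by rw [rfx_apply]; exact hYi)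
    (by rw [rfx_apply, mkW_snd]; linarith)
    (by
      intro η hη
      have c : Tendsto (fun w : WN N => rfx w) (𝓝 (rfx Y)) (𝓝 Y) := by
        have := (rfx (N := N)).continuous.tendsto (rfx Y)
        rwa [rfx_rfx] at this
      filter_upwards [c.eventually (hj η hη)] with w hw hwF
      have := hw (by
        rw [rfx_apply]
        have h2 := hwF.2
        exact ⟨hwF.1, by rw [mkW_fst, mkW_snd]; linarith⟩)
      have e : rfx w - Y = rfx (w - rfx Y) := by rw [map_sub, rfx_rfx]
      rw [e, norm_rfx] at this
      simp only [ContinuousLinearMap.comp_apply]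
      rw [inner_rfx, inner_rfx]; exact this)
    (fun j => rfx (g j))
    (by
      intro a
      simp only [inner_rfx]
      rw [hg, norm_rfx, norm_rfx, ← map_smul, inner_rfx])
  rw [norm_rfx] at h
  have e : ∀ j, inner ℝ ((rfx.comp (S.comp rfx)) (rfx (g j))) (rfx (g j))
      = inner ℝ (S (g j)) (g j) := by
    intro j
    simp only [ContinuousLinearMap.comp_apply]
    rw [inner_rfx, rfx_rfx]
  simp only [e] at h
  have e2 : (rfx Y).fst = Y.fst := by rw [rfx_apply, mkW_fst]
  rw [e2] at h
  linarith

abbrev IN (N : ℕ) := Fin (Module.finrank ℝ (WN N))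

noncomputable def frk (n : WN N) (j : IN N) : WN N :=
  stdOrthonormalBasis ℝ (WN N) j - (inner ℝ (stdOrthonormalBasis ℝ (WN N) j) n : ℝ) • n
noncomputable def frc (m n : WN N) (j : IN N) : ℝ :=
  inner ℝ (frk n j) m / (1 + inner ℝ m n)
noncomputable def frh (m n : WN N) (j : IN N) : WN N :=
  frk n j - frc m n j • (m + n)

theorem frk_sum (n : WN N) (hn : ‖n‖ = 1) (a : WN N) :
    ∑ j, inner ℝ (frk n j) a ^ 2 = ‖a‖ ^ 2 - inner ℝ n a ^ 2 := by
  have e : ∀ j, inner ℝ (frk n j) a ^ 2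
      = ‖(inner ℝ (stdOrthonormalBasis ℝ (WN N) j) (a - (inner ℝ n a : ℝ) • n) : ℝ)‖ ^ 2 := by
    intro j
    rw [Real.norm_eq_abs, sq_abs, frk, inner_sub_left, inner_sub_right, inner_smul_left,
      inner_smul_right]
    simp only [conj_trivial]; ring
  simp only [e]
  rw [OrthonormalBasis.sum_sq_norm_inner_right]
  rw [norm_sub_sq_real, inner_smul_right, norm_smul, mul_pow, hn, Real.norm_eq_abs, sq_abs,
    real_inner_comm]
  ring

theorem fr_real (A ma na c t : ℝ) (h : t * (1 + c) = ma + na) :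
    (A - 2 * (t * ma) + t ^ 2) - (na - t * c) ^ 2 = A - ma ^ 2 := by
  linear_combination (t * (1 - c) + na - ma) * h

theorem frh_sum (m n : WN N) (hm : ‖m‖ = 1) (hn : ‖n‖ = 1) (hc : 0 < 1 + inner ℝ m n) (a : WN N) :
    ∑ j, inner ℝ (frh m n j) a ^ 2 = ‖a‖ ^ 2 - inner ℝ m a ^ 2 := by
  set t := (inner ℝ m a + inner ℝ n a) / (1 + inner ℝ m n) with ht
  have e : ∀ j, inner ℝ (frh m n j) a ^ 2 = inner ℝ (frk n j) (a - t • m) ^ 2 := by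
    intro j
    rw [frh, inner_sub_left, inner_sub_right, inner_smul_left, inner_smul_right, frc,
      inner_add_left, ht]
    simp only [conj_trivial]
    ring
  simp only [e]
  rw [frk_sum n hn, norm_sub_sq_real, inner_smul_right, norm_smul, mul_pow, hm, Real.norm_eq_abs,
    sq_abs, inner_sub_right, inner_smul_right, real_inner_comm m a]
  rw [← fr_real (‖a‖^2) (inner ℝ m a) (inner ℝ n a) (inner ℝ m n) t
    (by rw [ht]; field_simp), real_inner_comm m n]
  ring

theorem frc_sum (m n : WN N) (hm : ‖m‖ = 1) (hn : ‖n‖ = 1) (hc : 0 ≤ inner ℝ m n) :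
    ∑ j, frc m n j ^ 2 ≤ 1 / 2 * ‖m - n‖ ^ 2 := by
  have e : ∀ j, frc m n j ^ 2 = inner ℝ (frk n j) m ^ 2 * ((1 + inner ℝ m n) ^ 2)⁻¹ := by
    intro j; rw [frc, div_pow]; rfl
  simp only [e]
  rw [← Finset.sum_mul, frk_sum n hn, norm_sub_sq_real, hm, hn, real_inner_comm]
  set c : ℝ := inner ℝ m n
  have : 0 < (1 + c) ^ 2 := by positivity
  have hc1 : c ≤ 1 := by
    have := real_inner_le_norm m n
    rw [hm, hn] at this; linarith
  rw [← div_eq_mul_inv, div_le_iff₀ this]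
  nlinarith [mul_nonneg hc (sub_nonneg.mpr hc1), mul_nonneg (mul_nonneg hc hc) (sub_nonneg.mpr hc1)]

theorem frk_tendsto {α : Type*} {l : Filter α} {f : α → WN N} {n : WN N} (hf : Tendsto f l (𝓝 n))
    (j : IN N) : Tendsto (fun a => frk (f a) j) l (𝓝 (frk n j)) := by
  unfold frk
  exact tendsto_const_nhds.sub ((tendsto_const_nhds.inner hf).smul hf)

theorem frh_tendsto {α : Type*} {l : Filter α} {f g : α → WN N} {m n : WN N}
    (hf : Tendsto f l (𝓝 m)) (hg : Tendsto g l (𝓝 n)) (hc : 0 < 1 + inner ℝ m n)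
    (j : IN N) : Tendsto (fun a => frh (f a) (g a) j) l (𝓝 (frh m n j)) := by
  unfold frh frc
  exact (frk_tendsto hg j).sub ((((frk_tendsto hg j).inner hf).div
    (tendsto_const_nhds.add (hf.inner hg)) hc.ne').smul (hf.add hg))

theorem mkZ_tendsto {α W : Type*} [NormedAddCommGroup W] [InnerProductSpace ℝ W]
    {l : Filter α} {f g : α → W} {m n : W}
    (hf : Tendsto f l (𝓝 m)) (hg : Tendsto g l (𝓝 n)) :
    Tendsto (fun a => mkZ (f a) (g a)) l (𝓝 (mkZ m n)) := by
  have e : ∀ a b : W, mkZ a b = i1 a + i2 b := by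
    intro a b; rw [i1_apply, i2_apply, mkZ_add]; simp
  simp only [e]
  exact ((i1.continuous.tendsto _).comp hf).add ((i2.continuous.tendsto _).comp hg)

theorem GTS {Ω B : Set (EN N)} {u v H : EN N → ℝ} {xh yh : EN N} {lX lY : WN N}
    (hu : IsViscositySupersol Ω H u) (hv : IsViscositySubsol Ω H v) (hBΩ : B ⊆ Ω)
    (hHx : ContinuousAt H xh) (hHy : ContinuousAt H yh)
    (hxi : xh ∈ interior B) (hyi : yh ∈ interior B)
    (hF : IsClosed (epi B u)) (hE : IsClosed (hypo B v))
    (T : WithLp 2 (WN N × WN N) →L[ℝ] WithLp 2 (WN N × WN N))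
    (hyp : ∀ ε > 0, ∃ ρ > 0, ∀ X ∈ epi B u, ∀ Y ∈ hypo B v, ‖X - mkW xh (u xh)‖ ≤ ρ →
      ‖Y - mkW yh (v yh)‖ ≤ ρ →
      -ε * (‖X - mkW xh (u xh)‖ ^ 2 + ‖Y - mkW yh (v yh)‖ ^ 2) ≤
        inner ℝ lX (X - mkW xh (u xh)) + inner ℝ lY (Y - mkW yh (v yh)) +
        inner ℝ (T (mkZ (X - mkW xh (u xh)) (Y - mkW yh (v yh))))
          (mkZ (X - mkW xh (u xh)) (Y - mkW yh (v yh))))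
    (hlX : 0 < lX.snd) (hlY : lY.snd < 0) {m n : WN N} (hm : lX = ‖lX‖ • m) (hn : lY = -(‖lY‖ • n))
    (hc : 0 ≤ inner ℝ m n) :
    ‖m‖ = 1 ∧ ‖n‖ = 1 ∧
    (∀ a, ∑ j, inner ℝ (frh m n j) a ^ 2 = ‖a‖ ^ 2 - inner ℝ m a ^ 2) ∧
    (∀ a, ∑ j, inner ℝ (frk n j) a ^ 2 = ‖a‖ ^ 2 - inner ℝ n a ^ 2) ∧
    ∑ j, frc m n j ^ 2 ≤ 1 / 2 * ‖m - n‖ ^ 2 ∧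
    N / 2 * (‖lY‖ * H yh - ‖lX‖ * H xh) ≤
      ∑ j, inner ℝ (T (mkZ (frh m n j) (frk n j))) (mkZ (frh m n j) (frk n j)) := by
  have hlX0 : 0 < ‖lX‖ := norm_pos_iff.mpr (by rintro rfl; exact lt_irrefl _ hlX)
  have hlY0 : 0 < ‖lY‖ := norm_pos_iff.mpr (by rintro rfl; exact lt_irrefl _ hlY)
  have hm1 : ‖m‖ = 1 := by
    have := congrArg norm hm
    rw [norm_smul, norm_norm] at this
    have : ‖lX‖ * (‖m‖ - 1) = 0 := by linarith
    rcases mul_eq_zero.mp this with h | h <;> linarith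
  have hn1 : ‖n‖ = 1 := by
    have := congrArg norm hn
    rw [norm_neg, norm_smul, norm_norm] at this
    have : ‖lY‖ * (‖n‖ - 1) = 0 := by linarith
    rcases mul_eq_zero.mp this with h | h <;> linarith
  have hc1 : 0 < 1 + inner ℝ m n := by linarith
  refine ⟨hm1, hn1, frh_sum m n hm1 hn1 hc1, frk_sum n hn1, frc_sum m n hm1 hn1 hc, ?_⟩
  have hem : m = ‖lX‖⁻¹ • lX := by
    conv_rhs => rw [hm]
    rw [norm_smul, norm_norm, hm1, mul_one, smul_smul, inv_mul_cancel₀ hlX0.ne', one_smul]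
  have hen : n = -(‖lY‖⁻¹ • lY) := by
    conv_rhs => rw [hn]
    rw [norm_neg, norm_smul, norm_norm, hn1, mul_one, smul_neg, neg_neg, smul_smul,
      inv_mul_cancel₀ hlY0.ne', one_smul]
  have hXm : mkW xh (u xh) ∈ epi B u := ⟨interior_subset hxi, le_refl _⟩
  have hYm : mkW yh (v yh) ∈ hypo B v := ⟨interior_subset hyi, le_refl _⟩
  have hseq : ∀ k : ℕ, (0:ℝ) < 1 / ((k:ℝ) + 1) := fun k => by positivity
  have hTS := fun k : ℕ => TS hF hE hXm hYm T hyp (hseq k)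
  choose Xs hXs Ys hYs P Q SX SY h1 h2 h3 h4 h5 h6 h7 using hTS
  have hlim := tendsto_one_div_add_atTop_nhds_zero_nat (𝕜 := ℝ)
  have tX : Tendsto Xs atTop (𝓝 (mkW xh (u xh))) :=
    tendsto_iff_norm_sub_tendsto_zero.mpr (squeeze_zero (fun _ => norm_nonneg _)
      (fun k => (h1 k).le) hlim)
  have tY : Tendsto Ys atTop (𝓝 (mkW yh (v yh))) :=
    tendsto_iff_norm_sub_tendsto_zero.mpr (squeeze_zero (fun _ => norm_nonneg _)
      (fun k => (h2 k).le) hlim)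
  have tP : Tendsto P atTop (𝓝 (-lX)) :=
    tendsto_iff_norm_sub_tendsto_zero.mpr (squeeze_zero (fun _ => norm_nonneg _)
      (fun k => by rw [sub_neg_eq_add]; exact (h3 k).le) hlim)
  have tQ : Tendsto Q atTop (𝓝 (-lY)) :=
    tendsto_iff_norm_sub_tendsto_zero.mpr (squeeze_zero (fun _ => norm_nonneg _)
      (fun k => by rw [sub_neg_eq_add]; exact (h4 k).le) hlim)
  have tx : Tendsto (fun k => (Xs k).fst) atTop (𝓝 xh) :=
    ((fstL (N := N)).continuous.tendsto _).comp tX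
  have ty : Tendsto (fun k => (Ys k).fst) atTop (𝓝 yh) :=
    ((fstL (N := N)).continuous.tendsto _).comp tY
  have tPs : Tendsto (fun k => (P k).snd) atTop (𝓝 (-lX.snd)) :=
    ((sndL (N := N)).continuous.tendsto _).comp tP
  have tQs : Tendsto (fun k => (Q k).snd) atTop (𝓝 (-lY.snd)) :=
    ((sndL (N := N)).continuous.tendsto _).comp tQ
  have tPn : Tendsto (fun k => ‖P k‖) atTop (𝓝 ‖lX‖) := by
    have := tP.norm; rwa [norm_neg] at this
  have tQn : Tendsto (fun k => ‖Q k‖) atTop (𝓝 ‖lY‖) := by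
    have := tQ.norm; rwa [norm_neg] at this
  have tm : Tendsto (fun k => -(‖P k‖⁻¹ • P k)) atTop (𝓝 m) := by
    have := ((tPn.inv₀ hlX0.ne').smul tP).neg
    rwa [smul_neg, neg_neg, ← hem] at this
  have tn : Tendsto (fun k => ‖Q k‖⁻¹ • Q k) atTop (𝓝 n) := by
    have := ((tQn.inv₀ hlY0.ne').smul tQ)
    rwa [smul_neg, ← hen] at this
  set m' := fun k => -(‖P k‖⁻¹ • P k) with hm'
  set n' := fun k => ‖Q k‖⁻¹ • Q k with hn'
  have tc : Tendsto (fun k : ℕ => (1:ℝ) + inner ℝ (m' k) (n' k)) atTop (𝓝 (1 + inner ℝ m n)) :=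
    tendsto_const_nhds.add (tm.inner tn)
  have th := fun j => frh_tendsto tm tn hc1 j
  have tk := fun j => frk_tendsto tn j
  have tz := fun j => mkZ_tendsto (th j) (tk j)
  have tq : Tendsto (fun k => ∑ j, inner ℝ (T (mkZ (frh (m' k) (n' k) j) (frk (n' k) j)))
      (mkZ (frh (m' k) (n' k) j) (frk (n' k) j))) atTop
      (𝓝 (∑ j, inner ℝ (T (mkZ (frh m n j) (frk n j))) (mkZ (frh m n j) (frk n j)))) :=
    tendsto_finsetSum _ fun j _ => ((T.continuous.tendsto _).comp (tz j)).inner (tz j)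
  have tl : Tendsto (fun k : ℕ => ∑ j, -(1 / ((k:ℝ) + 1)) * (‖frh (m' k) (n' k) j‖ ^ 2 +
      ‖frk (n' k) j‖ ^ 2)) atTop (𝓝 (∑ j, -0 * (‖frh m n j‖ ^ 2 + ‖frk n j‖ ^ 2))) :=
    tendsto_finsetSum _ fun j _ => hlim.neg.mul (((th j).norm.pow 2).add ((tk j).norm.pow 2))
  have tH1 : Tendsto (fun k => 1 / 2 * ‖P k‖ * (N * H (Xs k).fst)) atTop
      (𝓝 (1 / 2 * ‖lX‖ * (N * H xh))) :=
    (tendsto_const_nhds.mul tPn).mul (tendsto_const_nhds.mul (hHx.tendsto.comp tx))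
  have tH2 : Tendsto (fun k => 1 / 2 * ‖Q k‖ * (N * H (Ys k).fst)) atTop
      (𝓝 (1 / 2 * ‖lY‖ * (N * H yh))) :=
    (tendsto_const_nhds.mul tQn).mul (tendsto_const_nhds.mul (hHy.tendsto.comp ty))
  have hle := le_of_tendsto_of_tendsto tl ((tH1.sub tH2).add tq) (by
    filter_upwards [tx.eventually (isOpen_interior.mem_nhds hxi),
      ty.eventually (isOpen_interior.mem_nhds hyi), tPs.eventually_lt_const (neg_lt_zero.mpr hlX),
      tQs.eventually_const_lt (neg_pos.mpr hlY), tc.eventually_const_lt hc1] with k a1 a2 a3 a4 a5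
    have hP0 : ‖P k‖ ≠ 0 := by
      rw [norm_ne_zero_iff]; intro h0; rw [h0] at a3; exact lt_irrefl _ a3
    have hQ0 : ‖Q k‖ ≠ 0 := by
      rw [norm_ne_zero_iff]; intro h0; rw [h0] at a4; exact lt_irrefl _ a4
    have hm1' : ‖m' k‖ = 1 := by
      rw [hm']; simp only [norm_neg]; rw [norm_smul, norm_inv, norm_norm, inv_mul_cancel₀ hP0]
    have hn1' : ‖n' k‖ = 1 := by
      rw [hn']; simp only; rw [norm_smul, norm_inv, norm_norm, inv_mul_cancel₀ hQ0]
    have b1 := visc_V hu hBΩ (hXs k) a1 a3 (h5 k) (frh (m' k) (n' k)) (by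
      intro a
      rw [frh_sum _ _ hm1' hn1' a5]
      have : inner ℝ (m' k) a ^ 2 = inner ℝ (‖P k‖⁻¹ • P k) a ^ 2 := by
        rw [hm']; simp only [inner_neg_left]; ring
      rw [this])
    have b2 := visc_V_sub hv hBΩ (hYs k) a2 a4 (h6 k) (frk (n' k)) (frk_sum _ hn1')
    have b3 := Finset.sum_le_sum (s := Finset.univ) fun j _ =>
      h7 k (frh (m' k) (n' k) j) (frk (n' k) j)
    rw [Finset.sum_add_distrib, Finset.sum_add_distrib] at b3
    linarith)
  simp only [neg_zero, zero_mul, Finset.sum_const_zero] at hle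
  linarith

end GTSsec

section T2sec
open Asymptotics
variable {V : Type*} [NormedAddCommGroup V] [InnerProductSpace ℝ V]

def IsQ (q : V → ℝ) : Prop := ∃ T : V →L[ℝ] V, ∀ z, q z = inner ℝ (T z) z

theorem IsQ.add {q q' : V → ℝ} (h : IsQ q) (h' : IsQ q') : IsQ (fun z => q z + q' z) := by
  obtain ⟨T, hT⟩ := h
  obtain ⟨T', hT'⟩ := h'
  exact ⟨T + T', fun z => by simp only []; rw [hT, hT', ContinuousLinearMap.add_apply, inner_add_left]⟩

theorem IsQ.cmul {q : V → ℝ} (h : IsQ q) (c : ℝ) : IsQ (fun z => c * q z) := by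
  obtain ⟨T, hT⟩ := h
  exact ⟨c • T, fun z => by
    simp only []; rw [hT, ContinuousLinearMap.smul_apply, inner_smul_left]; simp⟩

theorem IsQ.zero : IsQ (fun _ : V => (0:ℝ)) := ⟨0, fun z => by simp⟩

theorem IsQ.innersq (l : V) : IsQ (fun z => inner ℝ l z ^ 2) :=
  ⟨(innerSL ℝ l).smulRight l, fun z => by
    rw [ContinuousLinearMap.smulRight_apply, inner_smul_left]; simp [sq]⟩

theorem IsQ.normsq [CompleteSpace V] {U : Type*} [NormedAddCommGroup U] [InnerProductSpace ℝ U]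
    [CompleteSpace U] (L : V →L[ℝ] U) : IsQ (fun z => ‖L z‖ ^ 2) :=
  ⟨(ContinuousLinearMap.adjoint L).comp L, fun z => by
    rw [ContinuousLinearMap.comp_apply, ContinuousLinearMap.adjoint_inner_left,
      real_inner_self_eq_norm_sq]⟩

theorem IsQ.bigO {q : V → ℝ} (h : IsQ q) : q =O[𝓝 0] (fun z => ‖z‖ ^ 2) := by
  obtain ⟨T, hT⟩ := h
  refine IsBigO.of_bound ‖T‖ (Eventually.of_forall fun z => ?_)
  rw [hT, norm_pow, norm_norm]
  calc ‖inner ℝ (T z) z‖ ≤ ‖T z‖ * ‖z‖ := norm_inner_le_norm _ _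
    _ ≤ (‖T‖ * ‖z‖) * ‖z‖ := by gcongr; exact T.le_opNorm _
    _ = _ := by ring

theorem inner_bigO (l : V) : (fun z => inner ℝ l z : V → ℝ) =O[𝓝 0] (fun z => ‖z‖) := by
  refine IsBigO.of_bound ‖l‖ (Eventually.of_forall fun z => ?_)
  rw [norm_norm]; exact norm_inner_le_norm _ _

theorem cube_littleO : (fun z : V => ‖z‖ ^ 3) =o[𝓝 0] (fun z => ‖z‖ ^ 2) := by
  have h1 : (fun z : V => ‖z‖) =o[𝓝 0] (fun _ => (1:ℝ)) := by
    rw [isLittleO_one_iff]; simpa using (continuous_norm (E := V)).tendsto 0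
  have := h1.mul_isBigO (isBigO_refl (fun z : V => ‖z‖ ^ 2) (𝓝 0))
  refine (this.congr (fun z => by ring) (fun z => by ring))

def T2 (f : V → ℝ) (c : ℝ) (l : V) (q : V → ℝ) : Prop :=
  IsQ q ∧ (fun h => f h - c - inner ℝ l h - q h) =o[𝓝 0] (fun h => ‖h‖ ^ 2)

theorem T2.quad (c : ℝ) (l : V) {q : V → ℝ} (hq : IsQ q) :
    T2 (fun h => c + inner ℝ l h + q h) c l q :=
  ⟨hq, by
    have : (fun h : V => c + inner ℝ l h + q h - c - inner ℝ l h - q h) = fun _ => 0 := by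
      funext h; ring
    rw [this]; exact isLittleO_zero _ _⟩

theorem T2.add {f g : V → ℝ} {c d : ℝ} {l k : V} {q r : V → ℝ} (h : T2 f c l q) (h' : T2 g d k r) :
    T2 (fun z => f z + g z) (c + d) (l + k) (fun z => q z + r z) :=
  ⟨h.1.add h'.1, (h.2.add h'.2).congr_left fun z => by rw [inner_add_left]; ring⟩

theorem T2.cmul {f : V → ℝ} {c : ℝ} {l : V} {q : V → ℝ} (h : T2 f c l q) (a : ℝ) :
    T2 (fun z => a * f z) (a * c) (a • l) (fun z => a * q z) :=
  ⟨h.1.cmul a, (h.2.const_mul_left a).congr_left fun z => by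
    rw [inner_smul_left]; simp only [conj_trivial]; ring⟩

theorem log_taylor : (fun w : ℝ => Real.log (1 + w) - w + w ^ 2 / 2) =O[𝓝 0] (fun w => |w| ^ 3) := by
  refine IsBigO.of_bound 2 ?_
  filter_upwards [ball_mem_nhds (0:ℝ) (show (0:ℝ) < 1 / 2 by norm_num)] with w hw
  rw [mem_ball, dist_zero_right, Real.norm_eq_abs] at hw
  have h := Real.abs_log_sub_add_sum_range_le (x := -w) (by rw [abs_neg]; linarith) 2
  rw [Finset.sum_range_succ, Finset.sum_range_succ, Finset.sum_range_zero, abs_neg] at h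
  have e : Real.log (1 + w) - w + w ^ 2 / 2 = 0 + (-w) ^ (0 + 1) / (((0:ℕ):ℝ) + 1)
      + (-w) ^ (1 + 1) / (((1:ℕ):ℝ) + 1) + Real.log (1 - -w) := by
    push_cast; ring_nf
  rw [e, Real.norm_eq_abs]
  refine h.trans ?_
  rw [div_le_iff₀ (by linarith), norm_pow, Real.norm_eq_abs, abs_abs]
  have h3 := mul_nonneg (pow_nonneg (abs_nonneg w) 3) (show 0 ≤ 1 - 2 * |w| by linarith)
  linear_combination h3

theorem T2.log {c : ℝ} (hc : 0 < c) (l : V) {q : V → ℝ} (hq : IsQ q) :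
    T2 (fun h => Real.log (c + inner ℝ l h + q h)) (Real.log c) (c⁻¹ • l)
      (fun h => c⁻¹ * q h + (-(1 / 2) * c⁻¹ ^ 2) * inner ℝ l h ^ 2) := by
  refine ⟨(hq.cmul _).add ((IsQ.innersq l).cmul _), ?_⟩
  set w : V → ℝ := fun h => c⁻¹ * (inner ℝ l h + q h) with hw
  have hqO : q =O[𝓝 0] (fun z => ‖z‖) := hq.bigO.trans (by
    refine IsBigO.of_bound 1 ?_
    filter_upwards [ball_mem_nhds (0:V) one_pos] with z hz
    rw [mem_ball, dist_zero_right] at hz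
    rw [norm_pow, norm_norm]; nlinarith [norm_nonneg z])
  have hwO : w =O[𝓝 0] (fun z => ‖z‖) := ((inner_bigO l).add hqO).const_mul_left _
  have hnt : Tendsto (fun z : V => ‖z‖) (𝓝 0) (𝓝 0) := by
    simpa using (continuous_norm (E := V)).tendsto 0
  have hwt : Tendsto w (𝓝 0) (𝓝 0) := hwO.trans_tendsto hnt
  have h1 : (fun h => Real.log (1 + w h) - w h + w h ^ 2 / 2) =o[𝓝 0] (fun h => ‖h‖ ^ 2) := by
    have a1 : (fun h => Real.log (1 + w h) - w h + w h ^ 2 / 2) =O[𝓝 0] (fun h => |w h| ^ 3) :=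
      log_taylor.comp_tendsto hwt
    have a2 : (fun h => |w h| ^ 3) =O[𝓝 0] (fun h => ‖h‖ ^ 3) := by
      have := hwO.norm_left.pow 3
      exact this
    exact (a1.trans a2).trans_isLittleO cube_littleO
  have h2 : (fun h => c⁻¹ ^ 2 * (-(1 / 2)) * (2 * (inner ℝ l h * q h) + q h * q h))
      =o[𝓝 0] (fun h => ‖h‖ ^ 2) := by
    have b1 : (fun h => inner ℝ l h * q h) =O[𝓝 0] (fun h => ‖h‖ ^ 3) :=
      ((inner_bigO l).mul hq.bigO).congr_right (fun z => by ring)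
    have b2 : (fun h => q h * q h) =O[𝓝 0] (fun h => ‖h‖ ^ 3) :=
      (hqO.mul hq.bigO).congr_right (fun z => by ring)
    exact (((b1.const_mul_left 2).add b2).const_mul_left _).trans_isLittleO cube_littleO
  have hev : ∀ᶠ h in 𝓝 (0:V), 0 < 1 + w h := by
    have : Tendsto (fun h => 1 + w h) (𝓝 0) (𝓝 (1 + 0)) := tendsto_const_nhds.add hwt
    exact this.eventually_const_lt (by norm_num)
  refine (h1.add h2).congr' ?_ EventuallyEq.rfl
  filter_upwards [hev] with h hh
  have : c + inner ℝ l h + q h = c * (1 + w h) := by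
    rw [hw]; simp only; field_simp; ring
  rw [this, Real.log_mul hc.ne' hh.ne', inner_smul_left]
  simp only [conj_trivial, hw]
  ring

theorem T2.congr {f g : V → ℝ} {c d : ℝ} {l k : V} {q r : V → ℝ} (h : T2 f c l q)
    (hf : ∀ z, f z = g z) (hc : c = d) (hl : l = k) (hq : ∀ z, q z = r z) : T2 g d k r := by
  have e1 : f = g := funext hf
  have e2 : q = r := funext hq
  rw [← e1, ← e2, ← hc, ← hl]; exact h

end T2sec

section G2
variable {N : ℕ}

theorem norm_unit_sub {b w : WN N} (hb : 1 ≤ ‖b‖) (hw : ‖w‖ ≤ 1 / 2) :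
    ‖‖b + w‖⁻¹ • (b + w) - ‖b‖⁻¹ • b‖ ≤ 2 * ‖w‖ := by
  set a := b + w with ha
  have ha0 : 0 < ‖a‖ := by
    have := norm_sub_norm_le b (-w)
    rw [sub_neg_eq_add, norm_neg] at this
    linarith
  have hb0 : 0 < ‖b‖ := by linarith
  have e : ‖a‖⁻¹ • a - ‖b‖⁻¹ • b = ‖b‖⁻¹ • w + (‖b‖⁻¹ * (‖b‖ - ‖a‖)) • (‖a‖⁻¹ • a) := by
    have : w = a - b := by rw [ha]; abel
    rw [this, mul_sub, sub_smul, inv_mul_cancel₀ hb0.ne', one_smul, smul_smul,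
      mul_assoc, mul_inv_cancel₀ ha0.ne', mul_one, smul_sub]
    abel
  rw [e]
  have h1 : |‖b‖ - ‖a‖| ≤ ‖w‖ := by
    have := abs_norm_sub_norm_le b a
    rwa [show b - a = -w by rw [ha]; abel, norm_neg] at this
  have hbi : ‖b‖⁻¹ ≤ 1 := inv_le_one_of_one_le₀ hb
  have hbi0 : 0 ≤ ‖b‖⁻¹ := by positivity
  have hu : ‖‖a‖⁻¹ • a‖ = 1 := by rw [norm_smul, norm_inv, norm_norm, inv_mul_cancel₀ ha0.ne']
  calc _ ≤ ‖‖b‖⁻¹ • w‖ + ‖(‖b‖⁻¹ * (‖b‖ - ‖a‖)) • (‖a‖⁻¹ • a)‖ := norm_add_le _ _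
    _ = ‖b‖⁻¹ * ‖w‖ + ‖b‖⁻¹ * |‖b‖ - ‖a‖| := by
      rw [norm_smul, norm_smul, hu, norm_mul, norm_inv, norm_norm, Real.norm_eq_abs, mul_one]
    _ ≤ 1 * ‖w‖ + 1 * ‖w‖ := by gcongr
    _ = _ := by ring

theorem GTS2 {Ω B : Set (EN N)} {u v H : EN N → ℝ} {xh yh : EN N} {b w : WN N} {H0 : ℝ}
    (hu : IsViscositySupersol Ω H u) (hv : IsViscositySubsol Ω H v) (hBΩ : B ⊆ Ω)
    (hHx : ContinuousAt H xh) (hHy : ContinuousAt H yh)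
    (hxi : xh ∈ interior B) (hyi : yh ∈ interior B)
    (hF : IsClosed (epi B u)) (hE : IsClosed (hypo B v))
    {f q : WithLp 2 (WN N × WN N) → ℝ} (hf : T2 f 0 (mkZ (b + w) (-b)) q)
    (hpos : ∀ᶠ z in 𝓝 (0 : WithLp 2 (WN N × WN N)), mkW xh (u xh) + z.fst ∈ epi B u →
      mkW yh (v yh) + z.snd ∈ hypo B v → 0 ≤ f z)
    (hb : 1 ≤ ‖b‖) (hw : ‖w‖ ≤ 1 / 2) (hb0 : 0 < b.snd) (hbw0 : 0 < (b + w).snd)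
    (hH0 : |H yh| ≤ H0) :
    ∃ (h k : IN N → WN N) (c : IN N → ℝ) (m n : WN N), ‖m‖ = 1 ∧ ‖n‖ = 1 ∧
      m = ‖b + w‖⁻¹ • (b + w) ∧ n = ‖b‖⁻¹ • b ∧ 1 / 2 ≤ ‖b + w‖ ∧
      (∀ a, ∑ j, inner ℝ (h j) a ^ 2 = ‖a‖ ^ 2 - inner ℝ m a ^ 2) ∧
      (∀ a, ∑ j, inner ℝ (k j) a ^ 2 = ‖a‖ ^ 2 - inner ℝ n a ^ 2) ∧
      (∀ j, h j - k j = -(c j • (m + n))) ∧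
      ∑ j, c j ^ 2 ≤ 2 * ‖w‖ ^ 2 ∧
      -(N / 2 * (‖w‖ * H0 + ‖b + w‖ * |H xh - H yh|)) ≤ ∑ j, q (mkZ (h j) (k j)) := by
  obtain ⟨⟨T, hT⟩, hfo⟩ := hf
  have hbn : 0 < ‖b‖ := by linarith
  have hbwn : 1 / 2 ≤ ‖b + w‖ := by
    have := norm_sub_norm_le b (-w)
    rw [sub_neg_eq_add, norm_neg] at this
    linarith
  have hbwn0 : 0 < ‖b + w‖ := by linarith
  have G := GTS hu hv hBΩ hHx hHy hxi hyi hF hE (lX := b + w) (lY := -b) T (by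
    intro ε hε
    have h1 := (hfo.def hε).and hpos
    rw [Metric.eventually_nhds_iff] at h1
    obtain ⟨ρ, hρ, h1⟩ := h1
    refine ⟨ρ / 4, by positivity, fun X hX Y hY hXn hYn => ?_⟩
    set a := X - mkW xh (u xh) with ha
    set a' := Y - mkW yh (v yh) with ha'
    have hz : dist (mkZ a a') 0 < ρ := by
      rw [dist_zero_right]
      apply lt_of_pow_lt_pow_left₀ 2 hρ.le
      rw [mkZ_norm_sq]
      have e1 : ‖a‖ ^ 2 ≤ (ρ / 4) ^ 2 := by gcongr
      have e2 : ‖a'‖ ^ 2 ≤ (ρ / 4) ^ 2 := by gcongr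
      nlinarith
    obtain ⟨h2, h3⟩ := h1 hz
    have h3 := h3 (by
        have : mkW xh (u xh) + (mkZ a a').fst = X := by
          show mkW xh (u xh) + a = X
          rw [ha]; abel
        rw [this]; exact hX) (by
        have : mkW yh (v yh) + (mkZ a a').snd = Y := by
          show mkW yh (v yh) + a' = Y
          rw [ha']; abel
        rw [this]; exact hY)
    rw [Real.norm_eq_abs, norm_pow, norm_norm, mkZ_norm_sq, mkZ_inner] at h2
    have h4 := (abs_le.mp h2).2
    rw [hT] at h4
    linarith) hbw0 (by rw [W_neg_snd]; linarith) (m := ‖b + w‖⁻¹ • (b + w)) (n := ‖b‖⁻¹ • b)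
    (by rw [smul_smul, mul_inv_cancel₀ hbwn0.ne', one_smul])
    (by rw [norm_neg, smul_smul, mul_inv_cancel₀ hbn.ne', one_smul])
    (by
      rw [inner_smul_left, inner_smul_right]
      simp only [conj_trivial]
      have : 0 ≤ inner ℝ (b + w) b := by
        rw [inner_add_left, real_inner_self_eq_norm_sq]
        have h1 := (abs_le.mp (abs_real_inner_le_norm w b)).1
        nlinarith
      positivity)
  obtain ⟨g1, g2, g3, g4, g5, g6⟩ := G
  refine ⟨frh (‖b + w‖⁻¹ • (b + w)) (‖b‖⁻¹ • b), frk (‖b‖⁻¹ • b),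
    frc (‖b + w‖⁻¹ • (b + w)) (‖b‖⁻¹ • b), _, _, g1, g2, rfl, rfl, hbwn, g3, g4, ?_, ?_, ?_⟩
  · intro j; rw [frh]; abel
  · refine g5.trans ?_
    have := norm_unit_sub hb hw
    have : ‖‖b + w‖⁻¹ • (b + w) - ‖b‖⁻¹ • b‖ ^ 2 ≤ (2 * ‖w‖) ^ 2 := by gcongr
    linarith
  · simp only [hT]
    refine le_trans ?_ g6
    rw [norm_neg]
    have e1 : -‖w‖ ≤ ‖b‖ - ‖b + w‖ := by
      have := norm_add_le b w; linarith
    have e1' : |‖b‖ - ‖b + w‖| ≤ ‖w‖ := by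
      have := abs_norm_sub_norm_le b (b + w)
      rwa [show b - (b + w) = -w by abel, norm_neg] at this
    have e2 : |(‖b‖ - ‖b + w‖) * H yh| ≤ ‖w‖ * H0 := by
      rw [abs_mul]; gcongr
    have e3 : |‖b + w‖ * (H xh - H yh)| = ‖b + w‖ * |H xh - H yh| := by
      rw [abs_mul, abs_norm]
    have e4 := (abs_le.mp e2).1
    have e5 := (abs_le.mp e3.le).2
    have e6 : -(‖w‖ * H0 + ‖b + w‖ * |H xh - H yh|) ≤ ‖b‖ * H yh - ‖b + w‖ * H xh := by
      linarith
    have e7 := mul_le_mul_of_nonneg_left e6 (show (0:ℝ) ≤ N / 2 by positivity)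
    linarith

theorem sum_fst_sq_le {ι : Type*} [Fintype ι] {h : ι → WN N} {m : WN N}
    (hh : ∀ a, ∑ j, inner ℝ (h j) a ^ 2 = ‖a‖ ^ 2 - inner ℝ m a ^ 2) :
    ∑ j, ‖(h j).fst‖ ^ 2 ≤ N := by
  have e : ∀ j, ‖(h j).fst‖ ^ 2
      = ∑ i, inner ℝ (h j) (mkW (EuclideanSpace.single i (1:ℝ)) 0) ^ 2 := by
    intro j
    rw [EuclideanSpace.norm_sq_eq]
    refine Finset.sum_congr rfl fun i _ => ?_
    rw [innerW, mkW_fst, mkW_snd]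
    simp [EuclideanSpace.inner_single_right]
  simp only [e]
  rw [Finset.sum_comm]
  simp only [hh]
  calc _ ≤ ∑ i : Fin N, (1:ℝ) := by
        refine Finset.sum_le_sum fun i _ => ?_
        rw [normW_sq, mkW_fst, mkW_snd]
        simp
        positivity
    _ = N := by simp

theorem isClosed_epi {B : Set (EN N)} {u : EN N → ℝ} (hB : IsClosed B)
    (hu : LowerSemicontinuousOn u B) : IsClosed (epi B u) := by
  have h := (lowerSemicontinuousOn_iff_isClosed_epigraph hB).mp hu
  exact h.preimage (WithLp.prodContinuousLinearEquiv 2 ℝ (EN N) ℝ).continuous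

theorem isClosed_hypo {B : Set (EN N)} {u : EN N → ℝ} (hB : IsClosed B)
    (hu : UpperSemicontinuousOn u B) : IsClosed (hypo B u) := by
  have h := (upperSemicontinuousOn_iff_isClosed_hypograph hB).mp hu
  exact h.preimage (WithLp.prodContinuousLinearEquiv 2 ℝ (EN N) ℝ).continuous

end G2

section S2
variable {N : ℕ}

abbrev ZN (N : ℕ) := WithLp 2 (WN N × WN N)

noncomputable def dfL : ZN N →L[ℝ] EN N := fstL.comp (p1 - p2)
noncomputable def ffL : ZN N →L[ℝ] EN N := fstL.comp p1

theorem dfL_apply (z : ZN N) : dfL z = z.fst.fst - z.snd.fst := rfl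
theorem ffL_apply (z : ZN N) : ffL z = z.fst.fst := rfl
theorem inner_mkZ_z (a b : WN N) (z : ZN N) :
    inner ℝ (mkZ a b) z = inner ℝ a z.fst + inner ℝ b z.snd := by
  conv_lhs => rw [← mkZ_eta z]
  rw [mkZ_inner]

theorem step2_T2 (D Dd : EN N) {ε e : ℝ} (μ : ℝ) (hε : 0 < ε) (he : 0 < e) :
    T2 (fun z : ZN N => z.fst.snd - z.snd.snd
        + 1 / (2 * ε) * (‖D + (z.fst.fst - z.snd.fst)‖ ^ 2 - ‖D‖ ^ 2)
        + ε * μ * (Real.log (e + inner ℝ Dd z.fst.fst + ‖z.fst.fst‖ ^ 2) - Real.log e))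
      0 (mkZ (mkW (ε⁻¹ • D) 1 + mkW ((ε * μ * e⁻¹) • Dd) 0) (-mkW (ε⁻¹ • D) 1))
      (fun z => 1 / (2 * ε) * ‖z.fst.fst - z.snd.fst‖ ^ 2
        + ε * μ * (e⁻¹ * ‖z.fst.fst‖ ^ 2 - 1 / 2 * e⁻¹ ^ 2 * inner ℝ Dd z.fst.fst ^ 2)) := by
  have h1 := T2.quad 0 (mkZ (mkW (ε⁻¹ • D) 1) (-mkW (ε⁻¹ • D) 1))
    ((IsQ.normsq (dfL (N := N))).cmul (1 / (2 * ε)))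
  have h2 := (T2.log he (mkZ (mkW Dd 0) 0) (IsQ.normsq (ffL (N := N)))).cmul (ε * μ)
  have h3 := T2.quad (V := ZN N) (-(ε * μ * Real.log e)) 0 IsQ.zero
  refine ((h1.add h2).add h3).congr (fun z => ?_) (by ring) ?_ (fun z => ?_)
  · simp only [inner_mkZ_z, innerW, mkW_fst, mkW_snd, dfL_apply, ffL_apply, inner_zero_left,
      W_neg_fst, W_neg_snd, inner_neg_left, inner_smul_left, conj_trivial]
    rw [norm_add_sq_real, inner_sub_right]
    have : inner ℝ (0 : WN N) z.snd = 0 := inner_zero_left _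
    simp only [zero_mul, add_zero]
    field_simp
    ring
  · have e1 : (ε * μ) • e⁻¹ • mkZ (mkW Dd 0) (0 : WN N)
        = mkZ (mkW ((ε * μ * e⁻¹) • Dd) 0) 0 := by
      rw [smul_smul, mkZ_smul, smul_zero]
      congr 1
      show mkW ((ε * μ * e⁻¹) • Dd) ((ε * μ * e⁻¹) * 0) = _
      rw [mul_zero]
    rw [e1, add_zero, mkZ_add, add_zero]
  · simp only [inner_mkZ_z, innerW, mkW_fst, mkW_snd, dfL_apply, ffL_apply, inner_zero_left,
      zero_mul, add_zero]
    ring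

theorem W_norm_mk0 (x : EN N) : ‖mkW x 0‖ = ‖x‖ := by
  have : ‖mkW x 0‖ ^ 2 = ‖x‖ ^ 2 := by rw [normW_sq, mkW_fst, mkW_snd]; ring
  exact (pow_left_inj₀ (norm_nonneg _) (norm_nonneg _) two_ne_zero).mp this

theorem step2_core {Ω B : Set (EN N)} {u v H : EN N → ℝ} {xh yh x0 : EN N} {H0 ε μ e Λ1 C0 : ℝ}
    (hu : IsViscositySupersol Ω H u) (hv : IsViscositySubsol Ω H v) (hBΩ : B ⊆ Ω)
    (hHx : ContinuousAt H xh) (hHy : ContinuousAt H yh)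
    (hxi : xh ∈ interior B) (hyi : yh ∈ interior B)
    (hF : IsClosed (epi B u)) (hE : IsClosed (hypo B v)) (hε : 0 < ε) (hμ : 0 < μ) (he : 0 < e)
    (hec : ‖xh - x0‖ ^ 2 + C0 = e)
    (hmin : ∀ᶠ z in 𝓝 (0 : ZN N), ∀ X ∈ epi B u, ∀ Y ∈ hypo B v,
      mkW xh (u xh) + z.fst = X → mkW yh (v yh) + z.snd = Y →
      u xh - v yh + ‖xh - yh‖ ^ 2 / (2 * ε) + ε * μ * Real.log (‖xh - x0‖ ^ 2 + C0) ≤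
      X.snd - Y.snd + ‖X.fst - Y.fst‖ ^ 2 / (2 * ε)
        + ε * μ * Real.log (‖X.fst - x0‖ ^ 2 + C0))
    (hw : ε * μ * e⁻¹ * (2 * ‖xh - x0‖) ≤ 1 / 2)
    (hH0 : |H yh| ≤ H0) (hΛ1 : ‖xh - yh‖ / ε + 2 ≤ Λ1) :
    -(N / 2 * (ε * μ * e⁻¹ * (2 * ‖xh - x0‖) * H0 + Λ1 * |H xh - H yh|)) ≤
      4 * (ε * μ * e⁻¹ * (2 * ‖xh - x0‖)) ^ 2 / ε
        + ε * μ * (e⁻¹ * N - 1 / 2 * e⁻¹ ^ 2 * ((2 * ‖xh - x0‖) ^ 2 / Λ1 ^ 2)) := by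
  set D := xh - yh with hD
  set Dd : EN N := (2:ℝ) • (xh - x0) with hDd
  have hDdn : ‖Dd‖ = 2 * ‖xh - x0‖ := by rw [hDd, norm_smul]; simp
  set b : WN N := mkW (ε⁻¹ • D) 1 with hb
  set w : WN N := mkW ((ε * μ * e⁻¹) • Dd) 0 with hwd
  have hwn : ‖w‖ = ε * μ * e⁻¹ * (2 * ‖xh - x0‖) := by
    rw [hwd, W_norm_mk0, norm_smul, hDdn, Real.norm_of_nonneg (by positivity)]
  have hbs : b.snd = 1 := rfl
  have hbws : (b + w).snd = 1 := by rw [W_add_snd, hb, hwd, mkW_snd, mkW_snd, add_zero]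
  have hb1 : 1 ≤ ‖b‖ := by
    have := normW_snd_le b
    rwa [hbs, abs_one] at this
  have hbn : ‖b‖ ≤ ‖D‖ / ε + 1 := by
    refine (normW_le b).trans ?_
    rw [hb, mkW_fst, mkW_snd, norm_smul, norm_inv, Real.norm_of_nonneg hε.le, abs_one,
      inv_mul_eq_div]
  obtain ⟨h, k, c, m, n, hm1, hn1, hm, hn, hbw, hh, hk, hhk, hc, hq⟩ :=
    GTS2 hu hv hBΩ hHx hHy hxi hyi hF hE (step2_T2 D Dd μ hε he) (by
      filter_upwards [hmin] with z hz hX hY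
      have := hz _ hX _ hY rfl rfl
      have a1 : (mkW xh (u xh) + z.fst).fst - (mkW yh (v yh) + z.snd).fst
          = D + (z.fst.fst - z.snd.fst) := by
        show (xh + z.fst.fst) - (yh + z.snd.fst) = _
        rw [hD]; abel
      have a2 : ‖(mkW xh (u xh) + z.fst).fst - x0‖ ^ 2 + C0
          = e + inner ℝ Dd z.fst.fst + ‖z.fst.fst‖ ^ 2 := by
        have : (mkW xh (u xh) + z.fst).fst - x0 = (xh - x0) + z.fst.fst := by
          show (xh + z.fst.fst) - x0 = _
          abel
        rw [this, norm_add_sq_real, hDd, inner_smul_left, ← hec]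
        simp only [conj_trivial]; ring
      rw [a1, a2, hec] at this
      have a3 : (mkW xh (u xh) + z.fst).snd = u xh + z.fst.snd := rfl
      have a4 : (mkW yh (v yh) + z.snd).snd = v yh + z.snd.snd := rfl
      rw [a3, a4] at this
      linear_combination this) hb1 (by rw [← hwd, hwn]; exact hw) (by rw [← hb, hbs]; exact one_pos)
        (by rw [← hb, ← hwd, hbws]; exact one_pos) hH0
  rw [← hb] at hm hn hbw hq
  rw [← hwd] at hm hbw hc hq
  have hbwn : ‖b + w‖ ≤ Λ1 := by
    have := norm_add_le b w
    rw [hwn] at this; linarith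
  have hΛ0 : 0 < Λ1 := by linarith
  rw [hwn] at hq hc
  -- estimates
  have s1 : ∑ j, ‖(h j).fst - (k j).fst‖ ^ 2 ≤ 8 * (ε * μ * e⁻¹ * (2 * ‖xh - x0‖)) ^ 2 := by
    calc ∑ j, ‖(h j).fst - (k j).fst‖ ^ 2 ≤ ∑ j, 4 * c j ^ 2 := by
          refine Finset.sum_le_sum fun j _ => ?_
          have e1 : (h j).fst - (k j).fst = (h j - k j).fst := rfl
          rw [e1, hhk]
          have e2 : ‖(-(c j • (m + n))).fst‖ ≤ |c j| * 2 := by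
            refine (normW_fst_le _).trans ?_
            rw [norm_neg, norm_smul, Real.norm_eq_abs]
            gcongr
            refine (norm_add_le _ _).trans ?_
            rw [hm1, hn1]; norm_num
          calc _ ≤ (|c j| * 2) ^ 2 := by gcongr
            _ = _ := by rw [mul_pow, sq_abs]; ring
      _ = 4 * ∑ j, c j ^ 2 := by rw [Finset.mul_sum]
      _ ≤ _ := by linarith
  have s2 := sum_fst_sq_le hh
  have s3 : (2 * ‖xh - x0‖) ^ 2 / Λ1 ^ 2 ≤ ∑ j, inner ℝ Dd (h j).fst ^ 2 := by
    have e1 : ∀ j, inner ℝ Dd (h j).fst ^ 2 = inner ℝ (h j) (mkW Dd 0) ^ 2 := by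
      intro j
      rw [innerW, mkW_fst, mkW_snd, mul_zero, add_zero, real_inner_comm]
    simp only [e1]
    rw [hh, W_norm_mk0, innerW, mkW_fst, mkW_snd, mul_zero, add_zero]
    have e2 : inner ℝ m.fst Dd ^ 2 ≤ ‖m.fst‖ ^ 2 * ‖Dd‖ ^ 2 := by
      rw [← mul_pow, ← sq_abs]
      have := abs_real_inner_le_norm m.fst Dd
      gcongr
    have e3 : ‖m.fst‖ ^ 2 = 1 - m.snd ^ 2 := by
      have := normW_sq m
      rw [hm1] at this; linarith
    have e4 : Λ1⁻¹ ≤ m.snd := by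
      rw [hm, W_smul_snd, hbws, mul_one]
      exact inv_anti₀ (by linarith) hbwn
    have e5 : Λ1⁻¹ ^ 2 ≤ m.snd ^ 2 := by gcongr
    rw [e3] at e2
    rw [← hDdn, div_eq_mul_inv, ← inv_pow]
    have := mul_le_mul_of_nonneg_left e5 (sq_nonneg ‖Dd‖)
    linarith
  have hsum : ∑ j, (1 / (2 * ε) * ‖(mkZ (h j) (k j)).fst.fst - (mkZ (h j) (k j)).snd.fst‖ ^ 2
        + ε * μ * (e⁻¹ * ‖(mkZ (h j) (k j)).fst.fst‖ ^ 2
          - 1 / 2 * e⁻¹ ^ 2 * inner ℝ Dd (mkZ (h j) (k j)).fst.fst ^ 2))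
      = 1 / (2 * ε) * ∑ j, ‖(h j).fst - (k j).fst‖ ^ 2 + ε * μ * (e⁻¹ * ∑ j, ‖(h j).fst‖ ^ 2
          - 1 / 2 * e⁻¹ ^ 2 * ∑ j, inner ℝ Dd (h j).fst ^ 2) := by
    rw [Finset.mul_sum, Finset.mul_sum, Finset.mul_sum, ← Finset.sum_sub_distrib, Finset.mul_sum,
      ← Finset.sum_add_distrib]
    rfl
  rw [hsum] at hq
  have l1 : N / 2 * (ε * μ * e⁻¹ * (2 * ‖xh - x0‖) * H0 + ‖b + w‖ * |H xh - H yh|) ≤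
      N / 2 * (ε * μ * e⁻¹ * (2 * ‖xh - x0‖) * H0 + Λ1 * |H xh - H yh|) := by gcongr
  have l2 : 1 / (2 * ε) * ∑ j, ‖(h j).fst - (k j).fst‖ ^ 2 ≤
      4 * (ε * μ * e⁻¹ * (2 * ‖xh - x0‖)) ^ 2 / ε := by
    calc _ ≤ 1 / (2 * ε) * (8 * (ε * μ * e⁻¹ * (2 * ‖xh - x0‖)) ^ 2) := by gcongr
      _ = _ := by field_simp; ring
  have l3 : ε * μ * (e⁻¹ * ∑ j, ‖(h j).fst‖ ^ 2 - 1 / 2 * e⁻¹ ^ 2 * ∑ j, inner ℝ Dd (h j).fst ^ 2)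
      ≤ ε * μ * (e⁻¹ * N - 1 / 2 * e⁻¹ ^ 2 * ((2 * ‖xh - x0‖) ^ 2 / Λ1 ^ 2)) := by
    gcongr
  linarith

end S2

section S2b
variable {N : ℕ}

theorem compact_pairs {B : Set (EN N)} {u v : EN N → ℝ} {M C : ℝ} (hB : Bornology.IsBounded B)
    (hF : IsClosed (epi B u)) (hE : IsClosed (hypo B v)) (hM : ∀ x ∈ B, -M ≤ u x ∧ v x ≤ M) :
    IsCompact {p : WN N × WN N | p.1 ∈ epi B u ∧ p.2 ∈ hypo B v ∧ p.1.snd ≤ p.2.snd + C} := by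
  have hcl : IsClosed {p : WN N × WN N | p.1 ∈ epi B u ∧ p.2 ∈ hypo B v ∧
      p.1.snd ≤ p.2.snd + C} := by
    refine (hF.preimage continuous_fst).inter ((hE.preimage continuous_snd).inter ?_)
    exact isClosed_le (sndL.continuous.comp continuous_fst)
      ((sndL.continuous.comp continuous_snd).add continuous_const)
  refine Metric.isCompact_of_isClosed_isBounded hcl ?_
  obtain ⟨K, hK⟩ := hB.exists_norm_le
  rw [isBounded_iff_forall_norm_le]
  refine ⟨K + (|M| + |C|), fun p hp => ?_⟩
  obtain ⟨⟨h1, h2⟩, ⟨h3, h4⟩, h5⟩ := hp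
  have a1 := hM _ h1
  have a2 := hM _ h3
  have b1 := le_abs_self M
  have b2 := le_abs_self C
  have b3 := neg_abs_le C
  rw [Prod.norm_def]
  refine max_le ((normW_le _).trans (add_le_add (hK _ h1) (abs_le.mpr ⟨?_, ?_⟩)))
    ((normW_le _).trans (add_le_add (hK _ h3) (abs_le.mpr ⟨?_, ?_⟩)))
  all_goals linarith [a1.1, a2.2, abs_nonneg C]

theorem real_D {D ε Λ : ℝ} (hε : 0 < ε) (hΛ : 0 ≤ Λ) (hD : 0 ≤ D)
    (h : D ^ 2 / (2 * ε) ≤ Λ * D + ε) : D ≤ ε * (2 * Λ + 2) := by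
  by_contra hlt
  push Not at hlt
  rw [div_le_iff₀ (by positivity)] at h
  have h1 : ε * (2 * Λ + 2) * D ≤ D * D := by gcongr
  have h2 : 0 ≤ ε * Λ := by positivity
  have h3 : ε < D := by linarith
  have h4 : ε * ε < ε * D := by gcongr
  nlinarith

theorem real_fin {n ε μ e g H0 Λ1 Λ' L Hd R : ℝ} (hn : 0 ≤ n) (hε : 0 < ε) (he : 0 < e)
    (he1 : e ≤ 1) (hΛ1 : 0 < Λ1) (hμ : μ = 1 / (16 * Λ1 ^ 2)) (hH0 : 0 ≤ H0) (hL : 0 ≤ L)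
    (hΛ' : 0 ≤ Λ') (hR : 0 < R)
    (hg : R ≤ g) (hg2 : g ≤ 4 * R) (hHd : Hd ≤ L * (ε * Λ'))
    (hes : e * (n + n / 2 * (H0 * (4 * R) + L * Λ' * Λ1 / μ)) < R ^ 2 / (4 * Λ1 ^ 2))
    (h : -(n / 2 * (ε * μ * e⁻¹ * g * H0 + Λ1 * Hd)) ≤ 4 * (ε * μ * e⁻¹ * g) ^ 2 / ε
        + ε * μ * (e⁻¹ * n - 1 / 2 * e⁻¹ ^ 2 * (g ^ 2 / Λ1 ^ 2))) : False := by
  have hμ0 : 0 < μ := by rw [hμ]; positivity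
  have hg0 : 0 < g := by linarith
  have h1 : -(n / 2 * (ε * μ * e⁻¹ * g * H0 + Λ1 * (L * (ε * Λ')))) ≤ 4 * (ε * μ * e⁻¹ * g) ^ 2 / ε
        + ε * μ * (e⁻¹ * n - 1 / 2 * e⁻¹ ^ 2 * (g ^ 2 / Λ1 ^ 2)) := by
    refine le_trans (neg_le_neg ?_) h
    gcongr
  have h2 := mul_le_mul_of_nonneg_left h1 (show 0 ≤ e ^ 2 / (ε * μ) by positivity)
  have e1 : e ^ 2 / (ε * μ) * -(n / 2 * (ε * μ * e⁻¹ * g * H0 + Λ1 * (L * (ε * Λ'))))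
      = -(n / 2 * (e * g * H0 + L * Λ' * Λ1 / μ * e ^ 2)) := by
    field_simp
  have e2 : e ^ 2 / (ε * μ) * (4 * (ε * μ * e⁻¹ * g) ^ 2 / ε
        + ε * μ * (e⁻¹ * n - 1 / 2 * e⁻¹ ^ 2 * (g ^ 2 / Λ1 ^ 2)))
      = 4 * μ * g ^ 2 + e * n - g ^ 2 / (2 * Λ1 ^ 2) := by
    field_simp
    try ring
  rw [e1, e2] at h2
  have e3 : 4 * μ * g ^ 2 = g ^ 2 / (4 * Λ1 ^ 2) := by
    rw [hμ]; field_simp; try ring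
  have e4 : g ^ 2 / (2 * Λ1 ^ 2) = 2 * (g ^ 2 / (4 * Λ1 ^ 2)) := by
    field_simp; try ring
  have e5 : R ^ 2 / (4 * Λ1 ^ 2) ≤ g ^ 2 / (4 * Λ1 ^ 2) := by gcongr
  have e6 : e ^ 2 ≤ e := by nlinarith
  have e7 : n / 2 * (e * g * H0 + L * Λ' * Λ1 / μ * e ^ 2)
      ≤ n / 2 * (e * (4 * R) * H0 + L * Λ' * Λ1 / μ * e) := by gcongr
  rw [e3, e4] at h2
  linarith

theorem step2_min {B : Set (EN N)} {u v : EN N → ℝ} {M : ℝ} {z x0 : EN N} {R δ ε μ Λ : ℝ}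
    (hB : Bornology.IsBounded B)
    (hF : IsClosed (epi B u)) (hE : IsClosed (hypo B v)) (hM : ∀ x ∈ B, -M ≤ u x ∧ v x ≤ M)
    (hzB : z ∈ B) (huv : u z = v z) (hzR : ‖z - x0‖ = R) (hδ : 0 < δ) (hε : 0 < ε)
    (hμ : 0 < μ) (hμ1 : μ ≤ 1) (hΛ0 : 0 ≤ Λ)
    (hΛ : ∀ x ∈ B, ∀ y ∈ B, v y - u x ≤ Λ * ‖x - y‖) :
    ∃ x ∈ B, ∃ y ∈ B, -(δ / 2) ≤ ‖x - x0‖ ^ 2 - R ^ 2 ∧ u x - v y ≤ ε ∧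
      ‖x - y‖ ≤ ε * (2 * Λ + 2) ∧
      ‖x - x0‖ ^ 2 - R ^ 2 ≤ δ * Real.exp (Λ ^ 2 / (2 * μ)) ∧
      ∀ X ∈ epi B u, ∀ Y ∈ hypo B v, X.snd ≤ Y.snd + 1 → -(δ / 2) ≤ ‖X.fst - x0‖ ^ 2 - R ^ 2 →
        u x - v y + ‖x - y‖ ^ 2 / (2 * ε) + ε * μ * Real.log (‖x - x0‖ ^ 2 + (δ - R ^ 2)) ≤
        X.snd - Y.snd + ‖X.fst - Y.fst‖ ^ 2 / (2 * ε)
          + ε * μ * Real.log (‖X.fst - x0‖ ^ 2 + (δ - R ^ 2)) := by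
  have hcf : Continuous (fun p : WN N × WN N => p.1.fst) := fstL.continuous.comp continuous_fst
  have hcf2 : Continuous (fun p : WN N × WN N => p.2.fst) := fstL.continuous.comp continuous_snd
  have hcs : Continuous (fun p : WN N × WN N => p.1.snd) := sndL.continuous.comp continuous_fst
  have hcs2 : Continuous (fun p : WN N × WN N => p.2.snd) := sndL.continuous.comp continuous_snd
  have hK := (compact_pairs (C := 1) hB hF hE hM).inter_right
    (isClosed_le (continuous_const (y := -(δ / 2)))
      ((((hcf.sub (continuous_const (y := x0))).norm.pow 2).sub (continuous_const (y := R ^ 2)))))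
  set G : WN N × WN N → ℝ := fun p => p.1.snd - p.2.snd + ‖p.1.fst - p.2.fst‖ ^ 2 / (2 * ε)
          + ε * μ * Real.log (‖p.1.fst - x0‖ ^ 2 + (δ - R ^ 2)) with hG
  obtain ⟨p, hp, hpm⟩ := hK.exists_isMinOn (f := G) ⟨(mkW z (u z), mkW z (v z)),
    ⟨⟨hzB, le_refl _⟩, ⟨hzB, le_refl _⟩, by show u z ≤ v z + 1; rw [huv]; linarith⟩, by
      show -(δ / 2) ≤ ‖z - x0‖ ^ 2 - R ^ 2
      rw [hzR]; linarith⟩ (by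
    refine ((hcs.sub hcs2).add (((hcf.sub hcf2).norm.pow 2).div_const _)).continuousOn.add
      (continuousOn_const.mul (ContinuousOn.log
        (((hcf.sub continuous_const).norm.pow 2).add continuous_const).continuousOn ?_))
    intro q hq
    have : -(δ / 2) ≤ ‖q.1.fst - x0‖ ^ 2 - R ^ 2 := hq.2
    have : 0 < ‖q.1.fst - x0‖ ^ 2 + (δ - R ^ 2) := by linarith
    exact this.ne')
  obtain ⟨⟨⟨hx, hxs⟩, ⟨hy, hys⟩, hst⟩, hd⟩ := hp
  set x := p.1.fst with hxd
  set y := p.2.fst with hyd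
  have hd : -(δ / 2) ≤ ‖x - x0‖ ^ 2 - R ^ 2 := hd
  have hmin : ∀ X ∈ epi B u, ∀ Y ∈ hypo B v, X.snd ≤ Y.snd + 1 →
      -(δ / 2) ≤ ‖X.fst - x0‖ ^ 2 - R ^ 2 →
        u x - v y + ‖x - y‖ ^ 2 / (2 * ε) + ε * μ * Real.log (‖x - x0‖ ^ 2 + (δ - R ^ 2)) ≤
        X.snd - Y.snd + ‖X.fst - Y.fst‖ ^ 2 / (2 * ε)
          + ε * μ * Real.log (‖X.fst - x0‖ ^ 2 + (δ - R ^ 2)) := by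
    intro X hX Y hY h1 h2
    have := isMinOn_iff.mp hpm (X, Y) ⟨⟨hX, hY, h1⟩, h2⟩
    simp only [hG] at this
    linarith
  have hzz := hmin (mkW z (u z)) ⟨hzB, le_refl _⟩ (mkW z (v z)) ⟨hzB, le_refl _⟩
    (by show u z ≤ v z + 1; rw [huv]; linarith)
    (by show -(δ / 2) ≤ ‖z - x0‖ ^ 2 - R ^ 2
        rw [hzR]; linarith)
  have e1 : (mkW z (u z)).snd - (mkW z (v z)).snd + ‖(mkW z (u z)).fst - (mkW z (v z)).fst‖ ^ 2
      / (2 * ε) + ε * μ * Real.log (‖(mkW z (u z)).fst - x0‖ ^ 2 + (δ - R ^ 2))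
      = ε * μ * Real.log δ := by
    rw [mkW_fst, mkW_fst, mkW_snd, mkW_snd, hzR, huv, sub_self, sub_self, norm_zero]
    rw [show R ^ 2 + (δ - R ^ 2) = δ by ring]; simp
  rw [e1] at hzz
  set e := ‖x - x0‖ ^ 2 + (δ - R ^ 2) with he
  have he2 : δ / 2 ≤ e := by rw [he]; linarith
  have he0 : 0 < e := by linarith
  have hl : Real.log δ - Real.log e ≤ 1 := by
    have h1 : Real.log δ ≤ Real.log (2 * e) := Real.log_le_log hδ (by linarith)
    rw [Real.log_mul two_ne_zero he0.ne'] at h1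
    have h2 : Real.log 2 ≤ 1 := by
      have := Real.log_le_sub_one_of_pos (show (0:ℝ) < 2 by norm_num); linarith
    linarith
  have hεμ : 0 < ε * μ := by positivity
  have hi : u x - v y + ‖x - y‖ ^ 2 / (2 * ε) ≤ ε * μ := by
    have := mul_le_mul_of_nonneg_left hl hεμ.le
    linarith
  have hεμ1 : ε * μ ≤ ε := by nlinarith
  have hlam := hΛ x hx y hy
  have hsq : 0 ≤ ‖x - y‖ ^ 2 / (2 * ε) := by positivity
  refine ⟨x, hx, y, hy, hd, by linarith, real_D hε hΛ0 (norm_nonneg _) (by linarith), ?_, hmin⟩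
  have h3 : -(ε * Λ ^ 2 / 2) ≤ -(Λ * ‖x - y‖) + ‖x - y‖ ^ 2 / (2 * ε) := by
    have : -(Λ * ‖x - y‖) + ‖x - y‖ ^ 2 / (2 * ε) + ε * Λ ^ 2 / 2
      = (‖x - y‖ - ε * Λ) ^ 2 / (2 * ε) := by field_simp; ring
    have h4 : 0 ≤ (‖x - y‖ - ε * Λ) ^ 2 / (2 * ε) := by positivity
    linarith
  have h5 : ε * μ * (Real.log e) ≤ ε * μ * (Real.log δ + Λ ^ 2 / (2 * μ)) := by
    have : ε * μ * (Λ ^ 2 / (2 * μ)) = ε * Λ ^ 2 / 2 := by field_simp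
    rw [mul_add, this]; linarith
  have h6 := le_of_mul_le_mul_left h5 hεμ
  have h7 : e ≤ δ * Real.exp (Λ ^ 2 / (2 * μ)) := by
    have := Real.exp_le_exp.mpr h6
    rwa [Real.exp_log he0, Real.exp_add, Real.exp_log hδ] at this
  linarith

end S2b

section S2c
variable {N : ℕ}

theorem step2_d0 {B : Set (EN N)} {u v : EN N → ℝ} {M : ℝ} {z x0 : EN N} {R s : ℝ}
    (hB : Bornology.IsBounded B)
    (hF : IsClosed (epi B u)) (hE : IsClosed (hypo B v)) (hM : ∀ x ∈ B, -M ≤ u x ∧ v x ≤ M)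
    (hR : 0 < R) (hs : 0 < s)
    (hst : ∀ x ∈ B, ‖x - x0‖ ≤ R → x ≠ z → v x < u x) :
    ∃ d0 > 0, ∀ x ∈ B, ‖x - z‖ = s → u x ≤ v x → d0 ≤ ‖x - x0‖ ^ 2 - R ^ 2 := by
  have hcf : Continuous (fun p : WN N × WN N => p.1.fst) := fstL.continuous.comp continuous_fst
  have hcf2 : Continuous (fun p : WN N × WN N => p.2.fst) := fstL.continuous.comp continuous_snd
  have hK := ((compact_pairs (C := 0) hB hF hE hM).inter_right (isClosed_eq hcf hcf2)).inter_right
    (isClosed_eq (hcf.sub (continuous_const (y := z))).norm (continuous_const (y := s)))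
  set K := ({p : WN N × WN N | p.1 ∈ epi B u ∧ p.2 ∈ hypo B v ∧ p.1.snd ≤ p.2.snd + 0}
    ∩ {p | p.1.fst = p.2.fst}) ∩ {p | ‖p.1.fst - z‖ = s} with hKd
  have hmem : ∀ x ∈ B, ‖x - z‖ = s → u x ≤ v x → (mkW x (u x), mkW x (u x)) ∈ K := by
    intro x hx h1 h2
    exact ⟨⟨⟨⟨hx, le_refl _⟩, ⟨hx, h2⟩, by simp⟩, rfl⟩, h1⟩
  by_cases hne : K.Nonempty
  · obtain ⟨p, hp, hpm⟩ := hK.exists_isMinOn hne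
      (((hcf.sub (continuous_const (y := x0))).norm.pow 2).sub
        (continuous_const (y := R ^ 2))).continuousOn
    refine ⟨‖p.1.fst - x0‖ ^ 2 - R ^ 2, ?_, fun x hx h1 h2 =>
      isMinOn_iff.mp hpm _ (hmem x hx h1 h2)⟩
    obtain ⟨⟨⟨⟨hx, hxs⟩, ⟨hy, hys⟩, hst'⟩, heq⟩, hn⟩ := hp
    have heq : p.1.fst = p.2.fst := heq
    have hn : ‖p.1.fst - z‖ = s := hn
    rw [← heq] at hys
    have hlt : R < ‖p.1.fst - x0‖ := by
      by_contra hle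
      push Not at hle
      have := hst _ hx hle (by rintro h; rw [h, sub_self, norm_zero] at hn; linarith)
      linarith
    have : R ^ 2 < ‖p.1.fst - x0‖ ^ 2 := by gcongr
    show 0 < _
    linarith
  · exact ⟨1, one_pos, fun x hx h1 h2 => absurd ⟨_, hmem x hx h1 h2⟩ hne⟩

theorem step2_pts {u v : EN N → ℝ} {M : ℝ} {z x0 : EN N} {R δ μ Λ s d0 : ℝ}
    (hF : IsClosed (epi (closedBall z s) u)) (hE : IsClosed (hypo (closedBall z s) v))
    (hM : ∀ x ∈ closedBall z s, -M ≤ u x ∧ v x ≤ M)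
    (hs : 0 < s) (huv : u z = v z) (hzR : ‖z - x0‖ = R) (hδ : 0 < δ)
    (hμ : 0 < μ) (hμ1 : μ ≤ 1) (hΛ0 : 0 ≤ Λ)
    (hΛ : ∀ x ∈ closedBall z s, ∀ y ∈ closedBall z s, v y - u x ≤ Λ * ‖x - y‖)
    (hst : ∀ x ∈ closedBall z s, ‖x - x0‖ ≤ R → x ≠ z → v x < u x)
    (hd0 : ∀ x ∈ closedBall z s, ‖x - z‖ = s → u x ≤ v x → d0 ≤ ‖x - x0‖ ^ 2 - R ^ 2)
    (hδ0 : δ * Real.exp (Λ ^ 2 / (2 * μ)) < d0) {ε0 : ℝ} (hε0 : 0 < ε0) :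
    ∃ ε > 0, ε < ε0 ∧ ∃ x ∈ ball z s, ∃ y ∈ ball z s, -(δ / 2) < ‖x - x0‖ ^ 2 - R ^ 2 ∧
      u x - v y ≤ ε ∧
      ‖x - y‖ ≤ ε * (2 * Λ + 2) ∧
      ∀ X ∈ epi (closedBall z s) u, ∀ Y ∈ hypo (closedBall z s) v, X.snd ≤ Y.snd + 1 →
        -(δ / 2) ≤ ‖X.fst - x0‖ ^ 2 - R ^ 2 →
        u x - v y + ‖x - y‖ ^ 2 / (2 * ε) + ε * μ * Real.log (‖x - x0‖ ^ 2 + (δ - R ^ 2)) ≤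
        X.snd - Y.snd + ‖X.fst - Y.fst‖ ^ 2 / (2 * ε)
          + ε * μ * Real.log (‖X.fst - x0‖ ^ 2 + (δ - R ^ 2)) := by
  set e : ℕ → ℝ := fun k => (min ε0 1) * (1 / ((k : ℝ) + 2)) with he
  have hm0 : 0 < min ε0 1 := lt_min hε0 one_pos
  have hk1 : ∀ k : ℕ, 1 / ((k : ℝ) + 2) < 1 := by
    intro k
    rw [div_lt_one (by positivity)]
    have : (0:ℝ) ≤ k := by positivity
    linarith
  have hepos : ∀ k, 0 < e k := fun k => by simp only [he]; positivity
  have helt : ∀ k, e k < min ε0 1 := fun k => by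
    have := mul_lt_mul_of_pos_left (hk1 k) hm0
    simpa [he] using this
  have helim : Tendsto e atTop (𝓝 0) := by
    have h1 : Tendsto (fun k : ℕ => 1 / ((k : ℝ) + 2)) atTop (𝓝 0) := by
      have := (tendsto_one_div_add_atTop_nhds_zero_nat (𝕜 := ℝ)).comp (tendsto_add_atTop_nat 1)
      refine this.congr (fun k => ?_)
      simp only [Function.comp]
      push_cast
      congr 1
      ring
    have h2 := h1.const_mul (min ε0 1)
    rw [mul_zero] at h2
    exact h2
  have hBb : Bornology.IsBounded (closedBall z s) := isBounded_closedBall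
  choose x hx y hy h1 h2 h3 h4 h5 using fun k =>
    step2_min hBb hF hE hM (mem_closedBall_self hs.le) huv hzR hδ (hepos k) hμ hμ1 hΛ0 hΛ
  have hcf : Continuous (fun p : WN N × WN N => p.1.fst) := fstL.continuous.comp continuous_fst
  have hcf2 : Continuous (fun p : WN N × WN N => p.2.fst) := fstL.continuous.comp continuous_snd
  have hcs : Continuous (fun p : WN N × WN N => p.1.snd) := sndL.continuous.comp continuous_fst
  have hcs2 : Continuous (fun p : WN N × WN N => p.2.snd) := sndL.continuous.comp continuous_snd
  obtain ⟨p, hp, φ, hφ, hlim⟩ := (compact_pairs (C := 1) hBb hF hE hM).tendsto_subseq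
    (x := fun k => (mkW (x k) (u (x k)), mkW (y k) (v (y k)))) (fun k =>
      ⟨⟨hx k, le_refl _⟩, ⟨hy k, le_refl _⟩, by
        show u (x k) ≤ v (y k) + 1
        have := h2 k
        have := helt k
        have := min_le_right ε0 1
        linarith⟩)
  obtain ⟨⟨hpx, hpxs⟩, ⟨hpy, hpys⟩, -⟩ := hp
  have lx : Tendsto (fun k => x (φ k)) atTop (𝓝 p.1.fst) := (hcf.tendsto p).comp hlim
  have ly : Tendsto (fun k => y (φ k)) atTop (𝓝 p.2.fst) := (hcf2.tendsto p).comp hlim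
  have ls : Tendsto (fun k => u (x (φ k))) atTop (𝓝 p.1.snd) := (hcs.tendsto p).comp hlim
  have lt : Tendsto (fun k => v (y (φ k))) atTop (𝓝 p.2.snd) := (hcs2.tendsto p).comp hlim
  have le0 : Tendsto (fun k => e (φ k)) atTop (𝓝 0) := helim.comp hφ.tendsto_atTop
  have hxy : p.1.fst = p.2.fst := by
    have a : ‖p.1.fst - p.2.fst‖ ≤ 0 * (2 * Λ + 2) :=
      le_of_tendsto_of_tendsto' (lx.sub ly).norm (le0.mul_const _) (fun k => h3 (φ k))
    rw [zero_mul] at a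
    exact sub_eq_zero.mp (norm_le_zero_iff.mp a)
  have hsl : p.1.snd - p.2.snd ≤ 0 :=
    le_of_tendsto_of_tendsto' (ls.sub lt) le0 (fun k => h2 (φ k))
  rw [← hxy] at hpys ly
  have huvp : u p.1.fst ≤ v p.1.fst := by linarith
  have hd : 0 ≤ ‖p.1.fst - x0‖ ^ 2 - R ^ 2 := by
    by_contra hlt
    push Not at hlt
    have hR0 : 0 ≤ R := hzR ▸ norm_nonneg _
    have hle : ‖p.1.fst - x0‖ < R := lt_of_pow_lt_pow_left₀ 2 hR0 (by linarith)
    have := hst _ hpx hle.le (by rintro h; rw [h] at hle; linarith)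
    linarith
  have hd2 : ‖p.1.fst - x0‖ ^ 2 - R ^ 2 ≤ δ * Real.exp (Λ ^ 2 / (2 * μ)) :=
    le_of_tendsto' (((lx.sub_const x0).norm.pow 2).sub_const _) (fun k => h4 (φ k))
  have hpball : p.1.fst ∈ ball z s := by
    rw [mem_ball, dist_eq_norm]
    rw [mem_closedBall, dist_eq_norm] at hpx
    refine lt_of_le_of_ne hpx (fun h => ?_)
    have := hd0 _ (by rw [mem_closedBall, dist_eq_norm]; exact hpx) h huvp
    linarith
  have ev1 := lx.eventually (isOpen_ball.mem_nhds hpball)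
  have ev2 := ly.eventually (isOpen_ball.mem_nhds hpball)
  have ev3 := (((lx.sub_const x0).norm.pow 2).sub_const (R ^ 2)).eventually
    (lt_mem_nhds (show -(δ / 2) < ‖p.1.fst - x0‖ ^ 2 - R ^ 2 by linarith))
  obtain ⟨k, k1, k2, k3⟩ := (ev1.and (ev2.and ev3)).exists
  exact ⟨e (φ k), hepos _, (helt _).trans_le (min_le_left _ _), x (φ k), k1, y (φ k), k2, k3,
    h2 _, h3 _, h5 _⟩

end S2c

section S2d
variable {N : ℕ}

theorem step2 {Ω : Set (EN N)} {u v H : EN N → ℝ} {z x0 : EN N} {s1 R Λ L H0 M : ℝ}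
    (hu : IsViscositySupersol Ω H u) (hv : IsViscositySubsol Ω H v)
    (hBΩ : closedBall z s1 ⊆ Ω) (hs1 : 0 < s1) (hR : 0 < R) (hzR : ‖z - x0‖ = R)
    (huv : u z = v z)
    (hul : LowerSemicontinuousOn u (closedBall z s1))
    (hvu : UpperSemicontinuousOn v (closedBall z s1))
    (hM : ∀ x ∈ closedBall z s1, -M ≤ u x ∧ v x ≤ M) (hΛ0 : 0 ≤ Λ)
    (hΛ : ∀ x ∈ closedBall z s1, ∀ y ∈ closedBall z s1, v y - u x ≤ Λ * ‖x - y‖)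
    (hst : ∀ x ∈ closedBall z s1, ‖x - x0‖ ≤ R → x ≠ z → v x < u x)
    (hHc : ∀ x ∈ closedBall z s1, ContinuousAt H x) (hL : 0 ≤ L)
    (hHL : ∀ x ∈ closedBall z s1, ∀ y ∈ closedBall z s1, |H x - H y| ≤ L * ‖x - y‖)
    (hH0 : ∀ x ∈ closedBall z s1, |H x| ≤ H0) : False := by
  obtain ⟨Λ', hΛ'⟩ : ∃ Λ', Λ' = 2 * Λ + 2 := ⟨_, rfl⟩
  obtain ⟨Λ1, hΛ1⟩ : ∃ Λ1, Λ1 = Λ' + 2 := ⟨_, rfl⟩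
  obtain ⟨μ, hμ⟩ : ∃ μ, μ = 1 / (16 * Λ1 ^ 2) := ⟨_, rfl⟩
  have hΛ'0 : 0 ≤ Λ' := by linarith
  have hΛ10 : 1 ≤ Λ1 := by linarith
  have hμ0 : 0 < μ := by rw [hμ]; positivity
  have hμ1 : μ ≤ 1 / 16 := by
    rw [hμ]
    have : 1 ≤ Λ1 ^ 2 := one_le_pow₀ hΛ10
    apply one_div_le_one_div_of_le (by norm_num); linarith
  have hH00 : 0 ≤ H0 := (abs_nonneg _).trans (hH0 z (mem_closedBall_self hs1.le))
  obtain ⟨Kc, hKc⟩ : ∃ Kc, Kc = (N:ℝ) + N / 2 * (H0 * (4 * R) + L * Λ' * Λ1 / μ) := ⟨_, rfl⟩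
  have hKc0 : 0 ≤ Kc := by rw [hKc]; positivity
  obtain ⟨es, hes⟩ : ∃ es, es = min 1 (R ^ 2 / (4 * Λ1 ^ 2 * (Kc + 1))) := ⟨_, rfl⟩
  have hes0 : 0 < es := by rw [hes]; exact lt_min one_pos (by positivity)
  have hes1 : es ≤ 1 := by rw [hes]; exact min_le_left _ _
  have hesK : es * (Kc + 1) ≤ R ^ 2 / (4 * Λ1 ^ 2) := by
    have h1 : es ≤ R ^ 2 / (4 * Λ1 ^ 2 * (Kc + 1)) := by rw [hes]; exact min_le_right _ _
    calc es * (Kc + 1) ≤ R ^ 2 / (4 * Λ1 ^ 2 * (Kc + 1)) * (Kc + 1) := by gcongr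
      _ = _ := by field_simp
  obtain ⟨s, hs⟩ : ∃ s, s = min s1 (min (R / 2) (es / (6 * R))) := ⟨_, rfl⟩
  have hs0 : 0 < s := by rw [hs]; exact lt_min hs1 (lt_min (by positivity) (by positivity))
  have hss1 : s ≤ s1 := by rw [hs]; exact min_le_left _ _
  have hsR : s ≤ R / 2 := by rw [hs]; exact (min_le_right _ _).trans (min_le_left _ _)
  have hse : 3 * R * s ≤ es / 2 := by
    have h1 : s ≤ es / (6 * R) := by rw [hs]; exact (min_le_right _ _).trans (min_le_right _ _)
    calc 3 * R * s ≤ 3 * R * (es / (6 * R)) := by gcongr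
      _ = es / 2 := by field_simp; try norm_num
  have hsub : closedBall z s ⊆ closedBall z s1 := closedBall_subset_closedBall hss1
  have hF : IsClosed (epi (closedBall z s) u) := isClosed_epi isClosed_closedBall (hul.mono hsub)
  have hE : IsClosed (hypo (closedBall z s) v) := isClosed_hypo isClosed_closedBall (hvu.mono hsub)
  obtain ⟨d0, hd0, hd0'⟩ := step2_d0 (z := z) (x0 := x0) (R := R) (s := s) isBounded_closedBall
    hF hE (fun x hx => hM x (hsub hx)) hR hs0 (fun x hx => hst x (hsub hx))
  have hexp := Real.exp_pos (Λ ^ 2 / (2 * μ))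
  obtain ⟨δ, hδ⟩ : ∃ δ, δ = min (es / 2) (d0 / (2 * Real.exp (Λ ^ 2 / (2 * μ)))) := ⟨_, rfl⟩
  have hδ0 : 0 < δ := by rw [hδ]; exact lt_min (by positivity) (by positivity)
  have hδe : δ ≤ es / 2 := by rw [hδ]; exact min_le_left _ _
  have hδd : δ * Real.exp (Λ ^ 2 / (2 * μ)) < d0 := by
    have h1 : δ ≤ d0 / (2 * Real.exp (Λ ^ 2 / (2 * μ))) := by rw [hδ]; exact min_le_right _ _
    have h2 : δ * Real.exp (Λ ^ 2 / (2 * μ)) ≤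
      d0 / (2 * Real.exp (Λ ^ 2 / (2 * μ))) * Real.exp (Λ ^ 2 / (2 * μ)) := by gcongr
    have h3 : d0 / (2 * Real.exp (Λ ^ 2 / (2 * μ))) * Real.exp (Λ ^ 2 / (2 * μ)) = d0 / 2 := by
      field_simp
    linarith
  obtain ⟨ε, hε0, hε1, x, hx, y, hy, hd, h1, h2, hmin⟩ := step2_pts (x0 := x0) (μ := μ) hF hE
    (fun x hx => hM x (hsub hx)) hs0 huv hzR hδ0 hμ0 (by linarith) hΛ0
    (fun x hx y hy => hΛ x (hsub hx) y (hsub hy)) (fun x hx => hst x (hsub hx)) hd0' hδd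
    (ε0 := min 1 (δ / R)) (lt_min one_pos (by positivity))
  have hε11 : ε < 1 := hε1.trans_le (min_le_left _ _)
  have hεR : ε * R ≤ δ := by
    have : ε ≤ δ / R := hε1.le.trans (min_le_right _ _)
    rwa [le_div_iff₀ hR] at this
  have hxc := hsub (ball_subset_closedBall hx)
  have hyc := hsub (ball_subset_closedBall hy)
  have hxz : ‖x - z‖ ≤ s := by
    rw [mem_ball, dist_eq_norm] at hx; exact hx.le
  have hup : ‖x - x0‖ ≤ s + R := by
    have := norm_add_le (x - z) (z - x0)
    rw [sub_add_sub_cancel] at this; linarith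
  have hlow : R - s ≤ ‖x - x0‖ := by
    have := norm_sub_le (x - x0) (x - z)
    rw [show x - x0 - (x - z) = z - x0 by abel] at this; linarith
  obtain ⟨e, he⟩ : ∃ e, e = ‖x - x0‖ ^ 2 + (δ - R ^ 2) := ⟨_, rfl⟩
  have heδ : δ / 2 < e := by rw [he]; linarith
  have he0 : 0 < e := by linarith
  have hees : e ≤ es := by
    have : ‖x - x0‖ ^ 2 ≤ (s + R) ^ 2 := by gcongr
    have : s * s ≤ R * s := by gcongr; linarith
    rw [he]; nlinarith
  have hg1 : R ≤ 2 * ‖x - x0‖ := by linarith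
  have hg2 : 2 * ‖x - x0‖ ≤ 4 * R := by linarith
  have hdist : ‖x - y‖ / ε + 2 ≤ Λ1 := by
    have : ‖x - y‖ / ε ≤ Λ' := by rw [div_le_iff₀ hε0, hΛ']; linarith
    linarith
  have hball : ball z s ⊆ interior (closedBall z s) := ball_subset_interior_closedBall
  have core := step2_core (Λ1 := Λ1) (e := e) (C0 := δ - R ^ 2) hu hv (hsub.trans hBΩ)
    (hHc x hxc) (hHc y hyc) (hball hx) (hball hy) hF hE hε0 hμ0 he0 he.symm ?_ ?_ (hH0 y hyc) hdist
  · refine real_fin (n := (N:ℝ)) (Λ' := Λ') (L := L) (R := R) (by positivity) hε0 he0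
      (hees.trans hes1) (by linarith) hμ hH00 hL hΛ'0 hR hg1 hg2 ?_ ?_ core
    · refine (hHL x hxc y hyc).trans ?_
      rw [hΛ']; gcongr
    · rw [← hKc]
      have : e * Kc ≤ es * Kc := by gcongr
      linarith
  · have c1 : ContinuousAt (fun w : ZN N => (mkW x (u x) + w.fst).snd - (mkW y (v y) + w.snd).snd)
        0 := by
      have : Continuous (fun w : ZN N => (mkW x (u x) + w.fst).snd - (mkW y (v y) + w.snd).snd) :=
        (sndL.continuous.comp (continuous_const.add (p1.continuous))).sub
          (sndL.continuous.comp (continuous_const.add (p2.continuous)))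
      exact this.continuousAt
    have c2 : ContinuousAt (fun w : ZN N => ‖(mkW x (u x) + w.fst).fst - x0‖ ^ 2 - R ^ 2) 0 := by
      have : Continuous (fun w : ZN N => ‖(mkW x (u x) + w.fst).fst - x0‖ ^ 2 - R ^ 2) :=
        (((fstL.continuous.comp (continuous_const.add (p1.continuous))).sub
          continuous_const).norm.pow 2).sub continuous_const
      exact this.continuousAt
    have z1 : (mkW x (u x) + (0 : ZN N).fst) = mkW x (u x) := add_zero _
    have z2 : (mkW y (v y) + (0 : ZN N).snd) = mkW y (v y) := add_zero _
    have ev1 := c1.tendsto.eventually_lt_const (u := 1) (by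
      rw [z1, z2]; show u x - v y < 1; linarith)
    have ev2 := c2.tendsto.eventually_const_lt (u := -(δ / 2)) (by rw [z1]; exact hd)
    filter_upwards [ev1, ev2] with w w1 w2 X hX Y hY hXe hYe
    rw [hXe, hYe] at w1
    rw [hXe] at w2
    exact hmin X hX Y hY (by linarith) w2.le
  · have : ε * μ * e⁻¹ * (2 * ‖x - x0‖) ≤ ε * (1 / 16) * (δ / 2)⁻¹ * (4 * R) := by gcongr
    refine this.trans ?_
    have e1 : ε * (1 / 16) * (δ / 2)⁻¹ * (4 * R) = (ε * R) / δ * (1 / 2) := by field_simp; norm_num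
    have e2 : (ε * R) / δ ≤ 1 := by rw [div_le_one hδ0]; exact hεR
    rw [e1]; linarith

end S2d

section S1a
variable {N : ℕ}

theorem step1_T2 (D : EN N) (P : WN N) {r τ f0 : ℝ} (m : ℝ) (hr : 0 < r) (hτ : 0 < τ)
    (hf0 : 0 < f0) :
    T2 (fun z : ZN N => r * (1 / 2 * Real.log (r ^ 2 + 2 * inner ℝ D (z.fst.fst - z.snd.fst)
          + ‖z.fst.fst - z.snd.fst‖ ^ 2)
        - Real.log (τ + (z.snd.snd - z.fst.snd))
        - m * Real.log (f0 + inner ℝ P z.fst - ‖z.fst.fst‖ ^ 2)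
        - (1 / 2 * Real.log (r ^ 2) - Real.log τ - m * Real.log f0)))
      0 (mkZ (mkW (r⁻¹ • D) (r / τ) + (-(r * m / f0)) • P) (-mkW (r⁻¹ • D) (r / τ)))
      (fun z => r * (‖z.fst.fst - z.snd.fst‖ ^ 2 / (2 * r ^ 2)
        - inner ℝ D (z.fst.fst - z.snd.fst) ^ 2 / r ^ 4
        + (z.snd.snd - z.fst.snd) ^ 2 / (2 * τ ^ 2)
        + m * ‖z.fst.fst‖ ^ 2 / f0 + m * inner ℝ P z.fst ^ 2 / (2 * f0 ^ 2))) := by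
  have h1 := (T2.log (c := r ^ 2) (by positivity)
    (mkZ (mkW ((2:ℝ) • D) 0) (-mkW ((2:ℝ) • D) 0)) (IsQ.normsq (dfL (N := N)))).cmul (r * (1 / 2))
  have h2 := (T2.log hτ (mkZ (mkW (0 : EN N) (-1)) (mkW 0 1)) IsQ.zero).cmul (-r)
  have h3 := (T2.log hf0 (mkZ P 0) ((IsQ.normsq (ffL (N := N))).cmul (-1))).cmul (-(r * m))
  have h4 := T2.quad (V := ZN N)
    (-r * (1 / 2 * Real.log (r ^ 2) - Real.log τ - m * Real.log f0)) 0 IsQ.zero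
  refine (((h1.add h2).add h3).add h4).congr (fun z => ?_) (by ring) ?_ (fun z => ?_)
  · have e1 : inner ℝ (mkZ (mkW ((2:ℝ) • D) 0) (-mkW ((2:ℝ) • D) 0)) z
        = 2 * inner ℝ D (z.fst.fst - z.snd.fst) := by
      simp only [inner_mkZ_z, innerW, mkW_fst, mkW_snd, inner_neg_left, inner_smul_left,
        conj_trivial, inner_sub_right]
      ring
    have e2 : inner ℝ (mkZ (mkW (0 : EN N) (-1)) (mkW 0 1)) z = z.snd.snd - z.fst.snd := by
      simp only [inner_mkZ_z, innerW, mkW_fst, mkW_snd, inner_zero_left]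
      ring
    have e3 : inner ℝ (mkZ P 0) z = inner ℝ P z.fst := by
      rw [inner_mkZ_z, inner_zero_left, add_zero]
    simp only [e1, e2, e3, dfL_apply, ffL_apply, inner_zero_left]
    rw [show f0 + inner ℝ P z.fst + -1 * ‖z.fst.fst‖ ^ 2
      = f0 + inner ℝ P z.fst - ‖z.fst.fst‖ ^ 2 by ring]
    simp only [add_zero]
    ring
  · simp only [mkZ_smul, mkZ_add, add_zero, smul_smul, smul_zero]
    congr 1
    · rw [← mkW_eta ((r * (1 / 2) * (r ^ 2)⁻¹) • mkW ((2:ℝ) • D) 0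
        + (-r * τ⁻¹) • mkW (0 : EN N) (-1))]
      congr 1
      · congr 1
        · show (r * (1 / 2) * (r ^ 2)⁻¹) • ((2:ℝ) • D) + (-r * τ⁻¹) • (0 : EN N) = _
          rw [smul_smul, smul_zero, add_zero]
          congr 1
          field_simp
        · show (r * (1 / 2) * (r ^ 2)⁻¹) * 0 + (-r * τ⁻¹) * (-1) = _
          field_simp
          ring
      · congr 1
        ring
    · rw [← mkW_eta (-mkW (r⁻¹ • D) (r / τ)), ← mkW_eta ((r * (1 / 2) * (r ^ 2)⁻¹) •
        (-mkW ((2:ℝ) • D) 0) + (-r * τ⁻¹) • mkW (0 : EN N) 1)]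
      congr 1
      · show (r * (1 / 2) * (r ^ 2)⁻¹) • (-((2:ℝ) • D)) + (-r * τ⁻¹) • (0 : EN N) = -(r⁻¹ • D)
        rw [smul_neg, smul_smul, smul_zero, add_zero]
        congr 2
        field_simp
      · show (r * (1 / 2) * (r ^ 2)⁻¹) * (-0) + (-r * τ⁻¹) * 1 = - (r / τ)
        field_simp
        ring
  · have e1 : inner ℝ (mkZ (mkW ((2:ℝ) • D) 0) (-mkW ((2:ℝ) • D) 0)) z
        = 2 * inner ℝ D (z.fst.fst - z.snd.fst) := by
      simp only [inner_mkZ_z, innerW, mkW_fst, mkW_snd, inner_neg_left, inner_smul_left,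
        conj_trivial, inner_sub_right]
      ring
    have e2 : inner ℝ (mkZ (mkW (0 : EN N) (-1)) (mkW 0 1)) z = z.snd.snd - z.fst.snd := by
      simp only [inner_mkZ_z, innerW, mkW_fst, mkW_snd, inner_zero_left]
      ring
    have e3 : inner ℝ (mkZ P 0) z = inner ℝ P z.fst := by
      rw [inner_mkZ_z, inner_zero_left, add_zero]
    simp only [e1, e2, e3, dfL_apply, ffL_apply]
    field_simp
    ring

theorem step1_pure {r τ f0 m a T Ad dl ph X e c : ℝ} (hr : 0 < r) (hτ : 0 < τ) (hf0 : 0 < f0)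
    (ha : a = r * m / (τ * f0)) (hA : Ad = r / τ * dl + τ * a * ph)
    (hT : T - Ad ^ 2 ≤ 4 * e ^ 2 * c ^ 2) (hdl : dl ^ 2 ≤ 4 * c ^ 2) :
    r * (T / (2 * r ^ 2) - (r * Ad) ^ 2 / r ^ 4 + dl ^ 2 / (2 * τ ^ 2) + m * X / f0
      + m * ph ^ 2 / (2 * f0 ^ 2)) ≤
    (2 * e ^ 2 / r + 2 / τ) * c ^ 2 + τ * a ^ 2 / 2 * ph ^ 2
      - τ * a * (m - 1) / (2 * f0) * ph ^ 2 + τ * a * X := by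
  have e1 : r * (T / (2 * r ^ 2) - (r * Ad) ^ 2 / r ^ 4 + dl ^ 2 / (2 * τ ^ 2) + m * X / f0
      + m * ph ^ 2 / (2 * f0 ^ 2)) = (T - Ad ^ 2) / (2 * r) - a * dl * ph
      - τ * a * (m - 1) / (2 * f0) * ph ^ 2 + τ * a * X := by
    rw [hA, ha]; field_simp; ring
  have e2 : -(a * dl * ph) ≤ dl ^ 2 / (2 * τ) + τ * a ^ 2 / 2 * ph ^ 2 := by
    have : dl ^ 2 / (2 * τ) + τ * a ^ 2 / 2 * ph ^ 2 + a * dl * ph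
      = (dl + τ * a * ph) ^ 2 / (2 * τ) := by field_simp; ring
    have h : 0 ≤ (dl + τ * a * ph) ^ 2 / (2 * τ) := by positivity
    linarith
  have e3 : (T - Ad ^ 2) / (2 * r) ≤ (4 * e ^ 2 * c ^ 2) / (2 * r) := by gcongr
  have e4 : dl ^ 2 / (2 * τ) ≤ 4 * c ^ 2 / (2 * τ) := by gcongr
  have e5 : (4 * e ^ 2 * c ^ 2) / (2 * r) + 4 * c ^ 2 / (2 * τ)
    = (2 * e ^ 2 / r + 2 / τ) * c ^ 2 := by field_simp; ring
  rw [e1]; linarith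

end S1a

section S1b
variable {N : ℕ}

theorem perp_bound {ν p : EN N} (hν : ‖ν‖ = 1) (s : ℝ) :
    ‖s • ν + p‖ ^ 2 - inner ℝ ν (s • ν + p) ^ 2 ≤ ‖p‖ ^ 2 := by
  rw [norm_add_sq_real, inner_add_right, inner_smul_right, inner_smul_left,
    real_inner_self_eq_norm_sq, norm_smul, hν]
  simp only [conj_trivial, Real.norm_eq_abs, mul_one, one_pow, sq_abs]
  nlinarith [sq_nonneg (inner ℝ ν p)]

theorem step1_core {Ω B : Set (EN N)} {u v H : EN N → ℝ} {xh yh z0 : EN N}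
    {H0 r τ f0 m a c κ M C1 e : ℝ}
    (hu : IsViscositySupersol Ω H u) (hv : IsViscositySubsol Ω H v) (hBΩ : B ⊆ Ω)
    (hHx : ContinuousAt H xh) (hHy : ContinuousAt H yh)
    (hxi : xh ∈ interior B) (hyi : yh ∈ interior B)
    (hF : IsClosed (epi B u)) (hE : IsClosed (hypo B v))
    (hr : ‖xh - yh‖ = r) (hr0 : 0 < r) (hτ : v yh - u xh = τ) (hτ0 : 0 < τ)
    (hf : c - ‖xh - z0‖ ^ 2 - κ * (u xh + M) = f0) (hf0 : 0 < f0) (hm : 2 ≤ m) (hκ : 0 < κ)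
    (ha : a = r * m / (τ * f0))
    (hmin : ∀ᶠ z in 𝓝 (0 : ZN N), ∀ X ∈ epi B u, ∀ Y ∈ hypo B v,
      mkW xh (u xh) + z.fst = X → mkW yh (v yh) + z.snd = Y →
      1 / 2 * Real.log (r ^ 2) - Real.log τ - m * Real.log f0 ≤
      1 / 2 * Real.log (‖X.fst - Y.fst‖ ^ 2) - Real.log (Y.snd - X.snd)
        - m * Real.log (c - ‖X.fst - z0‖ ^ 2 - κ * (X.snd + M)))
    (hC1 : ‖mkW ((-2 : ℝ) • (xh - z0)) (-κ)‖ ≤ C1) (he : e = τ * a * C1) (he2 : e ≤ 1 / 2)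
    (hη : r / τ ≤ 1 / 2) (hηe : 2 * C1 * (r / τ + e) ≤ κ / 2)
    (hH0 : |H yh| ≤ H0) :
    -(N / 2 * (e * H0 + 2 * |H xh - H yh|)) ≤
      4 * e ^ 4 / r + 5 * (τ * a ^ 2 * C1 ^ 2) - τ * a * (m - 1) / (2 * f0) * (κ ^ 2 / 4)
        + τ * a * N := by
  set D := xh - yh with hD
  set P : WN N := mkW ((-2 : ℝ) • (xh - z0)) (-κ) with hP
  have hPs : P.snd = -κ := rfl
  set ν : EN N := r⁻¹ • D with hν
  set η := r / τ with hηd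
  set b : WN N := mkW ν η with hb
  set w : WN N := (-(r * m / f0)) • P with hwd
  have ha0 : 0 < a := by rw [ha]; positivity
  have hη0 : 0 < η := by positivity
  have hC10 : 0 ≤ C1 := (norm_nonneg _).trans hC1
  have hta : τ * a = r * m / f0 := by rw [ha]; field_simp
  have hta0 : 0 < τ * a := by positivity
  have hwt : w = (-(τ * a)) • P := by rw [hta]
  have he0 : 0 ≤ e := by rw [he]; positivity
  have hwn : ‖w‖ ≤ e := by
    rw [hwt, norm_smul, Real.norm_eq_abs, abs_neg, abs_of_pos hta0, he]
    gcongr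
  have hνn : ‖ν‖ = 1 := by
    rw [hν, norm_smul, hr, norm_inv, Real.norm_of_nonneg hr0.le, inv_mul_cancel₀ hr0.ne']
  have hDν : D = r • ν := by rw [hν, smul_smul, mul_inv_cancel₀ hr0.ne', one_smul]
  have hbs : b.snd = η := rfl
  have hbf : b.fst = ν := rfl
  have hbws : (b + w).snd = η + τ * a * κ := by
    rw [W_add_snd, hbs, hwt, W_smul_snd, hPs]; ring
  have hb1 : 1 ≤ ‖b‖ := by
    have := normW_fst_le b
    rwa [hbf, hνn] at this
  have hbn : ‖b‖ ≤ 1 + η := by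
    have := normW_le b
    rwa [hbf, hνn, hbs, abs_of_pos hη0] at this
  obtain ⟨h, k, cc, mm, nn, hm1, hn1, hmm, hnn, hbw, hh, hk, hhk, hc, hq⟩ :=
    GTS2 hu hv hBΩ hHx hHy hxi hyi hF hE (step1_T2 D P m hr0 hτ0 hf0) (by
      filter_upwards [hmin] with z hz hX hY
      have := hz _ hX _ hY rfl rfl
      have a1 : ‖(mkW xh (u xh) + z.fst).fst - (mkW yh (v yh) + z.snd).fst‖ ^ 2
          = r ^ 2 + 2 * inner ℝ D (z.fst.fst - z.snd.fst) + ‖z.fst.fst - z.snd.fst‖ ^ 2 := by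
        have : (mkW xh (u xh) + z.fst).fst - (mkW yh (v yh) + z.snd).fst
            = D + (z.fst.fst - z.snd.fst) := by
          show (xh + z.fst.fst) - (yh + z.snd.fst) = _
          rw [hD]; abel
        rw [this, norm_add_sq_real, hr]
      have a2 : (mkW yh (v yh) + z.snd).snd - (mkW xh (u xh) + z.fst).snd
          = τ + (z.snd.snd - z.fst.snd) := by
        show (v yh + z.snd.snd) - (u xh + z.fst.snd) = _
        rw [← hτ]; ring
      have a3 : c - ‖(mkW xh (u xh) + z.fst).fst - z0‖ ^ 2
          - κ * ((mkW xh (u xh) + z.fst).snd + M)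
          = f0 + inner ℝ P z.fst - ‖z.fst.fst‖ ^ 2 := by
        have e1 : (mkW xh (u xh) + z.fst).fst - z0 = (xh - z0) + z.fst.fst := by
          show (xh + z.fst.fst) - z0 = _
          abel
        have e2 : (mkW xh (u xh) + z.fst).snd = u xh + z.fst.snd := rfl
        rw [e1, e2, norm_add_sq_real, innerW, hP, mkW_fst, mkW_snd, inner_smul_left, ← hf]
        simp only [conj_trivial]; ring
      rw [a1, a2, a3] at this
      refine mul_nonneg hr0.le ?_
      linarith) hb1 (by rw [← hwd]; linarith) (by rw [← hb, hbs]; exact hη0)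
        (by rw [← hb, ← hwd, hbws]; positivity) hH0
  rw [← hb] at hmm hnn hbw hq
  rw [← hwd] at hmm hbw hc hq
  have hbwn : ‖b + w‖ ≤ 2 := by
    have := norm_add_le b w
    linarith
  have hbw0 : 0 < ‖b + w‖ := by linarith
  have hinv : ‖b + w‖⁻¹ ≤ 2 := by
    rw [inv_le_comm₀ hbw0 two_pos]; linarith
  have hinv0 : 0 < ‖b + w‖⁻¹ := by positivity
  -- orthogonality
  have oh : ∀ j, inner ℝ (b + w) (h j) = 0 := by
    have h0 : ∑ j, inner ℝ (h j) mm ^ 2 = 0 := by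
      rw [hh, real_inner_self_eq_norm_sq, hm1]; norm_num
    rw [Finset.sum_eq_zero_iff_of_nonneg (fun _ _ => sq_nonneg _)] at h0
    intro j
    have h1 := pow_eq_zero_iff (two_ne_zero) |>.mp (h0 j (Finset.mem_univ j))
    rw [hmm, inner_smul_right, real_inner_comm] at h1
    exact (mul_eq_zero.mp h1).resolve_left hinv0.ne'
  have ok : ∀ j, inner ℝ b (k j) = 0 := by
    have h0 : ∑ j, inner ℝ (k j) nn ^ 2 = 0 := by
      rw [hk, real_inner_self_eq_norm_sq, hn1]; norm_num
    rw [Finset.sum_eq_zero_iff_of_nonneg (fun _ _ => sq_nonneg _)] at h0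
    intro j
    have h1 := pow_eq_zero_iff (two_ne_zero) |>.mp (h0 j (Finset.mem_univ j))
    rw [hnn, inner_smul_right, real_inner_comm] at h1
    exact (mul_eq_zero.mp h1).resolve_left (by positivity)
  have hS : (mm + nn).fst = (‖b + w‖⁻¹ + ‖b‖⁻¹) • ν + ‖b + w‖⁻¹ • w.fst := by
    rw [W_add_fst, hmm, hnn, W_smul_fst, W_smul_fst, W_add_fst, hbf, smul_add, add_smul]; abel
  have hSp : ‖(mm + nn).fst‖ ^ 2 - inner ℝ ν (mm + nn).fst ^ 2 ≤ 4 * e ^ 2 := by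
    rw [hS]
    refine (perp_bound hνn _).trans ?_
    rw [norm_smul, Real.norm_of_nonneg hinv0.le]
    have : ‖b + w‖⁻¹ * ‖w.fst‖ ≤ 2 * e := by
      have := (normW_fst_le w).trans hwn
      gcongr
    calc _ ≤ (2 * e) ^ 2 := by gcongr
      _ = _ := by ring
  have hSs : (mm + nn).snd ^ 2 ≤ 4 := by
    have h1 : |(mm + nn).snd| ≤ 2 := by
      refine (normW_snd_le _).trans ((norm_add_le _ _).trans ?_)
      rw [hm1, hn1]; norm_num
    rw [← sq_abs]
    calc _ ≤ (2:ℝ) ^ 2 := by gcongr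
      _ = _ := by norm_num
  have hqj : ∀ j, r * (‖(h j).fst - (k j).fst‖ ^ 2 / (2 * r ^ 2)
        - inner ℝ D ((h j).fst - (k j).fst) ^ 2 / r ^ 4
        + ((k j).snd - (h j).snd) ^ 2 / (2 * τ ^ 2)
        + m * ‖(h j).fst‖ ^ 2 / f0 + m * inner ℝ P (h j) ^ 2 / (2 * f0 ^ 2)) ≤
      (2 * e ^ 2 / r + 2 / τ) * cc j ^ 2 + τ * a ^ 2 / 2 * inner ℝ P (h j) ^ 2
      - τ * a * (m - 1) / (2 * f0) * inner ℝ P (h j) ^ 2 + τ * a * ‖(h j).fst‖ ^ 2 := by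
    intro j
    have hd1 : (h j).fst - (k j).fst = -(cc j • (mm + nn).fst) := by
      rw [← W_sub_fst, hhk, W_neg_fst, W_smul_fst]
    have hd2 : (k j).snd - (h j).snd = cc j * (mm + nn).snd := by
      have : (h j).snd - (k j).snd = -(cc j * (mm + nn).snd) := by
        rw [← W_sub_snd, hhk, W_neg_snd, W_smul_snd]
      linarith
    have hDD : inner ℝ D ((h j).fst - (k j).fst) = r * inner ℝ ν ((h j).fst - (k j).fst) := by
      rw [hDν, inner_smul_left]; simp
    rw [hDD]
    refine step1_pure hr0 hτ0 hf0 ha ?_ ?_ ?_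
    · have o1 := oh j
      have o2 := ok j
      rw [inner_add_left, hwt, inner_smul_left, innerW b, hbf, hbs] at o1
      rw [innerW b, hbf, hbs] at o2
      simp only [conj_trivial] at o1
      rw [inner_sub_right]
      linear_combination o1 - o2
    · rw [hd1, norm_neg, norm_smul, inner_neg_right, inner_smul_right, mul_pow,
        Real.norm_eq_abs, sq_abs]
      have := mul_le_mul_of_nonneg_left hSp (sq_nonneg (cc j))
      linear_combination this
    · rw [hd2, mul_pow]
      have := mul_le_mul_of_nonneg_left hSs (sq_nonneg (cc j))
      linear_combination this
  have s2 := sum_fst_sq_le hh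
  have hPsum : ∑ j, inner ℝ P (h j) ^ 2 = ‖P‖ ^ 2 - inner ℝ mm P ^ 2 := by
    rw [← hh]
    exact Finset.sum_congr rfl fun j _ => by rw [real_inner_comm]
  have s3 : ∑ j, inner ℝ P (h j) ^ 2 ≤ C1 ^ 2 := by
    rw [hPsum]
    have : ‖P‖ ^ 2 ≤ C1 ^ 2 := by gcongr
    linarith [sq_nonneg (inner ℝ mm P)]
  have s4 : κ ^ 2 / 4 ≤ ∑ j, inner ℝ P (h j) ^ 2 := by
    have e1 : ‖P - inner ℝ mm P • mm‖ ^ 2 = ‖P‖ ^ 2 - inner ℝ mm P ^ 2 := by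
      rw [norm_sub_sq_real, inner_smul_right, norm_smul, hm1, real_inner_comm mm P,
        Real.norm_eq_abs, mul_one, sq_abs]
      ring
    have e2 := normW_snd_le (P - inner ℝ mm P • mm)
    rw [W_sub_snd, W_smul_snd, hPs] at e2
    have e3 : |inner ℝ mm P| ≤ C1 := by
      have := abs_real_inner_le_norm mm P
      rw [hm1, one_mul] at this; linarith
    have e4 : |mm.snd| ≤ 2 * (η + e) := by
      rw [hmm, W_smul_snd, abs_mul, abs_of_pos hinv0, W_add_snd, hbs]
      have h1 : |η + w.snd| ≤ η + e := by
        refine (abs_add_le _ _).trans ?_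
        rw [abs_of_pos hη0]
        have := (normW_snd_le w).trans hwn
        linarith
      gcongr
    have e5 : |inner ℝ mm P * mm.snd| ≤ κ / 2 := by
      rw [abs_mul]
      calc _ ≤ C1 * (2 * (η + e)) := by gcongr
        _ ≤ _ := by linarith
    have e6 : κ / 2 ≤ ‖P - inner ℝ mm P • mm‖ := by
      have := neg_le_abs (-κ - inner ℝ mm P * mm.snd)
      have := neg_abs_le (inner ℝ mm P * mm.snd)
      linarith
    have e7 : (κ / 2) ^ 2 ≤ ‖P - inner ℝ mm P • mm‖ ^ 2 := by gcongr
    rw [hPsum, ← e1]; linarith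
  have hc2 : ∑ j, cc j ^ 2 ≤ 2 * e ^ 2 := by
    refine hc.trans ?_
    have := norm_nonneg w
    gcongr
  have hsum := Finset.sum_le_sum (s := Finset.univ) fun j _ => hqj j
  have hq' := hq.trans hsum
  rw [Finset.sum_add_distrib, Finset.sum_sub_distrib, Finset.sum_add_distrib, ← Finset.mul_sum,
    ← Finset.mul_sum, ← Finset.mul_sum, ← Finset.mul_sum] at hq'
  have l1 : N / 2 * (‖w‖ * H0 + ‖b + w‖ * |H xh - H yh|) ≤
      N / 2 * (e * H0 + 2 * |H xh - H yh|) := by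
    have : 0 ≤ H0 := (abs_nonneg _).trans hH0
    gcongr
  have l2 : (2 * e ^ 2 / r + 2 / τ) * ∑ j, cc j ^ 2 ≤ 4 * e ^ 4 / r + 4 * (τ * a ^ 2 * C1 ^ 2) := by
    calc _ ≤ (2 * e ^ 2 / r + 2 / τ) * (2 * e ^ 2) := by gcongr
      _ = 4 * e ^ 4 / r + 4 * e ^ 2 / τ := by ring
      _ = _ := by
        congr 1
        rw [he]; field_simp
  have l3 : τ * a ^ 2 / 2 * ∑ j, inner ℝ P (h j) ^ 2 ≤ τ * a ^ 2 * C1 ^ 2 := by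
    calc _ ≤ τ * a ^ 2 / 2 * C1 ^ 2 := by gcongr
      _ ≤ _ := by
        have : 0 ≤ τ * a ^ 2 * C1 ^ 2 := by positivity
        linarith
  have l4 : τ * a * (m - 1) / (2 * f0) * (κ ^ 2 / 4) ≤
      τ * a * (m - 1) / (2 * f0) * ∑ j, inner ℝ P (h j) ^ 2 := by
    have : 0 ≤ m - 1 := by linarith
    gcongr
  have l5 : τ * a * ∑ j, ‖(h j).fst‖ ^ 2 ≤ τ * a * N := by gcongr
  linarith

end S1b

section S1c
variable {N : ℕ}

theorem step1_fin {n m κ H0 L M σ r τ a f0 Hd e : ℝ} (hn : 0 ≤ n) (hm : 2 ≤ m)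
    (hH0 : 0 ≤ H0) (hL : 0 ≤ L) (hM : 0 < M)
    (hr : 0 < r) (hτ : 0 < τ) (hτM : τ ≤ 2 * M) (hf0 : 0 < f0) (hf1 : f0 ≤ 1)
    (ha : a = r * m / (τ * f0)) (haσ : a ≤ σ) (he : e = τ * a * 3)
    (hmk : 2 + n + n / 2 * (3 * H0 + 2 * L) < (m - 1) * κ ^ 2 / 8)
    (hσ1 : 45 * σ ≤ 1) (hσ2 : 1296 * M ^ 2 * σ ^ 2 * m ≤ 1)
    (hHd : Hd ≤ L * r)
    (h : -(n / 2 * (e * H0 + 2 * Hd)) ≤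
      4 * e ^ 4 / r + 5 * (τ * a ^ 2 * 3 ^ 2) - τ * a * (m - 1) / (2 * f0) * (κ ^ 2 / 4)
        + τ * a * n) : False := by
  have ha0 : 0 < a := by rw [ha]; positivity
  have hrr : r = τ * a * f0 / m := by rw [ha]; field_simp
  have hrle : r ≤ τ * a := by
    rw [hrr, div_le_iff₀ (by linarith)]
    have : τ * a * f0 ≤ τ * a * 1 := by gcongr
    have : τ * a * 1 ≤ τ * a * m := by gcongr; linarith
    linarith
  have h1 : n / 2 * (e * H0 + 2 * Hd) ≤ τ * a * (n / 2 * (3 * H0 + 2 * L)) := by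
    calc _ ≤ n / 2 * (e * H0 + 2 * (L * (τ * a))) := by
          gcongr; exact hHd.trans (by gcongr)
      _ = _ := by rw [he]; ring
  have h2 : 4 * e ^ 4 / r = τ * a * (324 * τ ^ 2 * a ^ 2 * m / f0) := by
    rw [he, hrr]; field_simp; norm_num
  have h3 : τ ^ 2 ≤ (2 * M) ^ 2 := by gcongr
  have h4 : 324 * τ ^ 2 * a ^ 2 * m ≤ 1 := by
    calc 324 * τ ^ 2 * a ^ 2 * m ≤ 324 * (2 * M) ^ 2 * σ ^ 2 * m := by gcongr
      _ = 1296 * M ^ 2 * σ ^ 2 * m := by ring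
      _ ≤ 1 := hσ2
  have h5 : τ * a * (f0 * (n / 2 * (3 * H0 + 2 * L)) + 324 * τ ^ 2 * a ^ 2 * m + f0 * (45 * a)
      + f0 * n - (m - 1) * κ ^ 2 / 8) = f0 * (τ * a * (n / 2 * (3 * H0 + 2 * L))
      + τ * a * (324 * τ ^ 2 * a ^ 2 * m / f0) + 5 * (τ * a ^ 2 * 3 ^ 2)
      - τ * a * (m - 1) / (2 * f0) * (κ ^ 2 / 4) + τ * a * n) := by
    field_simp
    ring
  have h6 : 0 ≤ τ * a * (f0 * (n / 2 * (3 * H0 + 2 * L)) + 324 * τ ^ 2 * a ^ 2 * m + f0 * (45 * a)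
      + f0 * n - (m - 1) * κ ^ 2 / 8) := by
    rw [h5]
    refine mul_nonneg hf0.le ?_
    rw [← h2]; linarith
  have h7 := nonneg_of_mul_nonneg_right h6 (by positivity)
  have g1 : f0 * (n / 2 * (3 * H0 + 2 * L)) ≤ 1 * (n / 2 * (3 * H0 + 2 * L)) := by gcongr
  have g2 : f0 * (45 * a) ≤ 1 * (45 * σ) := by gcongr
  have g3 : f0 * n ≤ 1 * n := by gcongr
  linarith

theorem step1_eps {Ω : Set (EN N)} {u v H : EN N → ℝ} {z0 : EN N} {R1 L H0 M c κ σ : ℝ} {m : ℕ}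
    (hu : IsViscositySupersol Ω H u) (hv : IsViscositySubsol Ω H v)
    (hBΩ : closedBall z0 R1 ⊆ Ω) (hR1 : 0 < R1)
    (hF : IsClosed (epi (closedBall z0 R1) u)) (hE : IsClosed (hypo (closedBall z0 R1) v))
    (hM0 : 0 < M) (hM : ∀ x ∈ closedBall z0 R1, -M ≤ u x ∧ v x ≤ M)
    (hvu : ∀ x ∈ closedBall z0 R1, v x < u x)
    (hHc : ∀ x ∈ closedBall z0 R1, ContinuousAt H x) (hL : 0 ≤ L)
    (hHL : ∀ x ∈ closedBall z0 R1, ∀ y ∈ closedBall z0 R1, |H x - H y| ≤ L * ‖x - y‖)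
    (hH0 : ∀ x ∈ closedBall z0 R1, |H x| ≤ H0)
    (hc1 : c ≤ 1) (hcR : c ≤ (R1 / 2) ^ 2) (hκ : 0 < κ) (hκ1 : κ ≤ 1) (hm : 2 ≤ m) (hσ : 0 < σ)
    (hmk : 2 + (N:ℝ) + N / 2 * (3 * H0 + 2 * L) < ((m:ℝ) - 1) * κ ^ 2 / 8)
    (hσ1 : 45 * σ ≤ 1) (hσ2 : 1296 * M ^ 2 * σ ^ 2 * m ≤ 1) (hσ3 : 12 * M * σ ≤ 1)
    (hσ4 : 6 * σ * (1 + 6 * M) ≤ κ / 2) (hσ5 : 4 * M * σ ≤ R1)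
    {x1 y1 : EN N} (hx1 : x1 ∈ closedBall z0 R1) (hy1 : y1 ∈ closedBall z0 R1)
    (hpos : 0 < v y1 - u x1) (hφ1 : 0 < c - ‖x1 - z0‖ ^ 2 - κ * (u x1 + M)) :
    (v y1 - u x1) * (σ / m) * (c - ‖x1 - z0‖ ^ 2 - κ * (u x1 + M)) ^ m ≤ ‖x1 - y1‖ := by
  by_contra hcon
  push Not at hcon
  set B := closedBall z0 R1 with hB
  have hcf : Continuous (fun p : WN N × WN N => p.1.fst) := fstL.continuous.comp continuous_fst
  have hcf2 : Continuous (fun p : WN N × WN N => p.2.fst) := fstL.continuous.comp continuous_snd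
  have hcs : Continuous (fun p : WN N × WN N => p.1.snd) := sndL.continuous.comp continuous_fst
  have hcs2 : Continuous (fun p : WN N × WN N => p.2.snd) := sndL.continuous.comp continuous_snd
  set ph : WN N × WN N → ℝ := fun p => c - ‖p.1.fst - z0‖ ^ 2 - κ * (p.1.snd + M) with hph
  have hphc : Continuous ph := (continuous_const.sub ((hcf.sub continuous_const).norm.pow 2)).sub
    (continuous_const.mul (hcs.add continuous_const))
  have hK := (compact_pairs (C := 0) isBounded_closedBall hF hE hM).inter_right
    (isClosed_le (continuous_const (y := (0:ℝ))) hphc)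
  set K := {p : WN N × WN N | p.1 ∈ epi B u ∧ p.2 ∈ hypo B v ∧ p.1.snd ≤ p.2.snd + 0}
    ∩ {p | 0 ≤ ph p} with hKd
  have hKne : ∀ p ∈ K, 0 < ‖p.1.fst - p.2.fst‖ := by
    rintro p ⟨⟨⟨h1, h2⟩, ⟨h3, h4⟩, h5⟩, -⟩
    rw [norm_pos_iff, sub_ne_zero]
    intro h
    rw [← h] at h4
    have := hvu _ h1
    linarith
  set f : WN N × WN N → ℝ := fun p => (p.2.snd - p.1.snd) * ph p ^ m / ‖p.1.fst - p.2.fst‖ with hf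
  have hfc : ContinuousOn f K :=
    ((hcs2.sub hcs).mul (hphc.pow m)).continuousOn.div (hcf.sub hcf2).norm.continuousOn
      (fun p hp => (hKne p hp).ne')
  have hmem1 : (mkW x1 (u x1), mkW y1 (v y1)) ∈ K :=
    ⟨⟨⟨hx1, le_refl _⟩, ⟨hy1, le_refl _⟩, by
      show u x1 ≤ v y1 + 0
      linarith⟩, hφ1.le⟩
  obtain ⟨p, hp, hpm⟩ := hK.exists_isMaxOn ⟨_, hmem1⟩ hfc
  have hm0 : (0:ℝ) < m := by
    have : 0 < m := by omega
    exact_mod_cast this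
  have hm2 : (2:ℝ) ≤ m := by exact_mod_cast hm
  have hf1 : m / σ < f (mkW x1 (u x1), mkW y1 (v y1)) := by
    have hn := hKne _ hmem1
    simp only [mkW_fst] at hn
    show m / σ < (v y1 - u x1) * (c - ‖x1 - z0‖ ^ 2 - κ * (u x1 + M)) ^ m / ‖x1 - y1‖
    rw [lt_div_iff₀ hn, div_mul_eq_mul_div, div_lt_iff₀ hσ]
    have e := mul_lt_mul_of_pos_left hcon hm0
    have e2 : (m:ℝ) * ((v y1 - u x1) * (σ / m) * (c - ‖x1 - z0‖ ^ 2 - κ * (u x1 + M)) ^ m)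
        = (v y1 - u x1) * (c - ‖x1 - z0‖ ^ 2 - κ * (u x1 + M)) ^ m * σ := by field_simp
    rw [← e2]; exact e
  have hfp : m / σ < f p := hf1.trans_le (isMaxOn_iff.mp hpm _ hmem1)
  have hn := hKne _ hp
  obtain ⟨⟨⟨hx, hxs⟩, ⟨hy, hys⟩, hst⟩, hphp⟩ := id hp
  have hphp : 0 ≤ ph p := hphp
  have hst0 : 0 ≤ p.2.snd - p.1.snd := by linarith
  have hmσ : 0 < m / σ := by positivity
  have hprod : 0 < (p.2.snd - p.1.snd) * ph p ^ m := by
    have h1 : 0 < f p := hmσ.trans hfp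
    rcases (mul_nonneg hst0 (pow_nonneg hphp m)).lt_or_eq with h | h
    · exact h
    · simp only [hf] at h1
      rw [← h, zero_div] at h1
      exact absurd h1 (lt_irrefl _)
  have hst1 : 0 < p.2.snd - p.1.snd := by
    rcases hst0.lt_or_eq with h | h
    · exact h
    · rw [← h, zero_mul] at hprod; exact absurd hprod (lt_irrefl _)
  have hph1 : 0 < ph p := by
    rcases hphp.lt_or_eq with h | h
    · exact h
    · rw [← h, zero_pow (by omega), mul_zero] at hprod; exact absurd hprod (lt_irrefl _)
  obtain ⟨x, hxd⟩ : ∃ x, x = p.1.fst := ⟨_, rfl⟩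
  obtain ⟨y, hyd⟩ : ∃ y, y = p.2.fst := ⟨_, rfl⟩
  obtain ⟨r, hr⟩ : ∃ r, ‖x - y‖ = r := ⟨_, rfl⟩
  obtain ⟨τ, hτ⟩ : ∃ τ, v y - u x = τ := ⟨_, rfl⟩
  obtain ⟨f0, hf0⟩ : ∃ f0, c - ‖x - z0‖ ^ 2 - κ * (u x + M) = f0 := ⟨_, rfl⟩
  rw [← hxd] at hx hxs
  rw [← hyd] at hy hys
  have hphle : ph p ≤ f0 := by
    simp only [hph]
    rw [← hf0, ← hxd]
    gcongr
  have hτle : p.2.snd - p.1.snd ≤ τ := by rw [← hτ]; linarith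
  have hτ0 : 0 < τ := by linarith
  have hf00 : 0 < f0 := by linarith
  have hr0 : 0 < r := by rw [← hr, hxd, hyd]; exact hn
  obtain ⟨F, hFd⟩ : ∃ F, F = τ * f0 ^ m / r := ⟨_, rfl⟩
  have hpF : f p ≤ F := by
    rw [hFd]
    simp only [hf]
    rw [← hxd, ← hyd, hr]
    gcongr
  have hmemx : (mkW x (u x), mkW y (v y)) ∈ K :=
    ⟨⟨⟨hx, le_refl _⟩, ⟨hy, le_refl _⟩, by
      show u x ≤ v y + 0
      linarith⟩, by
      show 0 ≤ c - ‖x - z0‖ ^ 2 - κ * (u x + M)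
      rw [hf0]; exact hf00.le⟩
  have hmaxF : ∀ q ∈ K, f q ≤ F := fun q hq => (isMaxOn_iff.mp hpm q hq).trans hpF
  have hF0 : m / σ < F := hfp.trans_le hpF
  -- bounds
  have hMx := hM x hx
  have hMy := hM y hy
  have hτM : τ ≤ 2 * M := by linarith [hMx.1, hMy.2]
  have hκu : 0 ≤ κ * (u x + M) := mul_nonneg hκ.le (by linarith [hMx.1])
  have hxc : ‖x - z0‖ ^ 2 < c := by linarith
  have hf01 : f0 ≤ 1 := by linarith [sq_nonneg ‖x - z0‖]
  have hxR : ‖x - z0‖ < R1 / 2 := lt_of_pow_lt_pow_left₀ 2 (by positivity) (by linarith)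
  have hx1' : ‖x - z0‖ ≤ 1 := by
    have : ‖x - z0‖ < 1 := lt_of_pow_lt_pow_left₀ 2 (by positivity) (by linarith)
    exact this.le
  -- r / τ
  have hηle : r / τ * (m / σ) ≤ f0 ^ m := by
    have h1 : r / τ * (m / σ) ≤ r / τ * F := by gcongr
    have h2 : r / τ * F = f0 ^ m := by rw [hFd]; field_simp
    linarith
  have ham : r * m / (τ * f0) ≤ σ := by
    have h1 : f0 ^ m ≤ f0 := pow_le_of_le_one hf00.le hf01 (by omega)
    have h2 : r / τ * (m / σ) ≤ f0 := hηle.trans h1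
    have h3 : r * m / (τ * f0) = (r / τ * (m / σ)) * (σ / f0) := by field_simp
    rw [h3]
    calc _ ≤ f0 * (σ / f0) := by gcongr
      _ = σ := by field_simp
  have hησ : r / τ ≤ σ := by
    have h1 : f0 ^ m ≤ 1 := pow_le_one₀ hf00.le hf01
    have h2 : r / τ * (m / σ) ≤ 1 := hηle.trans h1
    have h3 : r / τ * 1 ≤ r / τ * m := by gcongr; linarith
    have h4 : r / τ * m ≤ σ := by
      rw [← mul_div_assoc, div_le_one hσ] at h2; exact h2
    linarith
  obtain ⟨a, ha⟩ : ∃ a, a = r * m / (τ * f0) := ⟨_, rfl⟩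
  obtain ⟨e, he⟩ : ∃ e, e = τ * a * 3 := ⟨_, rfl⟩
  have ha0 : 0 < a := by rw [ha]; positivity
  have haσ : a ≤ σ := by rw [ha]; exact ham
  have hele : e ≤ 6 * M * σ := by
    have : τ * a ≤ 2 * M * σ := by gcongr
    linarith
  have hyR : ‖y - z0‖ < R1 := by
    have h1 : r ≤ 2 * M * σ := by
      rw [div_le_iff₀ hτ0] at hησ
      have : σ * τ ≤ σ * (2 * M) := by gcongr
      linarith
    have h2 := norm_sub_le (x - z0) (x - y)
    rw [show x - z0 - (x - y) = y - z0 by abel] at h2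
    linarith
  have hball : ball z0 R1 ⊆ interior (closedBall z0 R1) := ball_subset_interior_closedBall
  have hxi : x ∈ interior B := hball (by rw [mem_ball, dist_eq_norm]; linarith)
  have hyi : y ∈ interior B := hball (by rw [mem_ball, dist_eq_norm]; linarith)
  have core := step1_core (Ω := Ω) (H := H) (m := (m:ℝ)) (C1 := 3) (e := e) (H0 := H0) hu hv hBΩ (hHc x hx)
    (hHc y hy) hxi hyi hF hE hr hr0 hτ hτ0 hf0 hf00 hm2 hκ ha ?_ ?_ he (by linarith) (by linarith) ?_
    (hH0 y hy)
  · exact step1_fin (by positivity) hm2 ((abs_nonneg _).trans (hH0 x hx)) hL hM0 hr0 hτ0 hτM hf00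
      hf01 ha haσ he hmk hσ1 hσ2 (by rw [← hr]; exact hHL x hx y hy) core
  · have c1 : ContinuousAt (fun w : ZN N => (mkW y (v y) + w.snd).snd - (mkW x (u x) + w.fst).snd)
        0 := by
      have : Continuous (fun w : ZN N => (mkW y (v y) + w.snd).snd - (mkW x (u x) + w.fst).snd) :=
        (sndL.continuous.comp (continuous_const.add (p2.continuous))).sub
          (sndL.continuous.comp (continuous_const.add (p1.continuous)))
      exact this.continuousAt
    have c2 : ContinuousAt (fun w : ZN N => c - ‖(mkW x (u x) + w.fst).fst - z0‖ ^ 2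
        - κ * ((mkW x (u x) + w.fst).snd + M)) 0 := by
      have : Continuous (fun w : ZN N => c - ‖(mkW x (u x) + w.fst).fst - z0‖ ^ 2
          - κ * ((mkW x (u x) + w.fst).snd + M)) :=
        (continuous_const.sub (((fstL.continuous.comp (continuous_const.add (p1.continuous))).sub
          continuous_const).norm.pow 2)).sub (continuous_const.mul
            ((sndL.continuous.comp (continuous_const.add (p1.continuous))).add continuous_const))
      exact this.continuousAt
    have z1 : (mkW x (u x) + (0 : ZN N).fst) = mkW x (u x) := add_zero _
    have z2 : (mkW y (v y) + (0 : ZN N).snd) = mkW y (v y) := add_zero _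
    have ev1 := c1.tendsto.eventually_const_lt (u := 0) (by
      rw [z1, z2]; show 0 < v y - u x; linarith)
    have ev2 := c2.tendsto.eventually_const_lt (u := 0) (by
      rw [z1]; show 0 < c - ‖x - z0‖ ^ 2 - κ * (u x + M); linarith)
    filter_upwards [ev1, ev2] with w w1 w2 X hX Y hY hXe hYe
    rw [hXe, hYe] at w1
    rw [hXe] at w2
    have hXY : (X, Y) ∈ K := ⟨⟨hX, hY, by show X.snd ≤ Y.snd + 0; linarith⟩, w2.le⟩
    have hle := hmaxF _ hXY
    have hnn := hKne _ hXY
    simp only [] at hnn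
    have hle : (Y.snd - X.snd) * (c - ‖X.fst - z0‖ ^ 2 - κ * (X.snd + M)) ^ m / ‖X.fst - Y.fst‖
      ≤ τ * f0 ^ m / r := hFd ▸ hle
    have hlog := Real.log_le_log (by positivity) hle
    rw [Real.log_div (by positivity) hnn.ne', Real.log_mul w1.ne' (by positivity), Real.log_pow,
      Real.log_div (by positivity) hr0.ne', Real.log_mul hτ0.ne' (by positivity), Real.log_pow]
      at hlog
    rw [Real.log_pow, Real.log_pow]
    push_cast
    linarith
  · refine (normW_le _).trans ?_
    rw [mkW_fst, mkW_snd, norm_smul, abs_neg, abs_of_pos hκ]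
    have : ‖(-2:ℝ)‖ = 2 := by norm_num
    rw [this]; linarith
  · have : 2 * 3 * (r / τ + e) ≤ 2 * 3 * (σ + 6 * M * σ) := by gcongr
    linarith

end S1c

section S1d
variable {N : ℕ}

theorem step1 {Ω : Set (EN N)} {u v H : EN N → ℝ} {z0 : EN N} {R1 L H0 M : ℝ}
    (hu : IsViscositySupersol Ω H u) (hv : IsViscositySubsol Ω H v)
    (hBΩ : closedBall z0 R1 ⊆ Ω) (hR1 : 0 < R1)
    (hul : LowerSemicontinuousOn u (closedBall z0 R1))
    (hvu : UpperSemicontinuousOn v (closedBall z0 R1))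
    (hM1 : 1 ≤ M) (hM : ∀ x ∈ closedBall z0 R1, -M ≤ u x ∧ v x ≤ M)
    (hle : ∀ x ∈ closedBall z0 R1, v x ≤ u x)
    (hHc : ∀ x ∈ closedBall z0 R1, ContinuousAt H x) (hL : 0 ≤ L)
    (hHL : ∀ x ∈ closedBall z0 R1, ∀ y ∈ closedBall z0 R1, |H x - H y| ≤ L * ‖x - y‖)
    (hH0 : ∀ x ∈ closedBall z0 R1, |H x| ≤ H0) :
    ∃ Λ ≥ 0, ∃ ρ0 > 0, ρ0 ≤ R1 ∧ ∀ x ∈ closedBall z0 ρ0, ∀ y ∈ closedBall z0 R1,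
      v y - u x ≤ Λ * ‖x - y‖ := by
  have hM0 : 0 < M := by linarith
  obtain ⟨c, hc⟩ : ∃ c, c = min 1 ((R1 / 2) ^ 2) := ⟨_, rfl⟩
  have hc0 : 0 < c := by rw [hc]; exact lt_min one_pos (by positivity)
  have hc1 : c ≤ 1 := by rw [hc]; exact min_le_left _ _
  have hcR : c ≤ (R1 / 2) ^ 2 := by rw [hc]; exact min_le_right _ _
  obtain ⟨κ, hκ⟩ : ∃ κ, κ = c / (8 * M) := ⟨_, rfl⟩
  have hκ0 : 0 < κ := by rw [hκ]; positivity
  have hκM : κ * (2 * M) = c / 4 := by rw [hκ]; field_simp; norm_num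
  have hκ1 : κ ≤ 1 := by
    rw [hκ, div_le_one (by positivity)]; linarith
  obtain ⟨m0, hm0⟩ := exists_nat_gt ((2 + (N:ℝ) + N / 2 * (3 * H0 + 2 * L)) * 8 / κ ^ 2)
  obtain ⟨m, hm⟩ : ∃ m, m = m0 + 2 := ⟨_, rfl⟩
  have hm2 : 2 ≤ m := by omega
  have hmr : (m:ℝ) = m0 + 2 := by rw [hm]; push_cast; ring
  have hmp : (0:ℝ) < m := by rw [hmr]; positivity
  have hmk : 2 + (N:ℝ) + N / 2 * (3 * H0 + 2 * L) < ((m:ℝ) - 1) * κ ^ 2 / 8 := by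
    rw [div_lt_iff₀ (by positivity)] at hm0
    have : (m0:ℝ) * κ ^ 2 ≤ ((m:ℝ) - 1) * κ ^ 2 := by
      gcongr; linarith
    linarith
  obtain ⟨σ, hσ⟩ : ∃ σ, σ = min (min (1 / 45) (1 / (1296 * M ^ 2 * m)))
      (min (min (1 / (12 * M)) (κ / (12 * (1 + 6 * M)))) (R1 / (4 * M))) := ⟨_, rfl⟩
  have hσ0 : 0 < σ := by
    rw [hσ]
    exact lt_min (lt_min (by positivity) (by positivity))
      (lt_min (lt_min (by positivity) (by positivity)) (by positivity))
  have q1 : σ ≤ 1 / 45 := by rw [hσ]; exact (min_le_left _ _).trans (min_le_left _ _)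
  have q2 : σ ≤ 1 / (1296 * M ^ 2 * m) := by
    rw [hσ]; exact (min_le_left _ _).trans (min_le_right _ _)
  have q3 : σ ≤ 1 / (12 * M) := by
    rw [hσ]; exact (min_le_right _ _).trans ((min_le_left _ _).trans (min_le_left _ _))
  have q4 : σ ≤ κ / (12 * (1 + 6 * M)) := by
    rw [hσ]; exact (min_le_right _ _).trans ((min_le_left _ _).trans (min_le_right _ _))
  have q5 : σ ≤ R1 / (4 * M) := by
    rw [hσ]; exact (min_le_right _ _).trans (min_le_right _ _)
  rw [le_div_iff₀ (by positivity)] at q2 q3 q4 q5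
  have hσ2 : 1296 * M ^ 2 * σ ^ 2 * m ≤ 1 := by
    have : σ * (1296 * M ^ 2 * m) * σ ≤ 1 * 1 := by gcongr; linarith
    linarith
  obtain ⟨η, hη⟩ : ∃ η, η = σ / m * (c / 2) ^ m := ⟨_, rfl⟩
  have hη0 : 0 < η := by rw [hη]; positivity
  have hsq : Real.sqrt c ^ 2 = c := Real.sq_sqrt hc0.le
  have hs0 : 0 < Real.sqrt c := Real.sqrt_pos.mpr hc0
  have hρR : Real.sqrt c / 2 ≤ R1 := by
    have : Real.sqrt c ≤ R1 / 2 := Real.sqrt_le_iff.mpr ⟨by positivity, hcR⟩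
    linarith
  refine ⟨1 / η, by positivity, Real.sqrt c / 2, by positivity, hρR, fun x hx y hy => ?_⟩
  refine le_of_forall_pos_le_add fun ε hε => ?_
  have hxB : x ∈ closedBall z0 R1 := closedBall_subset_closedBall hρR hx
  by_cases hpos : 0 < (v y - ε) - u x
  swap
  · push Not at hpos
    have : 0 ≤ 1 / η * ‖x - y‖ := by positivity
    linarith
  have hMx := hM x hxB
  have hMy := hM y hy
  have hxn : ‖x - z0‖ ^ 2 ≤ c / 4 := by
    rw [mem_closedBall, dist_eq_norm] at hx
    calc ‖x - z0‖ ^ 2 ≤ (Real.sqrt c / 2) ^ 2 := by gcongr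
      _ = c / 4 := by rw [div_pow, hsq]; norm_num
  have hκu : κ * (u x + M) ≤ κ * (2 * M) := by gcongr; linarith [hMy.2]
  have hφ : c / 2 ≤ c - ‖x - z0‖ ^ 2 - κ * (u x + M) := by linarith
  have hvε : UpperSemicontinuousOn (fun x => v x - ε) (closedBall z0 R1) := by
    have h1 : UpperSemicontinuousOn (fun _ : EN N => -ε) (closedBall z0 R1) :=
      upperSemicontinuousOn_const
    exact hvu.add h1
  have key := step1_eps hu (visc_shift' hv ε) hBΩ hR1 (isClosed_epi isClosed_closedBall hul)
    (isClosed_hypo isClosed_closedBall hvε) hM0 (fun x hx => ⟨(hM x hx).1, by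
      have := (hM x hx).2
      show v x - ε ≤ M
      linarith⟩) (fun x hx => by
      have := hle x hx
      show v x - ε < u x
      linarith) hHc hL hHL hH0 hc1 hcR hκ0 hκ1 hm2 hσ0 hmk (by linarith) hσ2 (by linarith)
    (by linarith) (by linarith) hxB hy hpos (by linarith)
  have h2 : (v y - ε - u x) * η ≤ ‖x - y‖ := by
    refine le_trans ?_ key
    rw [hη, ← mul_assoc]
    show (v y - ε - u x) * (σ / m) * (c / 2) ^ m ≤ (v y - ε - u x) * (σ / m) * _
    gcongr
  rw [← le_div_iff₀ hη0] at h2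
  rw [one_div_mul_eq_div]
  linarith

end S1d

section Asm
variable {N : ℕ}

theorem loc_contra {Ω : Set (EN N)} {u v H : EN N → ℝ} {z x0 : EN N} {R : ℝ}
    (hΩo : IsOpen Ω) (hH : LocLipschitzOn Ω H)
    (hu : IsViscositySupersol Ω H u) (hv : IsViscositySubsol Ω H v)
    (hul : LowerSemicontinuousOn u Ω) (hvu : UpperSemicontinuousOn v Ω)
    (hle : ∀ x ∈ Ω, v x ≤ u x) (hz : z ∈ Ω) (huv : u z = v z) (hR : 0 < R) (hzR : ‖z - x0‖ = R)
    (hst : ∀ x ∈ Ω, ‖x - x0‖ ≤ R → x ≠ z → v x < u x) : False := by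
  obtain ⟨L, t, ht, hLt⟩ := hH z hz
  rw [hΩo.nhdsWithin_eq hz] at ht
  obtain ⟨ρ, hρ, hρt⟩ := Metric.mem_nhds_iff.mp (inter_mem ht (hΩo.mem_nhds hz))
  obtain ⟨R1, hR1⟩ : ∃ R1, R1 = ρ / 2 := ⟨_, rfl⟩
  have hR10 : 0 < R1 := by rw [hR1]; positivity
  have hcb : closedBall z R1 ⊆ ball z ρ := closedBall_subset_ball (by rw [hR1]; linarith)
  have hBΩ : closedBall z R1 ⊆ Ω := fun x hx => (hρt (hcb hx)).2
  have hBt : closedBall z R1 ⊆ t := fun x hx => (hρt (hcb hx)).1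
  have hHc : ∀ x ∈ closedBall z R1, ContinuousAt H x := fun x hx =>
    hLt.continuousOn.continuousAt (mem_of_superset (isOpen_ball.mem_nhds (hcb hx))
      (fun y hy => (hρt hy).1))
  have hHL : ∀ x ∈ closedBall z R1, ∀ y ∈ closedBall z R1, |H x - H y| ≤ L * ‖x - y‖ := by
    intro x hx y hy
    have := hLt.dist_le_mul x (hBt hx) y (hBt hy)
    rwa [Real.dist_eq, dist_eq_norm] at this
  have hzB : z ∈ closedBall z R1 := mem_closedBall_self hR10.le
  have hH0 : ∀ x ∈ closedBall z R1, |H x| ≤ |H z| + L * R1 := by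
    intro x hx
    have h1 := hHL x hx z hzB
    have h2 : |H x| ≤ |H x - H z| + |H z| := by
      have := abs_add_le (H x - H z) (H z)
      rwa [sub_add_cancel] at this
    rw [mem_closedBall, dist_eq_norm] at hx
    have h3 : (L:ℝ) * ‖x - z‖ ≤ L * R1 := by gcongr
    linarith
  have hul1 := hul.mono hBΩ
  have hvu1 := hvu.mono hBΩ
  obtain ⟨a, ha, hamin⟩ := hul1.exists_isMinOn ⟨z, hzB⟩ (isCompact_closedBall z R1)
  obtain ⟨b, hb, hbmax⟩ := hvu1.exists_isMaxOn ⟨z, hzB⟩ (isCompact_closedBall z R1)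
  obtain ⟨M, hMd⟩ : ∃ M, M = 1 + |u a| + |v b| := ⟨_, rfl⟩
  have hM : ∀ x ∈ closedBall z R1, -M ≤ u x ∧ v x ≤ M := by
    intro x hx
    have h1 := isMinOn_iff.mp hamin x hx
    have h2 := isMaxOn_iff.mp hbmax x hx
    have h3 := neg_abs_le (u a)
    have h4 := le_abs_self (v b)
    have h5 := abs_nonneg (u a)
    have h6 := abs_nonneg (v b)
    constructor <;> linarith
  have hM1 : 1 ≤ M := by
    have h5 := abs_nonneg (u a)
    have h6 := abs_nonneg (v b)
    linarith
  obtain ⟨Λ, hΛ0, ρ0, hρ0, hρR, hΛ⟩ := step1 hu hv hBΩ hR10 hul1 hvu1 hM1 hM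
    (fun x hx => hle x (hBΩ hx)) hHc L.2 hHL hH0
  have hsub : closedBall z ρ0 ⊆ closedBall z R1 := closedBall_subset_closedBall hρR
  exact step2 hu hv (hsub.trans hBΩ) hρ0 hR hzR huv (hul1.mono hsub) (hvu1.mono hsub)
    (fun x hx => hM x (hsub hx)) hΛ0 (fun x hx y hy => hΛ x hx y (hsub hy))
    (fun x hx => hst x (hBΩ (hsub hx))) (fun x hx => hHc x (hsub hx)) L.2
    (fun x hx y hy => hHL x (hsub hx) y (hsub hy)) (fun x hx => hH0 x (hsub hx))

theorem propagation {Ω : Set (EN N)} {u v H : EN N → ℝ}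
    (hΩo : IsOpen Ω) (hΩc : IsConnected Ω) (hH : LocLipschitzOn Ω H)
    (hu : IsViscositySupersol Ω H u) (hv : IsViscositySubsol Ω H v)
    (hul : LowerSemicontinuousOn u Ω) (hvu : UpperSemicontinuousOn v Ω)
    (hle : ∀ x ∈ Ω, v x ≤ u x) {p : EN N} (hp : p ∈ Ω) (hpe : u p = v p) :
    ∀ x ∈ Ω, u x = v x := by
  by_contra hcon
  push Not at hcon
  obtain ⟨p', hp', hpe'⟩ := hcon
  set U : Set (EN N) := {x | x ∈ Ω ∧ v x < u x} with hU
  set K : Set (EN N) := {x | x ∈ Ω ∧ u x = v x} with hK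
  have hUo : IsOpen U := by
    rw [isOpen_iff_mem_nhds]
    rintro x ⟨hx, hlt⟩
    have h1 := hul x hx ((u x + v x) / 2) (by linarith)
    have h2 := hvu x hx ((u x + v x) / 2) (by linarith)
    rw [hΩo.nhdsWithin_eq hx] at h1 h2
    filter_upwards [h1, h2, hΩo.mem_nhds hx] with y y1 y2 y3
    exact ⟨y3, y2.trans y1⟩
  have hKo : ¬ IsOpen K := by
    intro hKo
    obtain ⟨q, -, q1, q2⟩ := hΩc.isPreconnected U K hUo hKo (fun x hx => by
      rcases (hle x hx).lt_or_eq with h | h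
      · exact Or.inl ⟨hx, h⟩
      · exact Or.inr ⟨hx, h.symm⟩) ⟨p', hp', hp', lt_of_le_of_ne (hle p' hp') (Ne.symm hpe')⟩
      ⟨p, hp, hp, hpe⟩
    have h1 := q1.2
    have h2 := q2.2
    linarith
  rw [isOpen_iff_mem_nhds] at hKo
  push Not at hKo
  obtain ⟨z1, hz1, hz1n⟩ := hKo
  obtain ⟨ρ', hρ', hρΩ⟩ := Metric.mem_nhds_iff.mp (hΩo.mem_nhds hz1.1)
  obtain ⟨ρ, hρd⟩ : ∃ ρ, ρ = ρ' / 3 := ⟨_, rfl⟩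
  have hρ : 0 < ρ := by rw [hρd]; positivity
  have hcbΩ : closedBall z1 (2 * ρ) ⊆ Ω :=
    (closedBall_subset_ball (by rw [hρd]; linarith)).trans hρΩ
  obtain ⟨a, ha, haK⟩ : ∃ a ∈ ball z1 ρ, a ∉ K := by
    by_contra hno
    push Not at hno
    exact hz1n (mem_of_superset (ball_mem_nhds z1 hρ) hno)
  have haΩ : a ∈ Ω := hcbΩ (ball_subset_closedBall (ball_subset_ball (by linarith) ha))
  have hcomp : IsCompact (closedBall z1 (2 * ρ) ∩ K) := by
    have : closedBall z1 (2 * ρ) ∩ K = closedBall z1 (2 * ρ) \ U := by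
      ext x
      constructor
      · rintro ⟨h1, -, h2⟩
        exact ⟨h1, fun h => by have := h.2; linarith⟩
      · rintro ⟨h1, h2⟩
        refine ⟨h1, hcbΩ h1, ?_⟩
        by_contra hne
        exact h2 ⟨hcbΩ h1, lt_of_le_of_ne (hle x (hcbΩ h1)) (Ne.symm hne)⟩
    rw [this]
    exact (isCompact_closedBall _ _).diff hUo
  obtain ⟨z, hz, hzmin⟩ := hcomp.exists_isMinOn
    ⟨z1, mem_closedBall_self (by linarith), hz1⟩ (f := fun x => dist x a)
    (continuous_id.dist continuous_const).continuousOn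
  have haz1 : dist z1 a < ρ := by rw [dist_comm]; exact ha
  have hza : dist z a < ρ := (isMinOn_iff.mp hzmin z1
    ⟨mem_closedBall_self (by linarith), hz1⟩).trans_lt haz1
  have hnear : ∀ x ∈ K, dist z a ≤ dist x a := by
    intro x hx
    by_cases hxb : x ∈ closedBall z1 (2 * ρ)
    · exact isMinOn_iff.mp hzmin x ⟨hxb, hx⟩
    · rw [mem_closedBall] at hxb
      push Not at hxb
      have h1 := dist_triangle x a z1
      rw [dist_comm a z1] at h1
      linarith
  have hzne : z ≠ a := fun h => haK (h ▸ hz.2)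
  obtain ⟨R, hRd⟩ : ∃ R, R = ‖z - a‖ / 2 := ⟨_, rfl⟩
  have hR : 0 < R := by
    have := norm_pos_iff.mpr (sub_ne_zero.mpr hzne)
    rw [hRd]; linarith
  obtain ⟨x0, hx0⟩ : ∃ x0 : EN N, x0 = (1 / 2 : ℝ) • (z + a) := ⟨_, rfl⟩
  have e1 : z - x0 = (1 / 2 : ℝ) • (z - a) := by
    rw [hx0, smul_add, smul_sub]
    have : z = (1 / 2 : ℝ) • z + (1 / 2 : ℝ) • z := by rw [← add_smul]; norm_num
    nth_rewrite 1 [this]; abel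
  have e2 : x0 - a = z - x0 := by
    rw [e1, hx0, smul_add, smul_sub]
    have : a = (1 / 2 : ℝ) • a + (1 / 2 : ℝ) • a := by rw [← add_smul]; norm_num
    nth_rewrite 2 [this]; abel
  have hzR : ‖z - x0‖ = R := by
    rw [e1, norm_smul, hRd]; norm_num; ring
  refine loc_contra hΩo hH hu hv hul hvu hle hz.2.1 hz.2.2 hR hzR (fun x hx hxR hxz => ?_)
  refine lt_of_le_of_ne (hle x hx) (fun heq => hxz ?_)
  have h1 := hnear x ⟨hx, heq.symm⟩
  rw [dist_eq_norm, dist_eq_norm] at h1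
  have h2 := parallelogram_law_with_norm ℝ (x - x0) (z - x0)
  have e3 : x - x0 + (z - x0) = x - a := by rw [← e2]; abel
  have e4 : x - x0 - (z - x0) = x - z := by abel
  rw [e3, e4, hzR] at h2
  have h3 : 2 * R ≤ ‖x - a‖ := by rw [hRd]; linarith
  have h4 : (2 * R) * (2 * R) ≤ ‖x - a‖ * ‖x - a‖ := by gcongr
  have h5 : ‖x - x0‖ * ‖x - x0‖ ≤ R * R := by gcongr
  have h6 : ‖x - z‖ * ‖x - z‖ ≤ 0 := by linarith
  have h7 : ‖x - z‖ = 0 := by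
    have := norm_nonneg (x - z)
    nlinarith
  exact sub_eq_zero.mp (norm_eq_zero.mp h7)

end Asm

theorem weak_comparison_dichotomy {N : ℕ} (hN : 2 ≤ N)
    (Ω : Set (EuclideanSpace ℝ (Fin N))) (hΩo : IsOpen Ω) (hΩc : IsConnected Ω)
    (hΩb : Bornology.IsBounded Ω)
    (H : EuclideanSpace ℝ (Fin N) → ℝ) (hH : LocLipschitzOn Ω H)
    (u v : EuclideanSpace ℝ (Fin N) → ℝ)
    (hu_lsc : LowerSemicontinuousOn u (closure Ω)) (hu : IsViscositySupersol Ω H u)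
    (hv_usc : UpperSemicontinuousOn v (closure Ω)) (hv : IsViscositySubsol Ω H v)
    (hbdry : ∀ x ∈ frontier Ω, v x ≤ u x) :
    (∀ x ∈ Ω, u x = v x) ∨ (∀ x ∈ Ω, v x < u x) := by
  by_cases hB : ∀ x ∈ Ω, v x < u x
  · exact Or.inr hB
  left
  push Not at hB
  obtain ⟨x1, hx1, hx1le⟩ := hB
  have hw : LowerSemicontinuousOn (fun x => u x - v x) (closure Ω) := by
    intro x hx y hy
    have hy : y < u x - v x := hy
    have h1 := hu_lsc x hx (u x - (u x - v x - y) / 2) (by linarith)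
    have h2 := hv_usc x hx (v x + (u x - v x - y) / 2) (by linarith)
    filter_upwards [h1, h2] with t t1 t2
    linarith
  have hcomp : IsCompact (closure Ω) := hΩb.isCompact_closure
  obtain ⟨xs, hxs, hmin⟩ := hw.exists_isMinOn ⟨x1, subset_closure hx1⟩ hcomp
  have hmin' : ∀ x ∈ closure Ω, u xs - v xs ≤ u x - v x := fun x hx => isMinOn_iff.mp hmin x hx
  obtain ⟨m0, hm0⟩ : ∃ m0, m0 = u xs - v xs := ⟨_, rfl⟩
  rw [← hm0] at hmin'
  have hm0le : m0 ≤ 0 := (hmin' x1 (subset_closure hx1)).trans (by linarith)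
  obtain ⟨p, hp, hpe⟩ : ∃ p ∈ Ω, u p - v p = m0 := by
    by_cases hxsΩ : xs ∈ Ω
    · exact ⟨xs, hxsΩ, hm0.symm⟩
    · have hfr : xs ∈ frontier Ω := by
        rw [frontier, hΩo.interior_eq]; exact ⟨hxs, hxsΩ⟩
      have h1 := hbdry xs hfr
      refine ⟨x1, hx1, le_antisymm (by linarith) (hmin' x1 (subset_closure hx1))⟩
  have hlsc : LowerSemicontinuousOn (fun x => u x - m0) Ω := by
    intro x hx y hy
    have hy : y < u x - m0 := hy
    have h1 := hu_lsc.mono subset_closure x hx (y + m0) (by linarith)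
    filter_upwards [h1] with t t1
    linarith
  have hprop := propagation hΩo hΩc hH (visc_shift hu m0) hv hlsc (hv_usc.mono subset_closure)
    (fun x hx => by
      have := hmin' x (subset_closure hx)
      show v x ≤ u x - m0
      linarith) hp (by show u p - m0 = v p; linarith)
  have hall : ∀ x ∈ Ω, u x - m0 = v x := hprop
  rcases hm0le.lt_or_eq with hlt | heq
  · exfalso
    haveI : Nonempty (Fin N) := ⟨⟨0, by omega⟩⟩
    have hfr : (frontier Ω).Nonempty := by
      rw [nonempty_frontier_iff]
      refine ⟨⟨x1, hx1⟩, fun h => ?_⟩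
      rw [h] at hΩb
      exact NormedSpace.unbounded_univ ℝ (EuclideanSpace ℝ (Fin N)) hΩb
    obtain ⟨b, hb⟩ := hfr
    have hbc : b ∈ closure Ω := frontier_subset_closure hb
    have h1 := hw b hbc (m0 / 2) (by
      have := hbdry b hb
      show m0 / 2 < u b - v b
      linarith)
    have h2 := h1.filter_mono (nhdsWithin_mono b (subset_closure (s := Ω)))
    haveI : (𝓝[Ω] b).NeBot := mem_closure_iff_nhdsWithin_neBot.mp hbc
    obtain ⟨x, hxa, hxb⟩ := (h2.and self_mem_nhdsWithin).exists
    have := hall x hxb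
    have hxa : m0 / 2 < u x - v x := hxa
    linarith
  · intro x hx
    have := hall x hx
    linarith
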